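/- arXiv:2109.05758 — 4 statements merged into one kernel-verified Lean document; each statement's English description precedes it below -/
import Mathlib

section
/- Let p ∈ (0,1) be fixed and set a = ⌊2·log_{1/(1−p)} n − 8·log_{1/(1−p)} ln n⌋. With high probability, in G(n,p) the following holds: for every pair of disjoint sets A ⊆ N(1) (the neighborhood of vertex 1) and B ⊆ [n]∖{1}, each of size ⌊n/ln² n⌋, there exists an induced copy of the star K_{1,a−1} in G(n,p) whose central vertex lies in A and whose remaining a−1 vertices all lie in B. -/
open MeasureTheory Filter Real

/-- The index type of potential edges of a graph on `Fin n`. -/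
abbrev EdgeType (n : ℕ) := {e : Sym2 (Fin n) // ¬ e.IsDiag}

/-- The product Bernoulli measure on edge-indicator functions: the binomial
random graph `G(n,p)`. -/
noncomputable def erMeasure (n : ℕ) (p : ℝ) : Measure (EdgeType n → Bool) :=
  Measure.pi fun _ => (PMF.bernoulli (min (Real.toNNReal p) 1) (min_le_right _ _)).toMeasure

/-- The simple graph determined by an edge-indicator function. -/
def graphOf {n : ℕ} (ω : EdgeType n → Bool) : SimpleGraph (Fin n) :=
  SimpleGraph.fromEdgeSet {e | ∃ h : ¬ e.IsDiag, ω ⟨e, h⟩ = true}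

/-- `H` contains a (not necessarily induced) copy of `F`. -/
def ContainsCopy {α β : Type*} (F : SimpleGraph α) (H : SimpleGraph β) : Prop :=
  ∃ f : α → β, Function.Injective f ∧ ∀ ⦃a b⦄, F.Adj a b → H.Adj (f a) (f b)

/-- `H` is `F`-saturated in `G`: `H` is a spanning subgraph of `G` that is `F`-free,
and adding any edge of `G` missing from `H` creates a copy of `F`. -/
def IsSaturatedIn {V : Type*} {α : Type*} (G H : SimpleGraph V) (F : SimpleGraph α) : Prop :=
  H ≤ G ∧ ¬ ContainsCopy F H ∧
    ∀ v w : V, G.Adj v w → ¬ H.Adj v w →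
      ContainsCopy F (H ⊔ SimpleGraph.fromEdgeSet {s(v, w)})

/-- The saturation number `sat(G,F)`: the minimum number of edges of an
`F`-saturated spanning subgraph of `G`. -/
noncomputable def satNum {V α : Type*} (G : SimpleGraph V) (F : SimpleGraph α) : ℕ :=
  sInf {k | ∃ H : SimpleGraph V, IsSaturatedIn G H F ∧ H.edgeSet.ncard = k}

/-- The cycle `C_m`, as a graph on `ZMod m`. -/
def cycGraph (m : ℕ) : SimpleGraph (ZMod m) :=
  SimpleGraph.fromRel (fun a b => a = b + 1)

/-!
Let `A`, `B` be disjoint of size `N = ⌊n / log² n⌋`, let `m = ⌊p N / 2⌋` and `k = a - 1`. There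
are at most `4 ^ n` such pairs and at most `2 ^ n` sets of `m` vertices, so it suffices to bound
each of two failure probabilities by `exp (-2 n ^ (3 / 2))`.

The number of edges between `A` and `B` has mean `p N²` and changes by at most one with each
potential edge of the graph. By McDiarmid's inequality it is larger than `N m`, so some `z ∈ A`
has more than `m` neighbors in `B`, unless an event of such small probability occurs.

It remains to find an independent `k`-set inside a given set of `m` vertices. Let `X` be the
maximal number of independent `k`-sets in it, no two of which share two vertices; `X` too
changes by at most one with each potential edge. Let `μ` be the expected number of independent
`k`-sets and `Δ` the sum of the probabilities that both members of a pair of `k`-sets sharing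
two vertices are independent. Turán's theorem, applied to the independent `k`-sets with the
relation of not sharing two vertices, and the Cauchy-Schwarz inequality give `μ² ≤ Δ 𝔼 X`. The
summand `-8 log log n` in `a` keeps `Δ / μ²` below `n ^ (-7 / 4)`, so `𝔼 X ≥ n ^ (7 / 4)`, and
McDiarmid's inequality bounds the probability that `X = 0`.
-/

section BoundedDifferences

open ProbabilityTheory
open scoped NNReal

variable {ι : Type*} {X : ι → Type*}

/-- The bounded differences condition: changing the `i`-th coordinate of the argument changes the
value of `f` by at most `c i`. -/
def HasBoundedDifferences (f : (∀ i, X i) → ℝ) (c : ι → ℝ≥0) : Prop :=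
  ∀ i x y, (∀ j ≠ i, x j = y j) → |f x - f y| ≤ c i

theorem HasBoundedDifferences.abs_sub_le_sum [Fintype ι] {f : (∀ i, X i) → ℝ} {c : ι → ℝ≥0}
    (h : HasBoundedDifferences f c) (x y : ∀ i, X i) : |f x - f y| ≤ ∑ i, (c i : ℝ) := by
  classical
  suffices ∀ (s : Finset ι) (x : ∀ i, X i), (∀ i ∉ s, x i = y i) → |f x - f y| ≤ ∑ i ∈ s, (c i : ℝ)
    from this Finset.univ x (by simp)
  intro s
  induction s using Finset.induction_on with
  | empty =>
    intro x hxy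
    simp [funext fun i => hxy i (Finset.notMem_empty i)]
  | insert a s ha ih =>
    intro x hxy
    have hx : |f x - f (Function.update x a (y a))| ≤ c a :=
      h a _ _ fun j hj => by simp [hj]
    have hy : |f (Function.update x a (y a)) - f y| ≤ ∑ i ∈ s, (c i : ℝ) := by
      refine ih _ fun i hi => ?_
      by_cases hia : i = a
      · subst hia; simp
      · simp [hia, hxy i (by simp [hia, hi])]
    rw [Finset.sum_insert ha]
    exact (abs_sub_le _ _ _).trans (add_le_add hx hy)

theorem hasSubgaussianMGF_of_abs_sub_le {Ω : Type*} [MeasurableSpace Ω] {μ : Measure Ω}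
    [IsProbabilityMeasure μ] {f : Ω → ℝ} (hf : AEMeasurable f μ) {c : ℝ≥0}
    (hc : ∀ x y, |f x - f y| ≤ c) :
    HasSubgaussianMGF (fun x => f x - ∫ y, f y ∂μ) ((c / 2) ^ 2) μ := by
  obtain ⟨x₀⟩ := nonempty_of_isProbabilityMeasure μ
  have hbdd : BddBelow (Set.range f) :=
    ⟨f x₀ - c, by rintro _ ⟨x, rfl⟩; linarith [(abs_le.mp (hc x₀ x)).2]⟩
  have hmem : ∀ x, f x ∈ Set.Icc (⨅ y, f y) ((⨅ y, f y) + c) := fun x =>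
    have : Nonempty Ω := ⟨x₀⟩
    ⟨ciInf_le hbdd x, by
      linarith [le_ciInf fun y => show f x - c ≤ f y by linarith [(abs_le.mp (hc x y)).2]]⟩
  simpa using hasSubgaussianMGF_of_mem_Icc hf (ae_of_all μ hmem)

theorem hasSubgaussianMGF_add_prod {Ω Ω' : Type*} [MeasurableSpace Ω] [MeasurableSpace Ω']
    {μ : Measure Ω} [SFinite μ] {ν : Measure Ω'} [SFinite ν] {Y : Ω → ℝ} {Z : Ω × Ω' → ℝ}
    {c d : ℝ≥0} (hY : HasSubgaussianMGF Y c μ) (hZm : Measurable Z)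
    (hZ : ∀ ω, HasSubgaussianMGF (fun ω' => Z (ω, ω')) d ν) :
    HasSubgaussianMGF (fun x => Y x.1 + Z x) (c + d) (μ.prod ν) := by
  have hsection : ∀ t ω, ∫ ω', exp (t * (Y ω + Z (ω, ω'))) ∂ν
      ≤ exp (t * Y ω) * exp (d * t ^ 2 / 2) := fun t ω => by
    simp_rw [mul_add, exp_add, integral_const_mul]
    gcongr
    exact (hZ ω).mgf_le t
  have hdom : ∀ t, Integrable (fun ω => exp (t * Y ω) * exp (d * t ^ 2 / 2)) μ := fun t =>
    (hY.integrable_exp_mul t).mul_const _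
  have hint : ∀ t, Integrable (fun x : Ω × Ω' => exp (t * (Y x.1 + Z x))) (μ.prod ν) := by
    intro t
    have hYm : AEMeasurable (fun x : Ω × Ω' => Y x.1) (μ.prod ν) :=
      hY.aemeasurable.comp_quasiMeasurePreserving Measure.quasiMeasurePreserving_fst
    have hm : AEStronglyMeasurable (fun x : Ω × Ω' => exp (t * (Y x.1 + Z x))) (μ.prod ν) :=
      (measurable_exp.comp_aemeasurable
        ((hYm.add hZm.aemeasurable).const_mul t)).aestronglyMeasurable
    refine (integrable_prod_iff hm).mpr ⟨ae_of_all _ fun ω => ?_, ?_⟩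
    · simp_rw [mul_add, exp_add]
      exact ((hZ ω).integrable_exp_mul t).const_mul _
    · refine (hdom t).mono' hm.norm.integral_prod_right' (ae_of_all _ fun ω => ?_)
      simp only [norm_eq_abs, abs_exp]
      rw [abs_of_nonneg (integral_nonneg fun _ => (exp_pos _).le)]
      exact hsection t ω
  refine ⟨hint, fun t => ?_⟩
  calc mgf (fun x => Y x.1 + Z x) (μ.prod ν) t
      = ∫ ω, ∫ ω', exp (t * (Y ω + Z (ω, ω'))) ∂ν ∂μ := integral_prod _ (hint t)
    _ ≤ ∫ ω, exp (t * Y ω) * exp (d * t ^ 2 / 2) ∂μ :=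
        integral_mono (hint t).integral_prod_left (hdom t) (hsection t)
    _ ≤ exp (c * t ^ 2 / 2) * exp (d * t ^ 2 / 2) := by
        rw [integral_mul_const]
        gcongr
        exact hY.mgf_le t
    _ = exp ((c + d : ℝ≥0) * t ^ 2 / 2) := by
        rw [← exp_add]
        push_cast
        ring_nf

theorem hasSubgaussianMGF_sub_integral_prod {Ω Ω' : Type*} [MeasurableSpace Ω]
    [MeasurableSpace Ω'] {μ : Measure Ω} [IsProbabilityMeasure μ] {ν : Measure Ω'}
    [IsProbabilityMeasure ν] {F : Ω × Ω' → ℝ} (hF : Measurable F) (hFi : Integrable F (μ.prod ν))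
    {c d : ℝ≥0} (hc : ∀ x x' y, |F (x, y) - F (x', y)| ≤ c)
    (hd : ∀ x, HasSubgaussianMGF (fun y => F (x, y) - ∫ y', F (x, y') ∂ν) d ν) :
    HasSubgaussianMGF (fun z => F z - ∫ z', F z' ∂μ.prod ν) ((c / 2) ^ 2 + d) (μ.prod ν) := by
  let g : Ω → ℝ := fun x => ∫ y, F (x, y) ∂ν
  have hg : Measurable g := hF.stronglyMeasurable.integral_prod_right'.measurable
  have hsec : ∀ x, Integrable (fun y => F (x, y)) ν := fun x =>
    ((hd x).integrable.add (integrable_const (g x))).congr (ae_of_all _ fun y => by simp [g])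
  have hgc : ∀ x x', |g x - g x'| ≤ c := fun x x' => by
    rw [← integral_sub (hsec x) (hsec x'), ← norm_eq_abs]
    simpa using norm_integral_le_of_norm_le_const (μ := ν) (f := fun y => F (x, y) - F (x', y))
      (ae_of_all _ (hc x x'))
  have hsum := hasSubgaussianMGF_add_prod
    (hasSubgaussianMGF_of_abs_sub_le (μ := μ) hg.aemeasurable hgc)
    (hF.sub (hg.comp measurable_fst)) hd
  rw [integral_prod _ hFi]
  refine hsum.congr (ae_of_all _ fun z => ?_)
  simp [g]

theorem hasSubgaussianMGF_sub_integral_comp_equiv {Ω Ω' : Type*} [MeasurableSpace Ω]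
    [MeasurableSpace Ω'] {μ : Measure Ω} {ν : Measure Ω'} {φ : Ω ≃ᵐ Ω'}
    (hφ : MeasurePreserving φ μ ν) {f : Ω' → ℝ} {c : ℝ≥0}
    (h : HasSubgaussianMGF (fun y => f y - ∫ y', f y' ∂ν) c ν) :
    HasSubgaussianMGF (fun x => f (φ x) - ∫ x', f (φ x') ∂μ) c μ := by
  rw [hφ.integral_comp']
  rw [← hφ.map_eq] at h
  simpa only [hφ.map_eq, Function.comp_def] using h.of_map φ.measurable.aemeasurable

variable [∀ i, MeasurableSpace (X i)]

theorem HasBoundedDifferences.integrable [Finite ι] {f : (∀ i, X i) → ℝ} {c : ι → ℝ≥0}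
    (h : HasBoundedDifferences f c) (hf : Measurable f) (ν : Measure (∀ i, X i))
    [IsFiniteMeasure ν] : Integrable f ν := by
  have := Fintype.ofFinite ι
  obtain _ | ⟨⟨y⟩⟩ := isEmpty_or_nonempty (∀ i, X i)
  · exact Integrable.of_isEmpty
  · refine Integrable.of_bound hf.aestronglyMeasurable (|f y| + ∑ i, (c i : ℝ))
      (ae_of_all _ fun x => ?_)
    rw [norm_eq_abs]
    linarith [h.abs_sub_le_sum x y, abs_sub_abs_le_abs_sub (f x) (f y)]

theorem HasBoundedDifferences.hasSubgaussianMGF_fin {N : ℕ} {X : Fin N → Type*}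
    [∀ i, MeasurableSpace (X i)] (μ : ∀ i, Measure (X i)) [∀ i, IsProbabilityMeasure (μ i)]
    {f : (∀ i, X i) → ℝ} {c : Fin N → ℝ≥0} (h : HasBoundedDifferences f c) (hf : Measurable f) :
    HasSubgaussianMGF (fun x => f x - ∫ y, f y ∂Measure.pi μ) (∑ i, (c i / 2) ^ 2)
      (Measure.pi μ) := by
  induction N with
  | zero =>
    have hconst : ∀ x, f x - ∫ y, f y ∂Measure.pi μ = 0 := fun x => by
      simp [Subsingleton.elim _ x]
    simp [hconst]
  | succ N ih =>
    let φ := MeasurableEquiv.piFinSuccAbove X 0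
    have hφ : MeasurePreserving φ (Measure.pi μ)
        ((μ 0).prod (Measure.pi fun i => μ (Fin.succAbove 0 i))) :=
      measurePreserving_piFinSuccAbove μ 0
    let F := fun z : X 0 × ∀ i, X (Fin.succAbove 0 i) => f (Fin.insertNth 0 z.1 z.2)
    have hF : Measurable F := hf.comp φ.symm.measurable
    have hFφ : ∀ x, F (φ x) = f x := fun x => congrArg f (φ.symm_apply_apply x)
    have hFi : Integrable F ((μ 0).prod (Measure.pi fun i => μ (Fin.succAbove 0 i))) :=
      (hφ.symm.integrable_comp_emb φ.symm.measurableEmbedding).mpr (h.integrable hf _)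
    have hfst : ∀ a b y, |F (a, y) - F (b, y)| ≤ c 0 := fun a b y =>
      h 0 _ _ <| (Fin.forall_iff_succAbove 0).mpr
        ⟨absurd rfl, fun j _ => by simp only [Fin.insertNth_apply_succAbove]⟩
    have hsnd : ∀ a, HasBoundedDifferences (fun y => F (a, y)) fun i => c (Fin.succAbove 0 i) :=
      fun a i x y hxy => h (Fin.succAbove 0 i) _ _ <| (Fin.forall_iff_succAbove 0).mpr
        ⟨fun _ => by simp only [Fin.insertNth_apply_same], fun j hj => by
          simpa only [Fin.insertNth_apply_succAbove] using hxy j (ne_of_apply_ne _ hj)⟩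
    have hprod := hasSubgaussianMGF_sub_integral_prod hF hFi hfst
      fun a => ih _ (hsnd a) (hF.comp measurable_prodMk_left)
    rw [Fin.sum_univ_succAbove _ 0]
    simpa only [hFφ] using hasSubgaussianMGF_sub_integral_comp_equiv hφ hprod

theorem HasBoundedDifferences.hasSubgaussianMGF [Fintype ι] {f : (∀ i, X i) → ℝ} {c : ι → ℝ≥0}
    (h : HasBoundedDifferences f c) (hf : Measurable f) (μ : ∀ i, Measure (X i))
    [∀ i, IsProbabilityMeasure (μ i)] :
    HasSubgaussianMGF (fun x => f x - ∫ y, f y ∂Measure.pi μ) (∑ i, (c i / 2) ^ 2)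
      (Measure.pi μ) := by
  let e := (Fintype.equivFin ι).symm
  let φ := MeasurableEquiv.piCongrLeft X e
  have hφ : MeasurePreserving φ (Measure.pi fun i => μ (e i)) (Measure.pi μ) :=
    measurePreserving_piCongrLeft μ e
  have hfφ : HasBoundedDifferences (f ∘ φ) fun i => c (e i) := fun i x y hxy =>
    h (e i) _ _ <| e.forall_congr_right.mp fun j hj => by
      simpa [φ, MeasurableEquiv.coe_piCongrLeft] using hxy j (by simpa using hj)
  have hfin := hfφ.hasSubgaussianMGF_fin (fun i => μ (e i)) (hf.comp φ.measurable)
  rw [← e.sum_comp]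
  simpa using hasSubgaussianMGF_sub_integral_comp_equiv hφ.symm hfin

/-- **McDiarmid's inequality** for the lower tail. -/
theorem HasBoundedDifferences.measureReal_le_integral_sub_le [Fintype ι] {f : (∀ i, X i) → ℝ}
    {c : ι → ℝ≥0} (h : HasBoundedDifferences f c) (hf : Measurable f) (μ : ∀ i, Measure (X i))
    [∀ i, IsProbabilityMeasure (μ i)] {t : ℝ} (ht : 0 ≤ t) :
    (Measure.pi μ).real {x | f x ≤ ∫ y, f y ∂Measure.pi μ - t}
      ≤ exp (-2 * t ^ 2 / ∑ i, (c i : ℝ) ^ 2) := by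
  have hparam : -t ^ 2 / (2 * ((∑ i, (c i / 2) ^ 2 : ℝ≥0) : ℝ))
      = -2 * t ^ 2 / ∑ i, (c i : ℝ) ^ 2 := by
    push_cast
    simp only [div_pow, ← Finset.sum_div]
    ring
  rw [← hparam]
  convert (h.hasSubgaussianMGF hf μ).neg.measure_ge_le ht using 3
  ext x
  simp [le_sub_iff_add_le, add_comm t]

end BoundedDifferences

section IndependentSets

open scoped Finset

theorem card_sq_add_cliqueNum_mul_card_edgeFinset_le {V : Type*} [Fintype V] (G : SimpleGraph V)
    [DecidableRel G.Adj] :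
    Fintype.card V ^ 2 + 2 * G.cliqueNum * #G.edgeFinset ≤ G.cliqueNum * Fintype.card V ^ 2 := by
  classical
  obtain _ | ⟨⟨v⟩⟩ := isEmpty_or_nonempty V
  · simp [Subsingleton.elim G ⊥]
  have hr : 0 < G.cliqueNum := by
    have hv : G.IsClique (({v} : Finset V) : Set V) := by simp
    simpa [Nat.one_le_iff_ne_zero, Nat.pos_iff_ne_zero] using hv.card_le_cliqueNum
  have hfree : G.CliqueFree (G.cliqueNum + 1) := fun t ht => by
    have := ht.isClique.card_le_cliqueNum
    have := ht.card_eq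
    omega
  obtain ⟨H, _, hH⟩ := SimpleGraph.exists_isTuranMaximal (V := V) hr
  have hiso := ((SimpleGraph.isTuranMaximal_iff_nonempty_iso_turanGraph hr).mp hH).some
  have hle : 2 * G.cliqueNum * #G.edgeFinset ≤ (G.cliqueNum - 1) * Fintype.card V ^ 2 :=
    calc 2 * G.cliqueNum * #G.edgeFinset
        ≤ 2 * G.cliqueNum * #H.edgeFinset := Nat.mul_le_mul_left _ (hH.2 hfree)
      _ ≤ (G.cliqueNum - 1) * Fintype.card V ^ 2 := by
          rw [hiso.card_edgeFinset_eq]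
          exact SimpleGraph.mul_card_edgeFinset_turanGraph_le
  have := Nat.le_mul_of_pos_left (Fintype.card V ^ 2) hr
  rw [Nat.sub_one_mul] at hle
  omega

theorem exists_pairwise_not_card_sq_le {α : Type*} {r : α → α → Prop} [DecidableRel r]
    {s : Finset α} (hsymm : ∀ ⦃x y⦄, r x y → r y x) (hrefl : ∀ x ∈ s, r x x) :
    ∃ t ⊆ s, (t : Set α).Pairwise (fun x y => ¬ r x y) ∧
      #s ^ 2 ≤ #t * #(Rel.interedges r s s) := by
  classical
  let G : SimpleGraph s :=
    { Adj := fun x y => ¬ r x y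
      symm := ⟨fun _ _ h h' => h (hsymm h')⟩
      loopless := ⟨fun x h => h (hrefl x x.2)⟩ }
  have hedges : #(Rel.interedges r s s) + 2 * #G.edgeFinset = #s ^ 2 := by
    rw [← G.sum_degrees_eq_twice_card_edges, sq, ← Rel.card_interedges_add_card_interedges_compl r,
      add_right_inj, Rel.interedges, Finset.card_filter, Finset.sum_product,
      ← Finset.sum_coe_sort s]
    refine Finset.sum_congr rfl fun x _ => ?_
    rw [← G.card_neighborFinset_eq_degree, G.neighborFinset_eq_filter, Finset.card_filter,
      ← Finset.sum_coe_sort s]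
  obtain ⟨t, ht⟩ := G.exists_isNClique_cliqueNum
  refine ⟨t.map (Function.Embedding.subtype _), Finset.map_subtype_subset t, ?_, ?_⟩
  · rw [Finset.coe_map]
    exact Set.InjOn.pairwise_image (Function.Embedding.injective _).injOn |>.mpr ht.isClique
  · have hturan := card_sq_add_cliqueNum_mul_card_edgeFinset_le G
    rw [Fintype.card_coe, ← hedges] at hturan
    rw [Finset.card_map, ht.card_eq, ← hedges]
    linarith

end IndependentSets

section Expectation

open scoped Finset

theorem integral_card_filter {Ω α : Type*} [MeasurableSpace Ω] [DiscreteMeasurableSpace Ω]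
    (P : Measure Ω) [IsFiniteMeasure P] (A : Finset α) (p : Ω → α → Prop)
    [∀ ω, DecidablePred (p ω)] :
    ∫ ω, (#{a ∈ A | p ω a} : ℝ) ∂P = ∑ a ∈ A, P.real {ω | p ω a} := by
  have hind : ∀ ω, (#{a ∈ A | p ω a} : ℝ) = ∑ a ∈ A, {ω | p ω a}.indicator 1 ω := fun ω => by
    simp [Set.indicator_apply]
  simp_rw [hind]
  rw [integral_finsetSum _ fun a _ => (integrable_const 1).indicator (.of_discrete)]
  exact Finset.sum_congr rfl fun a _ => integral_indicator_one .of_discrete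

theorem sq_integral_le_integral_mul_integral {Ω : Type*} [MeasurableSpace Ω] {μ : Measure Ω}
    {f g h : Ω → ℝ} (hf : Integrable f μ) (hg : Integrable g μ) (hh : Integrable h μ)
    (hg0 : 0 ≤ g) (hh0 : 0 ≤ h) (hfgh : ∀ x, f x ^ 2 ≤ g x * h x) :
    (∫ x, f x ∂μ) ^ 2 ≤ (∫ x, g x ∂μ) * ∫ x, h x ∂μ := by
  have hgf : ∀ t : ℝ, Integrable (fun x => g x * (t * t) + 2 * t * f x) μ := fun t =>
    (hg.mul_const _).add (hf.const_mul _)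
  have hquad : ∀ t : ℝ,
      0 ≤ (∫ x, g x ∂μ) * (t * t) + 2 * (∫ x, f x ∂μ) * t + ∫ x, h x ∂μ := fun t =>
    calc 0 ≤ ∫ x, g x * (t * t) + 2 * t * f x + h x ∂μ := by
          refine integral_nonneg fun x => ?_
          have hamgm : |2 * t * f x| ≤ g x * (t * t) + h x := by
            refine abs_le_of_sq_le_sq ?_
              (add_nonneg (mul_nonneg (hg0 x) (mul_self_nonneg t)) (hh0 x))
            nlinarith [sq_nonneg (g x * (t * t) - h x),
              mul_le_mul_of_nonneg_left (hfgh x) (sq_nonneg t)]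
          change 0 ≤ g x * (t * t) + 2 * t * f x + h x
          linarith [neg_le_of_abs_le hamgm]
      _ = _ := by
          rw [integral_add (hgf t) hh, integral_add (hg.mul_const _) (hf.const_mul _),
            integral_mul_const, integral_const_mul]
          ring
  have := discrim_le_zero hquad
  rw [discrim] at this
  linarith

theorem measureReal_exists_le {Ω ι : Type*} [MeasurableSpace Ω] [Fintype ι] (P : Measure Ω)
    {q : ι → Prop} {E : ι → Set Ω} {ε : ℝ} (hε : 0 ≤ ε)
    (h : ∀ i, q i → P.real (E i) ≤ ε) :
    P.real {ω | ∃ i, q i ∧ ω ∈ E i} ≤ Fintype.card ι * ε := by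
  classical
  have hunion : {ω | ∃ i, q i ∧ ω ∈ E i} = ⋃ i ∈ ({i | q i} : Finset ι), E i := by
    ext; simp
  calc P.real {ω | ∃ i, q i ∧ ω ∈ E i}
      ≤ ∑ i with q i, P.real (E i) := hunion ▸ measureReal_biUnion_finset_le _ _
    _ ≤ #{i | q i} * ε := by
        rw [← nsmul_eq_mul]
        exact Finset.sum_le_card_nsmul _ _ _ fun i hi => h i (Finset.mem_filter.mp hi).2
    _ ≤ Fintype.card ι * ε := by
        gcongr
        exact Finset.card_le_univ _

end Expectation

section VacantPacking

open scoped Finset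

variable {ι α : Type*}

/-- In the configuration `ω`, no element of `s` is present. -/
def IsVacant (ω : ι → Bool) (s : Finset ι) : Prop :=
  ∀ i ∈ s, ω i = false

/-- The members of `F` index pairwise disjoint sets, all of which are vacant in `ω`. -/
def IsVacantPacking (E : α → Finset ι) (ω : ι → Bool) (F : Finset α) : Prop :=
  (∀ S ∈ F, IsVacant ω (E S)) ∧ (F : Set α).PairwiseDisjoint E

open Classical in
/-- The largest number of pairwise disjoint vacant sets among the `E S`, `S ∈ R`. -/
noncomputable def vacantPackingNum (E : α → Finset ι) (R : Finset α) (ω : ι → Bool) : ℕ :=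
  {F ∈ R.powerset | IsVacantPacking E ω F}.sup Finset.card

variable {E : α → Finset ι} {R F : Finset α} {ω : ι → Bool}

theorem IsVacantPacking.card_le_vacantPackingNum (hF : IsVacantPacking E ω F) (hR : F ⊆ R) :
    #F ≤ vacantPackingNum E R ω := by
  classical
  exact Finset.le_sup (f := Finset.card) (by simp [hF, hR])

theorem exists_isVacantPacking_card_eq (E : α → Finset ι) (R : Finset α) (ω : ι → Bool) :
    ∃ F ⊆ R, IsVacantPacking E ω F ∧ #F = vacantPackingNum E R ω := by
  classical
  obtain ⟨F, hF, hcard⟩ := Finset.exists_mem_eq_sup {F ∈ R.powerset | IsVacantPacking E ω F}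
    ⟨∅, Finset.mem_filter.mpr ⟨Finset.empty_mem_powerset R, by simp [IsVacantPacking]⟩⟩ Finset.card
  rw [Finset.mem_filter, Finset.mem_powerset] at hF
  exact ⟨F, hF.1, hF.2, by rw [← hcard]; rfl⟩

theorem vacantPackingNum_le_add_one {i : ι} {ω ω' : ι → Bool} (h : ∀ j ≠ i, ω j = ω' j) :
    vacantPackingNum E R ω ≤ vacantPackingNum E R ω' + 1 := by
  classical
  obtain ⟨F, hFR, ⟨hvac, hdisj⟩, hcard⟩ := exists_isVacantPacking_card_eq E R ω
  have hrest : IsVacantPacking E ω' {S ∈ F | i ∉ E S} := by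
    refine ⟨fun S hS j hj => ?_, hdisj.subset (Finset.coe_subset.mpr (Finset.filter_subset _ F))⟩
    rw [Finset.mem_filter] at hS
    rw [← h j (ne_of_mem_of_not_mem hj hS.2)]
    exact hvac S hS.1 j hj
  have hremoved : #{S ∈ F | i ∈ E S} ≤ 1 := by
    refine Finset.card_le_one.mpr fun S hS T hT => ?_
    rw [Finset.mem_filter] at hS hT
    exact hdisj.elim_finset hS.1 hT.1 i hS.2 hT.2
  have hle := hrest.card_le_vacantPackingNum ((Finset.filter_subset _ F).trans hFR)
  have := Finset.card_filter_add_card_filter_not (s := F) fun S => i ∈ E S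
  omega

theorem hasBoundedDifferences_vacantPackingNum (E : α → Finset ι) (R : Finset α) :
    HasBoundedDifferences (fun ω => (vacantPackingNum E R ω : ℝ)) 1 := by
  intro i ω ω' h
  have h₁ : (vacantPackingNum E R ω : ℝ) ≤ vacantPackingNum E R ω' + 1 :=
    mod_cast vacantPackingNum_le_add_one h
  have h₂ : (vacantPackingNum E R ω' : ℝ) ≤ vacantPackingNum E R ω + 1 :=
    mod_cast vacantPackingNum_le_add_one fun j hj => (h j hj).symm
  simp only [Pi.one_apply, NNReal.coe_one, abs_le]
  constructor <;> linarith

open Classical in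
theorem card_isVacant_sq_le (hE : ∀ S ∈ R, (E S).Nonempty) (ω : ι → Bool) :
    #{S ∈ R | IsVacant ω (E S)} ^ 2 ≤ vacantPackingNum E R ω *
      #{x ∈ Rel.interedges (fun S T => ¬ Disjoint (E S) (E T)) R R |
        IsVacant ω (E x.1) ∧ IsVacant ω (E x.2)} := by
  obtain ⟨F, hF, hdisj, hcard⟩ := exists_pairwise_not_card_sq_le
    (r := fun S T => ¬ Disjoint (E S) (E T)) (s := {S ∈ R | IsVacant ω (E S)})
    (fun S T h h' => h h'.symm) fun S hS => by
      simpa using (hE S (Finset.mem_filter.mp hS).1).ne_empty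
  have hpack : IsVacantPacking E ω F :=
    ⟨fun S hS => (Finset.mem_filter.mp (hF hS)).2,
      fun S hS T hT hne => not_not.mp (hdisj hS hT hne)⟩
  refine hcard.trans (Nat.mul_le_mul
    (hpack.card_le_vacantPackingNum (hF.trans (Finset.filter_subset _ R))) (Finset.card_le_card ?_))
  intro x hx
  simp only [Rel.mem_interedges_iff, Finset.mem_filter] at hx ⊢
  tauto

open Classical in
theorem sq_sum_isVacant_le [Finite ι] (hE : ∀ S ∈ R, (E S).Nonempty) (P : Measure (ι → Bool))
    [IsFiniteMeasure P] :
    (∑ S ∈ R, P.real {ω | IsVacant ω (E S)}) ^ 2 ≤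
      (∫ ω, (vacantPackingNum E R ω : ℝ) ∂P) *
        ∑ x ∈ Rel.interedges (fun S T => ¬ Disjoint (E S) (E T)) R R,
          P.real {ω | IsVacant ω (E x.1) ∧ IsVacant ω (E x.2)} := by
  rw [← integral_card_filter, ← integral_card_filter]
  exact sq_integral_le_integral_mul_integral .of_finite .of_finite .of_finite
    (fun _ => Nat.cast_nonneg _) (fun _ => Nat.cast_nonneg _)
    fun ω => mod_cast card_isVacant_sq_le hE ω

open Classical in
theorem measureReal_forall_not_isVacant_le [Fintype ι] (hE : ∀ S ∈ R, (E S).Nonempty)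
    (μ : ι → Measure Bool) [∀ i, IsProbabilityMeasure (μ i)]
    (hpos : 0 < ∑ S ∈ R, (Measure.pi μ).real {ω | IsVacant ω (E S)}) {t : ℝ} (ht : 0 ≤ t)
    (hpairs : t * ∑ x ∈ Rel.interedges (fun S T => ¬ Disjoint (E S) (E T)) R R,
        (Measure.pi μ).real {ω | IsVacant ω (E x.1) ∧ IsVacant ω (E x.2)} ≤
      (∑ S ∈ R, (Measure.pi μ).real {ω | IsVacant ω (E S)}) ^ 2) :
    (Measure.pi μ).real {ω | ∀ S ∈ R, ¬ IsVacant ω (E S)} ≤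
      exp (-2 * t ^ 2 / Fintype.card ι) := by
  have hcs := sq_sum_isVacant_le hE (Measure.pi μ)
  have hmean : t ≤ ∫ ω, (vacantPackingNum E R ω : ℝ) ∂Measure.pi μ := by
    refine le_of_mul_le_mul_right (hpairs.trans hcs) ?_
    refine (Finset.sum_nonneg fun _ _ => measureReal_nonneg).lt_of_ne fun h0 => ?_
    rw [← h0, mul_zero] at hcs
    exact (pow_pos hpos 2).not_ge hcs
  have htail := (hasBoundedDifferences_vacantPackingNum E R).measureReal_le_integral_sub_le
    .of_discrete μ ht
  simp only [Pi.one_apply, NNReal.coe_one, one_pow, Finset.sum_const, Finset.card_univ,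
    nsmul_eq_mul, mul_one] at htail
  refine (measureReal_mono fun ω hω => ?_).trans htail
  obtain ⟨F, hFR, hF, hcard⟩ := exists_isVacantPacking_card_eq E R ω
  have hempty : F = ∅ := Finset.eq_empty_of_forall_notMem fun S hS => hω S (hFR hS) (hF.1 S hS)
  change (vacantPackingNum E R ω : ℝ) ≤ _
  simpa [← hcard, hempty] using hmean

end VacantPacking

section OverlappingPairs

open scoped Finset

variable {α : Type*} [DecidableEq α] {S M : Finset α} {k : ℕ}

theorem card_filter_card_inter_eq_le (hSM : S ⊆ M) (i : ℕ) :
    #{T ∈ M.powersetCard k | #(S ∩ T) = i} ≤ (#S).choose i * (#M - i).choose (k - i) := by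
  have hcover : {T ∈ M.powersetCard k | #(S ∩ T) = i} ⊆
      (S.powersetCard i).biUnion fun I => ((M \ I).powersetCard (k - i)).image (I ∪ ·) := by
    intro T hT
    obtain ⟨⟨hTM, hTk⟩, hTi⟩ : (T ⊆ M ∧ #T = k) ∧ #(S ∩ T) = i := by simpa using hT
    simp only [Finset.mem_biUnion, Finset.mem_image, Finset.mem_powersetCard]
    refine ⟨S ∩ T, ⟨Finset.inter_subset_left, hTi⟩, T \ (S ∩ T),
      ⟨Finset.sdiff_subset_sdiff hTM subset_rfl, ?_⟩,
      Finset.union_sdiff_of_subset Finset.inter_subset_right⟩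
    rw [Finset.card_sdiff_of_subset Finset.inter_subset_right, hTk, hTi]
  refine (Finset.card_le_card hcover).trans ?_
  rw [← Finset.card_powersetCard]
  refine Finset.card_biUnion_le_card_mul _ _ _ fun I hI => Finset.card_image_le.trans ?_
  obtain ⟨hIS, hIi⟩ := Finset.mem_powersetCard.mp hI
  rw [Finset.card_powersetCard, Finset.card_sdiff_of_subset (hIS.trans hSM), hIi]

theorem sum_powersetCard_card_inter_le {f : ℕ → ℝ} (hf : ∀ i, 0 ≤ f i) (hSM : S ⊆ M)
    (hS : #S = k) (s : ℕ) :
    ∑ T ∈ M.powersetCard k with s ≤ #(S ∩ T), f #(S ∩ T) ≤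
      (#M).choose k * ∑ i ∈ Finset.Icc s k, (k.choose i : ℝ) ^ 2 / (#M).choose i * f i := by
  have hmaps : ∀ T ∈ {T ∈ M.powersetCard k | s ≤ #(S ∩ T)}, #(S ∩ T) ∈ Finset.Icc s k := by
    intro T hT
    rw [Finset.mem_Icc, ← hS]
    exact ⟨(Finset.mem_filter.mp hT).2, Finset.card_le_card Finset.inter_subset_left⟩
  rw [← Finset.sum_fiberwise_of_maps_to hmaps, Finset.mul_sum]
  refine Finset.sum_le_sum fun i hi => ?_
  have hik : i ≤ k := (Finset.mem_Icc.mp hi).2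
  have hkM : k ≤ #M := hS ▸ Finset.card_le_card hSM
  have hM : (0 : ℝ) < (#M).choose i := mod_cast Nat.choose_pos (hik.trans hkM)
  have hfiber : #{T ∈ {T ∈ M.powersetCard k | s ≤ #(S ∩ T)} | #(S ∩ T) = i} ≤
      k.choose i * (#M - i).choose (k - i) := by
    rw [← hS]
    refine (Finset.card_le_card ?_).trans (card_filter_card_inter_eq_le hSM i)
    exact Finset.filter_subset_filter _ (hS ▸ Finset.filter_subset _ _)
  have hchoose : ((#M).choose k : ℝ) * k.choose i = (#M).choose i * (#M - i).choose (k - i) :=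
    mod_cast Nat.choose_mul hik
  calc ∑ T ∈ {T ∈ M.powersetCard k | s ≤ #(S ∩ T)} with #(S ∩ T) = i, f #(S ∩ T)
      = #{T ∈ {T ∈ M.powersetCard k | s ≤ #(S ∩ T)} | #(S ∩ T) = i} * f i := by
        rw [← nsmul_eq_mul]
        exact Finset.sum_eq_card_nsmul fun T hT => by rw [(Finset.mem_filter.mp hT).2]
    _ ≤ (k.choose i * (#M - i).choose (k - i) : ℝ) * f i :=
        mul_le_mul_of_nonneg_right (mod_cast hfiber) (hf i)
    _ = (#M).choose k * ((k.choose i : ℝ) ^ 2 / (#M).choose i * f i) := by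
        rw [div_mul_eq_mul_div, mul_div_assoc', eq_div_iff hM.ne']
        linear_combination (-(k.choose i : ℝ) * f i) * hchoose

theorem sum_interedges_card_inter_le {f : ℕ → ℝ} (hf : ∀ i, 0 ≤ f i) (M : Finset α) (k s : ℕ) :
    ∑ x ∈ Rel.interedges (fun S T : Finset α => s ≤ #(S ∩ T)) (M.powersetCard k)
        (M.powersetCard k), f #(x.1 ∩ x.2) ≤
      ((#M).choose k : ℝ) ^ 2 *
        ∑ i ∈ Finset.Icc s k, (k.choose i : ℝ) ^ 2 / (#M).choose i * f i := by
  rw [Rel.interedges, Finset.sum_filter, Finset.sum_product, sq, mul_assoc,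
    ← Finset.card_powersetCard, ← nsmul_eq_mul]
  refine Finset.sum_le_card_nsmul _ _ _ fun S hS => ?_
  obtain ⟨hSM, hSk⟩ := Finset.mem_powersetCard.mp hS
  rw [← Finset.sum_filter, Finset.card_powersetCard]
  exact sum_powersetCard_card_inter_le hf hSM hSk s

end OverlappingPairs

section BinomialRandomGraph

open scoped Finset

variable {n : ℕ} {p : ℝ}

theorem card_edgeType (n : ℕ) : Fintype.card (EdgeType n) = n.choose 2 := by
  rw [Sym2.card_subtype_not_diag, Fintype.card_fin]

theorem graphOf_adj {ω : EdgeType n → Bool} {x y : Fin n} :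
    (graphOf ω).Adj x y ↔ ∃ h : ¬ s(x, y).IsDiag, ω ⟨s(x, y), h⟩ = true := by
  simp only [graphOf, SimpleGraph.fromEdgeSet_adj, Set.mem_ofPred_eq, Sym2.mk_isDiag_iff]
  exact and_iff_left_of_imp fun h => h.1

instance : IsProbabilityMeasure (erMeasure n p) := by
  unfold erMeasure
  infer_instance

theorem erMeasure_real_isVacant (hp0 : 0 ≤ p) (hp1 : p ≤ 1) (s : Finset (EdgeType n)) :
    (erMeasure n p).real {ω | IsVacant ω s} = (1 - p) ^ #s := by
  have hset : {ω | IsVacant ω s} = (s : Set (EdgeType n)).pi fun _ => {false} := by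
    ext; simp [IsVacant, Set.mem_pi]
  rw [hset, Measure.real, erMeasure, Measure.pi_pi_finset, Finset.prod_const,
    PMF.toMeasure_apply_singleton _ _ .of_discrete, ENNReal.toReal_pow]
  change ((1 - min p.toNNReal 1 : NNReal) : ENNReal).toReal ^ #s = _
  simp [hp0, hp1]

theorem erMeasure_real_present (hp0 : 0 ≤ p) (hp1 : p ≤ 1) (e : EdgeType n) :
    (erMeasure n p).real {ω | ω e = true} = p := by
  have hcompl : {ω : EdgeType n → Bool | ω e = true} = {ω | IsVacant ω {e}}ᶜ := by
    ext; simp [IsVacant]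
  rw [hcompl, probReal_compl_eq_one_sub .of_discrete, erMeasure_real_isVacant hp0 hp1]
  simp

/-- The potential edges with both endpoints in `S`. -/
def innerEdges (S : Finset (Fin n)) : Finset (EdgeType n) :=
  S.sym2.subtype fun e => ¬ e.IsDiag

theorem mem_innerEdges {S : Finset (Fin n)} {e : EdgeType n} :
    e ∈ innerEdges S ↔ ∀ v ∈ e.1, v ∈ S := by
  rw [innerEdges, Finset.mem_subtype, Finset.mem_sym2_iff]

theorem card_innerEdges (S : Finset (Fin n)) : #(innerEdges S) = (#S).choose 2 := by
  rw [innerEdges, Finset.card_subtype, ← Sym2.card_image_offDiag]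
  congr 1
  ext e
  induction e with | _ x y
  simp only [Finset.mem_filter, Finset.mem_sym2_iff, Finset.mem_image, Finset.mem_offDiag]
  constructor
  · intro h
    exact ⟨(x, y), by simpa [and_assoc] using h, rfl⟩
  · rintro ⟨⟨a, b⟩, hab, heq⟩
    rw [← heq]
    simpa [and_assoc] using hab

theorem innerEdges_inter (S T : Finset (Fin n)) :
    innerEdges (S ∩ T) = innerEdges S ∩ innerEdges T := by
  ext e
  simp only [Finset.mem_inter, mem_innerEdges, forall₂_and]

theorem isVacant_innerEdges_iff {ω : EdgeType n → Bool} {S : Finset (Fin n)} :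
    IsVacant ω (innerEdges S) ↔ (graphOf ω).IsIndepSet S := by
  simp only [IsVacant, SimpleGraph.isIndepSet_iff, Set.Pairwise, graphOf_adj, Subtype.forall,
    mem_innerEdges, Sym2.forall, Sym2.mem_iff, forall_eq_or_imp, forall_eq, Finset.mem_coe,
    Sym2.mk_isDiag_iff, not_exists, Bool.not_eq_true]
  grind

theorem not_disjoint_innerEdges_iff {S T : Finset (Fin n)} :
    ¬ Disjoint (innerEdges S) (innerEdges T) ↔ 2 ≤ #(S ∩ T) := by
  rw [Finset.disjoint_iff_inter_eq_empty, ← innerEdges_inter, ← Finset.card_eq_zero,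
    card_innerEdges, Nat.choose_eq_zero_iff, not_lt]

theorem erMeasure_real_isVacant_innerEdges_and (hp0 : 0 ≤ p) (hp1 : p ≤ 1)
    (S T : Finset (Fin n)) :
    (erMeasure n p).real {ω | IsVacant ω (innerEdges S) ∧ IsVacant ω (innerEdges T)} =
      (1 - p) ^ ((#S).choose 2 + (#T).choose 2 - (#(S ∩ T)).choose 2) := by
  classical
  have hunion : ∀ ω : EdgeType n → Bool, IsVacant ω (innerEdges S) ∧ IsVacant ω (innerEdges T) ↔
      IsVacant ω (innerEdges S ∪ innerEdges T) := by
    simp [IsVacant, or_imp, forall_and]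
  simp_rw [hunion]
  rw [erMeasure_real_isVacant hp0 hp1, Finset.card_union, ← innerEdges_inter, card_innerEdges,
    card_innerEdges, card_innerEdges]

/-- The second-moment ratio for independent `k`-sets among `m` vertices of a random graph in which
every edge is absent with probability `b⁻¹`: the sum, over the ordered pairs of `k`-sets sharing at
least two vertices, of the probability that both are independent, relative to the squared expected
number of independent `k`-sets. The index `i` is the number of shared vertices. -/
noncomputable def overlapSum (b : ℝ) (m k : ℕ) : ℝ :=
  ∑ i ∈ Finset.Icc 2 k, (k.choose i : ℝ) ^ 2 / m.choose i * b ^ i.choose 2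

theorem sum_erMeasure_real_isVacant_innerEdges_le (hp0 : 0 ≤ p) (hp1 : p < 1)
    (M : Finset (Fin n)) (k : ℕ) :
    ∑ x ∈ Rel.interedges (fun S T : Finset (Fin n) => 2 ≤ #(S ∩ T)) (M.powersetCard k)
        (M.powersetCard k),
        (erMeasure n p).real {ω | IsVacant ω (innerEdges x.1) ∧ IsVacant ω (innerEdges x.2)} ≤
      ((#M).choose k * (1 - p) ^ k.choose 2) ^ 2 * overlapSum (1 / (1 - p)) #M k := by
  have hq : 0 < 1 - p := sub_pos.mpr hp1
  calc _ = ∑ x ∈ Rel.interedges (fun S T : Finset (Fin n) => 2 ≤ #(S ∩ T)) (M.powersetCard k)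
        (M.powersetCard k), (1 - p) ^ (k.choose 2 + k.choose 2 - (#(x.1 ∩ x.2)).choose 2) := by
        refine Finset.sum_congr rfl fun x hx => ?_
        obtain ⟨hS, hT, -⟩ := Rel.mem_interedges_iff.mp hx
        rw [erMeasure_real_isVacant_innerEdges_and hp0 hp1.le, (Finset.mem_powersetCard.mp hS).2,
          (Finset.mem_powersetCard.mp hT).2]
    _ ≤ ((#M).choose k : ℝ) ^ 2 * ∑ i ∈ Finset.Icc 2 k, (k.choose i : ℝ) ^ 2 / (#M).choose i *
          (1 - p) ^ (k.choose 2 + k.choose 2 - i.choose 2) :=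
        sum_interedges_card_inter_le
          (f := fun i => (1 - p) ^ (k.choose 2 + k.choose 2 - i.choose 2))
          (fun _ => by positivity) M k 2
    _ = _ := by
        rw [overlapSum, mul_pow, mul_assoc]
        congr 1
        rw [Finset.mul_sum]
        refine Finset.sum_congr rfl fun i hi => ?_
        have hik : i.choose 2 ≤ k.choose 2 := Nat.choose_le_choose 2 (Finset.mem_Icc.mp hi).2
        rw [pow_sub₀ _ hq.ne' (hik.trans (Nat.le_add_right _ _)), ← two_mul, mul_comm 2, pow_mul,
          one_div, inv_pow]
        ring

theorem erMeasure_real_indepSetFreeOn_le (hp0 : 0 ≤ p) (hp1 : p < 1) {M : Finset (Fin n)} {k : ℕ}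
    (hk : 2 ≤ k) (hkM : k ≤ #M) {t : ℝ} (ht : 0 ≤ t)
    (htk : t * overlapSum (1 / (1 - p)) #M k ≤ 1) :
    (erMeasure n p).real {ω | (graphOf ω).IndepSetFreeOn M k} ≤
      exp (-2 * t ^ 2 / n.choose 2) := by
  have hcard : ∀ S ∈ M.powersetCard k, #S = k := fun S hS => (Finset.mem_powersetCard.mp hS).2
  have hmean : ∑ S ∈ M.powersetCard k, (erMeasure n p).real {ω | IsVacant ω (innerEdges S)} =
      (#M).choose k * (1 - p) ^ k.choose 2 := by
    rw [← Finset.card_powersetCard, ← nsmul_eq_mul]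
    refine Finset.sum_eq_card_nsmul fun S hS => ?_
    rw [erMeasure_real_isVacant hp0 hp1.le, card_innerEdges, hcard S hS]
  have hfree : {ω | (graphOf ω).IndepSetFreeOn M k} =
      {ω : EdgeType n → Bool | ∀ S ∈ M.powersetCard k, ¬ IsVacant ω (innerEdges S)} := by
    ext ω
    simp only [SimpleGraph.IndepSetFreeOn, SimpleGraph.isNIndepSet_iff, Set.mem_ofPred_eq,
      Finset.mem_powersetCard, isVacant_innerEdges_iff, Finset.coe_subset]
    grind
  rw [hfree, ← card_edgeType]
  refine measureReal_forall_not_isVacant_le (fun S hS => ?_) _ ?_ ht ?_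
  · rw [← Finset.card_pos, card_innerEdges, hcard S hS]
    exact Nat.choose_pos hk
  · change 0 < ∑ S ∈ M.powersetCard k, (erMeasure n p).real {ω | IsVacant ω (innerEdges S)}
    rw [hmean]
    have := Nat.choose_pos hkM
    have := sub_pos.mpr hp1
    positivity
  · change t * ∑ x ∈ _, (erMeasure n p).real _ ≤ (∑ S ∈ _, (erMeasure n p).real _) ^ 2
    simp_rw [not_disjoint_innerEdges_iff]
    rw [hmean]
    calc _ ≤ t * (((#M).choose k * (1 - p) ^ k.choose 2) ^ 2 *
          overlapSum (1 / (1 - p)) #M k) := by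
          gcongr
          convert sum_erMeasure_real_isVacant_innerEdges_le hp0 hp1 M k
      _ ≤ _ := by
          rw [mul_left_comm]
          exact mul_le_of_le_one_right (by positivity) htk

theorem erMeasure_real_le_integral_sub_le {f : (EdgeType n → Bool) → ℝ}
    (hf : HasBoundedDifferences f 1) {t : ℝ} (ht : 0 ≤ t) :
    (erMeasure n p).real {ω | f ω ≤ ∫ ω', f ω' ∂erMeasure n p - t} ≤
      exp (-2 * t ^ 2 / n.choose 2) := by
  refine (hf.measureReal_le_integral_sub_le .of_discrete _ ht).trans_eq ?_
  rw [← card_edgeType]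
  simp

open Classical in
theorem integral_card_interedges (hp0 : 0 ≤ p) (hp1 : p ≤ 1) {A B : Finset (Fin n)}
    (hAB : Disjoint A B) :
    ∫ ω, (#((graphOf ω).interedges A B) : ℝ) ∂erMeasure n p = p * #A * #B := by
  rw [show (fun ω => (#((graphOf ω).interedges A B) : ℝ)) = fun ω : EdgeType n → Bool =>
    (#{x ∈ A ×ˢ B | (graphOf ω).Adj x.1 x.2} : ℝ) from rfl, integral_card_filter,
    Finset.sum_eq_card_nsmul (b := p), Finset.card_product, nsmul_eq_mul, Nat.cast_mul]
  · ring
  · intro x hx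
    obtain ⟨hxA, hxB⟩ := Finset.mem_product.mp hx
    have hdiag : ¬ s(x.1, x.2).IsDiag := Finset.disjoint_iff_ne.mp hAB _ hxA _ hxB
    simp only [graphOf_adj, hdiag, not_false_eq_true, exists_true_left]
    exact erMeasure_real_present hp0 hp1 _

open Classical in
theorem card_interedges_le_add_one {A B : Finset (Fin n)} (hAB : Disjoint A B) {e : EdgeType n}
    {ω ω' : EdgeType n → Bool} (h : ∀ f ≠ e, ω f = ω' f) :
    #((graphOf ω).interedges A B) ≤ #((graphOf ω').interedges A B) + 1 := by
  have hchange : ∀ x ∈ (graphOf ω).interedges A B \ (graphOf ω').interedges A B,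
      s(x.1, x.2) = e.1 := by
    intro x hx
    simp only [Finset.mem_sdiff, SimpleGraph.interedges, Rel.mem_interedges_iff, graphOf_adj] at hx
    obtain ⟨⟨hxA, hxB, hdiag, hω⟩, hω'⟩ := hx
    by_contra hne
    exact hω' ⟨hxA, hxB, hdiag, by rwa [← h _ fun heq => hne (congrArg Subtype.val heq)]⟩
  have hone : #((graphOf ω).interedges A B \ (graphOf ω').interedges A B) ≤ 1 := by
    refine Finset.card_le_one.mpr fun x hx y hy => ?_
    have hxy := (hchange x hx).trans (hchange y hy).symm
    simp only [Finset.mem_sdiff, SimpleGraph.interedges, Rel.mem_interedges_iff] at hx hy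
    rcases Sym2.eq_iff.mp hxy with ⟨h₁, h₂⟩ | ⟨h₁, -⟩
    · exact Prod.ext h₁ h₂
    · exact absurd (h₁ ▸ hx.1.1) (Finset.disjoint_right.mp hAB hy.1.2.1)
  have := Finset.le_card_sdiff ((graphOf ω').interedges A B) ((graphOf ω).interedges A B)
  omega

open Classical in
theorem erMeasure_real_card_interedges_le (hp0 : 0 ≤ p) (hp1 : p ≤ 1) {A B : Finset (Fin n)}
    (hAB : Disjoint A B) {t : ℝ} (ht : 0 ≤ t) :
    (erMeasure n p).real {ω | (#((graphOf ω).interedges A B) : ℝ) ≤ p * #A * #B - t} ≤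
      exp (-2 * t ^ 2 / n.choose 2) := by
  have hdiff : HasBoundedDifferences
      (fun ω : EdgeType n → Bool => (#((graphOf ω).interedges A B) : ℝ)) 1 := by
    intro e ω ω' h
    have h₁ : (#((graphOf ω).interedges A B) : ℝ) ≤ #((graphOf ω').interedges A B) + 1 :=
      mod_cast card_interedges_le_add_one hAB h
    have h₂ : (#((graphOf ω').interedges A B) : ℝ) ≤ #((graphOf ω).interedges A B) + 1 :=
      mod_cast card_interedges_le_add_one hAB fun f hf => (h f hf).symm
    simp only [Pi.one_apply, NNReal.coe_one, abs_le]
    constructor <;> linarith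
  rw [← integral_card_interedges hp0 hp1 hAB]
  exact erMeasure_real_le_integral_sub_le hdiff ht

end BinomialRandomGraph

section InducedStars

open scoped Finset

/-- `G` contains an induced star `K_{1,k}` with center in `A` and all leaves in `B`. -/
def HasInducedStar {V : Type*} (G : SimpleGraph V) (A B : Finset V) (k : ℕ) : Prop :=
  ∃ z ∈ A, ∃ L ⊆ B, #L = k ∧ (∀ x ∈ L, G.Adj z x) ∧
    (L : Set V).Pairwise fun x y => ¬ G.Adj x y

theorem hasInducedStar_of_card_mul_lt_card_interedges {V : Type*} {G : SimpleGraph V}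
    [DecidableRel G.Adj] {A B : Finset V} {m k : ℕ} (hdense : #A * m < #(G.interedges A B))
    (hindep : ∀ M ⊆ B, #M = m → ¬ G.IndepSetFreeOn M k) : HasInducedStar G A B k := by
  obtain ⟨z, hzA, hz⟩ : ∃ z ∈ A, m < #{x ∈ B | G.Adj z x} := by
    refine Finset.exists_lt_of_sum_lt ?_
    rw [SimpleGraph.interedges_def, Finset.card_filter, Finset.sum_product] at hdense
    simpa only [Finset.sum_const, smul_eq_mul, Finset.card_filter] using hdense
  obtain ⟨M, hM, hMm⟩ := Finset.exists_subset_card_eq hz.le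
  obtain ⟨L, hLM, hL⟩ : ∃ L : Finset V, (L : Set V) ⊆ M ∧ G.IsNIndepSet k L := by
    simpa [SimpleGraph.IndepSetFreeOn] using hindep M (hM.trans (Finset.filter_subset _ B)) hMm
  have hLN : L ⊆ {x ∈ B | G.Adj z x} := (Finset.coe_subset.mp hLM).trans hM
  exact ⟨z, hzA, L, hLN.trans (Finset.filter_subset _ B), hL.card_eq,
    fun x hx => (Finset.mem_filter.mp (hLN hx)).2, hL.isIndepSet⟩

variable {n : ℕ} {p : ℝ}

theorem le_erMeasure_real_forall_hasInducedStar (hp0 : 0 ≤ p) (hp1 : p < 1) {N m k : ℕ} {t : ℝ}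
    (hk : 2 ≤ k) (hkm : k ≤ m) (ht : 0 ≤ t) (hdense : N * m + t ≤ p * N * N)
    (hoverlap : t * overlapSum (1 / (1 - p)) m k ≤ 1) :
    1 - 2 * 4 ^ n * exp (-2 * t ^ 2 / n.choose 2) ≤
      (erMeasure n p).real {ω | ∀ A B : Finset (Fin n), Disjoint A B → #A = N → #B = N →
        HasInducedStar (graphOf ω) A B k} := by
  classical
  set ε := exp (-2 * t ^ 2 / n.choose 2)
  let sparse : Set (EdgeType n → Bool) := {ω | ∃ x : Finset (Fin n) × Finset (Fin n),
    Disjoint x.1 x.2 ∧ (#((graphOf ω).interedges x.1 x.2) : ℝ) ≤ p * #x.1 * #x.2 - t}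
  let free : Set (EdgeType n → Bool) :=
    {ω | ∃ M : Finset (Fin n), #M = m ∧ (graphOf ω).IndepSetFreeOn M k}
  have hsparse : (erMeasure n p).real sparse ≤ 4 ^ n * ε := by
    refine (measureReal_exists_le (erMeasure n p) (exp_nonneg _) fun x hx =>
      erMeasure_real_card_interedges_le hp0 hp1.le hx ht).trans_eq ?_
    rw [Fintype.card_prod, Fintype.card_finset, Fintype.card_fin, ← mul_pow, Nat.cast_pow]
    rfl
  have hfree : (erMeasure n p).real free ≤ 4 ^ n * ε := by
    refine (measureReal_exists_le (erMeasure n p) (ε := ε) (exp_nonneg _) ?_).trans ?_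
    · rintro M rfl
      exact erMeasure_real_indepSetFreeOn_le hp0 hp1 hk hkm ht hoverlap
    · rw [Fintype.card_finset, Fintype.card_fin, Nat.cast_pow]
      gcongr
      norm_num
  have hgood : (sparse ∪ free)ᶜ ⊆ {ω | ∀ A B : Finset (Fin n), Disjoint A B → #A = N → #B = N →
      HasInducedStar (graphOf ω) A B k} := by
    rintro ω hω A B hAB rfl hB
    simp only [Set.compl_union, Set.mem_inter_iff, Set.mem_compl_iff, sparse, free,
      Set.mem_ofPred_eq, not_exists, not_and, not_le] at hω
    refine hasInducedStar_of_card_mul_lt_card_interedges (m := m) ?_ fun M _ => hω.2 M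
    have hedges := hω.1 (A, B) hAB
    rw [hB] at hedges
    exact_mod_cast (le_sub_right_of_add_le hdense).trans_lt hedges
  calc _ ≤ 1 - (erMeasure n p).real (sparse ∪ free) := by
        linarith [measureReal_union_le (μ := erMeasure n p) sparse free]
    _ = (erMeasure n p).real (sparse ∪ free)ᶜ := (probReal_compl_eq_one_sub .of_discrete).symm
    _ ≤ _ := measureReal_mono hgood

end InducedStars

section OverlapBound

theorem choose_div_choose_le_pow {k m : ℕ} (hkm : k ≤ m) (i : ℕ) :
    (k.choose i : ℝ) / m.choose i ≤ (k / m : ℝ) ^ i := by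
  induction i with
  | zero => simp
  | succ i ih =>
    obtain him | him := lt_or_ge i k
    · have hrec : ∀ a : ℕ, i < a → (a.choose (i + 1) : ℝ) = a.choose i * ((a - i) / (i + 1)) := by
        intro a ha
        have := Nat.choose_succ_right_eq a i
        rw [mul_div_assoc', eq_div_iff (by positivity)]
        have := congrArg (Nat.cast (R := ℝ)) this
        push_cast [Nat.cast_sub ha.le] at this
        exact this
      have hk : (i : ℝ) < k := mod_cast him
      have hkm' : (k : ℝ) ≤ m := mod_cast hkm
      have hm0 : (0 : ℝ) < m := (Nat.cast_nonneg i).trans_lt (hk.trans_le hkm')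
      rw [hrec k him, hrec m (him.trans_le hkm), mul_div_mul_comm, pow_succ,
        div_div_div_cancel_right₀ (by positivity)]
      refine mul_le_mul ih ?_ (div_nonneg (by linarith) (by linarith)) (by positivity)
      rw [div_le_div_iff₀ (by linarith) hm0]
      nlinarith [Nat.cast_nonneg (α := ℝ) i]
    · rw [Nat.choose_eq_zero_of_lt (Nat.lt_succ_of_le him)]
      simp only [Nat.cast_zero, zero_div]
      positivity

variable {β c : ℝ} {m k i : ℕ}

theorem overlapSum_term_le_of_two_mul_le (hβ : 1 ≤ β) (hkm : k ≤ m)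
    (hsmall : ((k : ℝ) ^ 2 / m) ^ 2 * β ^ (k + 2) ≤ 1) (h2i : 2 ≤ i) (hik : 2 * i ≤ k) :
    (k.choose i : ℝ) ^ 2 / m.choose i * (β ^ 2) ^ i.choose 2 ≤
      ((k : ℝ) ^ 2 / m) ^ 2 * β ^ 2 := by
  set u := (k : ℝ) ^ 2 / m
  have hu : u * β ^ (i + 1) ≤ 1 := by
    refine (sq_le_one_iff₀ (by positivity)).mp (le_trans ?_ hsmall)
    rw [mul_pow, ← pow_mul]
    gcongr
    omega
  have hexp : 2 * i.choose 2 = 2 + (i + 1) * (i - 2) := by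
    obtain ⟨j, rfl⟩ := Nat.exists_eq_add_of_le h2i
    rw [mul_comm, Nat.choose_two_right, Nat.div_mul_cancel (Nat.even_mul_pred_self _).two_dvd,
      Nat.add_sub_cancel_left, show 2 + j - 1 = j + 1 by omega]
    ring
  calc (k.choose i : ℝ) ^ 2 / m.choose i * (β ^ 2) ^ i.choose 2
      = k.choose i * (k.choose i / m.choose i) * β ^ (2 * i.choose 2) := by ring
    _ ≤ k ^ i * (k / m) ^ i * β ^ (2 * i.choose 2) := by
        gcongr
        · exact mod_cast Nat.choose_le_pow k i
        · exact choose_div_choose_le_pow hkm i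
    _ = u ^ 2 * β ^ 2 * (u * β ^ (i + 1)) ^ (i - 2) := by
        rw [← mul_pow, hexp, mul_div_assoc', ← sq, mul_pow, ← pow_mul, pow_add,
          ← pow_mul_pow_sub u h2i]
        ring
    _ ≤ u ^ 2 * β ^ 2 := mul_le_of_le_one_right (by positivity) (pow_le_one₀ (by positivity) hu)

theorem overlapSum_term_le_of_le_two_mul (hβ : 1 ≤ β) (hc0 : 0 ≤ c) (hc1 : c ≤ 1) (hkm : k ≤ m)
    (hlarge : 4 * (k / m) * β ^ k ≤ c ^ 2) (hik : i ≤ k) (hki : k ≤ 2 * i) :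
    (k.choose i : ℝ) ^ 2 / m.choose i * (β ^ 2) ^ i.choose 2 ≤ c ^ k := by
  have hchoose : k.choose i ≤ 4 ^ i :=
    calc k.choose i ≤ 2 ^ k := Nat.choose_le_two_pow k i
      _ ≤ 2 ^ (2 * i) := Nat.pow_le_pow_right two_pos hki
      _ = 4 ^ i := by rw [pow_mul]; rfl
  have hexp : 2 * i.choose 2 ≤ k * i := by
    rw [mul_comm, Nat.choose_two_right, Nat.div_mul_cancel (Nat.even_mul_pred_self _).two_dvd,
      mul_comm]
    exact Nat.mul_le_mul_right i ((Nat.sub_le i 1).trans hik)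
  calc (k.choose i : ℝ) ^ 2 / m.choose i * (β ^ 2) ^ i.choose 2
      = k.choose i * (k.choose i / m.choose i) * β ^ (2 * i.choose 2) := by ring
    _ ≤ 4 ^ i * (k / m) ^ i * β ^ (k * i) := by
        gcongr
        · exact mod_cast hchoose
        · exact choose_div_choose_le_pow hkm i
    _ = (4 * (k / m) * β ^ k) ^ i := by rw [mul_pow, mul_pow, pow_mul]
    _ ≤ (c ^ 2) ^ i := by gcongr
    _ ≤ c ^ k := by
        rw [← pow_mul]
        exact pow_le_pow_of_le_one hc0 hc1 hki

theorem overlapSum_sq_le (hβ : 1 ≤ β) (hc0 : 0 ≤ c) (hc1 : c ≤ 1) (hkm : k ≤ m)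
    (hsmall : ((k : ℝ) ^ 2 / m) ^ 2 * β ^ (k + 2) ≤ 1) (hlarge : 4 * (k / m) * β ^ k ≤ c ^ 2) :
    overlapSum (β ^ 2) m k ≤ k * (((k : ℝ) ^ 2 / m) ^ 2 * β ^ 2 + c ^ k) := by
  have hterm : ∀ i ∈ Finset.Icc 2 k, (k.choose i : ℝ) ^ 2 / m.choose i * (β ^ 2) ^ i.choose 2 ≤
      ((k : ℝ) ^ 2 / m) ^ 2 * β ^ 2 + c ^ k := by
    intro i hi
    obtain ⟨h2i, hik⟩ := Finset.mem_Icc.mp hi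
    obtain h | h := le_total (2 * i) k
    · exact (overlapSum_term_le_of_two_mul_le hβ hkm hsmall h2i h).trans
        (le_add_of_nonneg_right (by positivity))
    · exact (overlapSum_term_le_of_le_two_mul hβ hc0 hc1 hkm hlarge hik h).trans
        (le_add_of_nonneg_left (by positivity))
  refine (Finset.sum_le_card_nsmul _ _ _ hterm).trans ?_
  rw [nsmul_eq_mul, Nat.card_Icc]
  gcongr
  omega

end OverlapBound

section Asymptotics

open Asymptotics

/-- The common size of the sets `A` and `B`. -/
noncomputable def partSize (n : ℕ) : ℕ :=
  ⌊(n : ℝ) / log n ^ 2⌋₊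

/-- Half the expected number of neighbors that a vertex of `A` has in `B`. -/
noncomputable def halfMeanDegree (p : ℝ) (n : ℕ) : ℕ :=
  ⌊p * partSize n / 2⌋₊

/-- The number `a - 1` of leaves, in terms of `b = 1 / (1 - p)`. -/
noncomputable def leafCount (b : ℝ) (n : ℕ) : ℕ :=
  ⌊2 * logb b n - 8 * logb b (log n)⌋₊ - 1

variable {b p : ℝ}

theorem tendsto_log_natCast_atTop : Tendsto (fun n : ℕ => log n) atTop atTop :=
  tendsto_log_atTop.comp tendsto_natCast_atTop_atTop

theorem isLittleO_log_natCast_pow_rpow (r : ℕ) {s : ℝ} (hs : 0 < s) :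
    (fun n : ℕ => log n ^ r) =o[atTop] fun n => (n : ℝ) ^ s := by
  simpa only [rpow_natCast, Function.comp_def] using
    (isLittleO_log_rpow_rpow_atTop (r : ℝ) hs).comp_tendsto tendsto_natCast_atTop_atTop

theorem eventually_leafCount_bounds (hb : 1 < b) :
    ∀ᶠ n : ℕ in atTop, log n ≤ leafCount b n * log b ∧
      leafCount b n * log b ≤ 2 * log n - 8 * log (log n) := by
  have hg : 0 < log b := log_pos hb
  have hloglog : ∀ᶠ x : ℝ in atTop, 8 * log x + 2 * log b ≤ x := by
    have ho := (isLittleO_log_id_atTop.const_mul_left 8).add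
      (isLittleO_const_id_atTop (2 * log b))
    filter_upwards [ho.bound one_pos, eventually_ge_atTop 0] with x hx hx0
    simpa [abs_of_nonneg hx0] using (le_abs_self _).trans hx
  filter_upwards [tendsto_log_natCast_atTop.eventually hloglog,
    tendsto_log_natCast_atTop.eventually_ge_atTop 0] with n hn hn0
  set y := 2 * logb b n - 8 * logb b (log n) with hy
  have hyg : y * log b = 2 * log n - 8 * log (log n) := by
    rw [hy, logb, logb]
    field_simp
  have hylog : log n + 2 * log b ≤ y * log b := by linarith
  have hy0 : 0 ≤ y := nonneg_of_mul_nonneg_left (by linarith [hylog]) hg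
  have hlower : y - 2 ≤ leafCount b n := by
    have hfloor := Nat.lt_floor_add_one y
    have hsub : (⌊y⌋₊ : ℝ) ≤ leafCount b n + 1 := mod_cast Nat.sub_le_iff_le_add.mp le_rfl
    linarith
  have hupper : (leafCount b n : ℝ) ≤ y :=
    (Nat.cast_le.mpr (Nat.sub_le _ 1)).trans (Nat.floor_le hy0)
  constructor
  · linarith [hylog, mul_le_mul_of_nonneg_right hlower hg.le]
  · rw [← hyg]
    gcongr

theorem isTheta_floor_natCast {f g : ℕ → ℝ} (hf : Tendsto f atTop atTop) (hfg : f =Θ[atTop] g) :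
    (fun n => (⌊f n⌋₊ : ℝ)) =Θ[atTop] g :=
  (isEquivalent_nat_floor.comp_tendsto hf).isTheta.trans hfg

theorem tendsto_natCast_div_log_sq_atTop :
    Tendsto (fun n : ℕ => (n : ℝ) / log n ^ 2) atTop atTop := by
  have ho := isLittleO_log_natCast_pow_rpow 2 one_pos
  simp_rw [rpow_one] at ho
  have hpos : ∀ᶠ n : ℕ in atTop, 0 < log n ^ 2 / (n : ℝ) := by
    filter_upwards [eventually_gt_atTop 0, tendsto_log_natCast_atTop.eventually_gt_atTop 0]
      with n hn hlog
    positivity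
  refine (tendsto_inv_nhdsGT_zero.comp
    (tendsto_nhdsWithin_iff.mpr ⟨ho.tendsto_div_nhds_zero, hpos⟩)).congr fun n => ?_
  exact inv_div _ _

theorem tendsto_mul_partSize_div_two_atTop (hp : 0 < p) :
    Tendsto (fun n => p * partSize n / 2) atTop atTop :=
  ((tendsto_natCast_atTop_atTop.comp (tendsto_nat_floor_atTop.comp
    tendsto_natCast_div_log_sq_atTop)).const_mul_atTop hp).atTop_div_const two_pos

theorem tendsto_halfMeanDegree_atTop (hp : 0 < p) : Tendsto (halfMeanDegree p) atTop atTop :=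
  tendsto_nat_floor_atTop.comp (tendsto_mul_partSize_div_two_atTop hp)

theorem isTheta_partSize :
    (fun n => (partSize n : ℝ)) =Θ[atTop] fun n => (n : ℝ) / log n ^ 2 :=
  isTheta_floor_natCast tendsto_natCast_div_log_sq_atTop (isTheta_refl _ _)

theorem isTheta_halfMeanDegree (hp : 0 < p) :
    (fun n => (halfMeanDegree p n : ℝ)) =Θ[atTop] fun n => (n : ℝ) / log n ^ 2 := by
  refine isTheta_floor_natCast (tendsto_mul_partSize_div_two_atTop hp) ?_
  simp_rw [mul_div_right_comm]
  exact (isTheta_const_mul_left (by positivity)).mpr isTheta_partSize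

theorem isBigO_leafCount (hb : 1 < b) :
    (fun n => (leafCount b n : ℝ)) =O[atTop] fun n : ℕ => log n := by
  refine .of_bound (2 / log b) ?_
  filter_upwards [eventually_leafCount_bounds hb,
    tendsto_log_natCast_atTop.eventually_ge_atTop 1] with n hn hlog
  rw [norm_natCast, norm_of_nonneg (zero_le_one.trans hlog), div_mul_eq_mul_div,
    le_div_iff₀ (log_pos hb)]
  linarith [log_nonneg hlog]

theorem isBigO_sqrt_pow_leafCount (hb : 1 < b) :
    (fun n => √b ^ leafCount b n) =O[atTop] fun n : ℕ => (n : ℝ) / log n ^ 4 := by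
  refine .of_bound 1 ?_
  filter_upwards [eventually_leafCount_bounds hb, eventually_gt_atTop 0,
    tendsto_log_natCast_atTop.eventually_gt_atTop 0] with n hn hn0 hlog
  have hn0' : (0 : ℝ) < n := mod_cast hn0
  rw [one_mul, norm_of_nonneg (by positivity), norm_of_nonneg (by positivity),
    ← log_le_log_iff (by positivity) (by positivity), log_pow, log_sqrt (by positivity),
    log_div hn0'.ne' (by positivity), log_pow]
  push_cast
  linarith

theorem isBigO_leafCount_div_halfMeanDegree (hb : 1 < b) (hp : 0 < p) :
    (fun n => (leafCount b n / halfMeanDegree p n : ℝ)) =O[atTop]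
      fun n : ℕ => log n ^ 3 / (n : ℝ) := by
  refine ((isBigO_leafCount hb).mul (isTheta_halfMeanDegree hp).inv.isBigO).congr
    (fun n => (div_eq_mul_inv _ _).symm) fun n => ?_
  rw [inv_div]
  ring

theorem isBigO_leafCount_sq_div_halfMeanDegree (hb : 1 < b) (hp : 0 < p) :
    (fun n => ((leafCount b n : ℝ) ^ 2 / halfMeanDegree p n : ℝ)) =O[atTop]
      fun n : ℕ => log n ^ 4 / (n : ℝ) :=
  ((isBigO_leafCount hb).mul (isBigO_leafCount_div_halfMeanDegree hb hp)).congr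
    (fun n => by ring) fun n => by ring

theorem tendsto_log_pow_div_rpow (r : ℕ) {s : ℝ} (hs : 0 < s) :
    Tendsto (fun n : ℕ => log n ^ r / (n : ℝ) ^ s) atTop (nhds 0) :=
  (isLittleO_log_natCast_pow_rpow r hs).tendsto_div_nhds_zero

theorem rpow_seven_div_four {x : ℝ} (hx : 0 < x) : x ^ (7 / 4 : ℝ) = x ^ 2 / x ^ (1 / 4 : ℝ) := by
  rw [← rpow_natCast, ← rpow_sub hx]
  norm_num

theorem eventually_two_le_leafCount (hb : 1 < b) : ∀ᶠ n : ℕ in atTop, 2 ≤ leafCount b n := by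
  filter_upwards [eventually_leafCount_bounds hb,
    tendsto_log_natCast_atTop.eventually_ge_atTop (2 * log b)] with n hn hlog
  exact_mod_cast le_of_mul_le_mul_right (hlog.trans hn.1) (log_pos hb)

theorem eventually_leafCount_le_halfMeanDegree (hb : 1 < b) (hp : 0 < p) :
    ∀ᶠ n : ℕ in atTop, leafCount b n ≤ halfMeanDegree p n := by
  have hzero : Tendsto (fun n => (leafCount b n / halfMeanDegree p n : ℝ)) atTop (nhds 0) :=
    (isBigO_leafCount_div_halfMeanDegree hb hp).trans_tendsto
      (by simpa using tendsto_log_pow_div_rpow 3 one_pos)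
  filter_upwards [hzero.eventually_le_const one_pos,
    (tendsto_halfMeanDegree_atTop hp).eventually_gt_atTop 0] with n hn hm
  exact_mod_cast (div_le_one (Nat.cast_pos.mpr hm)).mp hn

theorem eventually_partSize_mul_halfMeanDegree_add_le (hp : 0 < p) :
    ∀ᶠ n : ℕ in atTop, (partSize n * halfMeanDegree p n + (n : ℝ) ^ (7 / 4 : ℝ) : ℝ) ≤
      p * partSize n * partSize n := by
  have ho : (fun n : ℕ => (n : ℝ) ^ (7 / 4 : ℝ)) =o[atTop] fun n => (partSize n : ℝ) ^ 2 := by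
    refine .trans_isBigO ?_ (isTheta_partSize.pow 2).isBigO_symm
    refine isLittleO_of_tendsto' ?_ ?_
    · filter_upwards [tendsto_natCast_div_log_sq_atTop.eventually_gt_atTop 0] with n hn h0
      exact absurd h0 (pow_pos hn 2).ne'
    · refine (tendsto_log_pow_div_rpow 4 (s := 1 / 4) (by norm_num)).congr' ?_
      filter_upwards [eventually_gt_atTop 0] with n hn
      have hn0 : (0 : ℝ) < n := mod_cast hn
      rw [rpow_seven_div_four hn0]
      field_simp
  filter_upwards [ho.bound (half_pos hp)] with n hn
  rw [norm_of_nonneg (by positivity), norm_of_nonneg (by positivity)] at hn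
  have hm : (halfMeanDegree p n : ℝ) ≤ p * partSize n / 2 := Nat.floor_le (by positivity)
  linarith [mul_le_mul_of_nonneg_left hm (Nat.cast_nonneg (α := ℝ) (partSize n))]

theorem tendsto_sq_leafCount_sq_div_mul_sqrt_pow (hb : 1 < b) (hp : 0 < p) :
    Tendsto (fun n => ((leafCount b n : ℝ) ^ 2 / halfMeanDegree p n) ^ 2 *
      √b ^ (leafCount b n + 2)) atTop (nhds 0) := by
  have hO := ((isBigO_leafCount_sq_div_halfMeanDegree hb hp).pow 2).mul
    ((isBigO_sqrt_pow_leafCount hb).const_mul_left b)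
  refine (hO.congr_left fun n => ?_).trans_tendsto ?_
  · rw [pow_add, sq_sqrt (one_pos.trans hb).le, mul_comm b]
  · refine (tendsto_log_pow_div_rpow 4 one_pos).congr fun n => ?_
    rw [rpow_one, ← inv_div (_ ^ 4) (n : ℝ), sq]
    exact (mul_self_mul_inv (log n ^ 4 / (n : ℝ))).symm

theorem tendsto_leafCount_div_mul_sqrt_pow (hb : 1 < b) (hp : 0 < p) :
    Tendsto (fun n => 4 * (leafCount b n / halfMeanDegree p n : ℝ) * √b ^ leafCount b n) atTop
      (nhds 0) := by
  have hO := ((isBigO_leafCount_div_halfMeanDegree hb hp).const_mul_left 4).mul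
    (isBigO_sqrt_pow_leafCount hb)
  refine hO.trans_tendsto (tendsto_log_natCast_atTop.inv_tendsto_atTop.congr' ?_)
  filter_upwards [eventually_ne_atTop 0, tendsto_log_natCast_atTop.eventually_ne_atTop 0]
    with n hn hlog
  simp only [Pi.inv_apply]
  field_simp

theorem eventually_overlapSum_le (hb : 1 < b) (hp : 0 < p) :
    ∀ᶠ n : ℕ in atTop, overlapSum b (halfMeanDegree p n) (leafCount b n) ≤ leafCount b n *
      (((leafCount b n : ℝ) ^ 2 / halfMeanDegree p n) ^ 2 * b + 1 / (n : ℝ) ^ 2) := by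
  filter_upwards [(tendsto_sq_leafCount_sq_div_mul_sqrt_pow hb hp).eventually_le_const one_pos,
    (tendsto_leafCount_div_mul_sqrt_pow hb hp).eventually_le_const
      (by positivity : 0 < exp (-2 * log b) ^ 2),
    eventually_leafCount_le_halfMeanDegree hb hp, eventually_leafCount_bounds hb,
    eventually_gt_atTop 0] with n hsmall hlarge hkm hk hn
  have htail : exp (-2 * log b) ^ leafCount b n ≤ 1 / (n : ℝ) ^ 2 := by
    rw [← log_le_log_iff (by positivity) (by positivity), log_pow, log_exp, one_div, log_inv,
      log_pow]
    push_cast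
    linarith [hk.1]
  have hsum := overlapSum_sq_le (one_le_sqrt.mpr hb.le) (exp_nonneg _)
    (exp_le_one_iff.mpr (by linarith [log_pos hb])) hkm hsmall hlarge
  rw [sq_sqrt (one_pos.trans hb).le] at hsum
  refine hsum.trans ?_
  gcongr

theorem eventually_rpow_mul_overlapSum_le_one (hb : 1 < b) (hp : 0 < p) :
    ∀ᶠ n : ℕ in atTop,
      (n : ℝ) ^ (7 / 4 : ℝ) * overlapSum b (halfMeanDegree p n) (leafCount b n) ≤ 1 := by
  have hterm : (fun n : ℕ =>
      ((leafCount b n : ℝ) ^ 2 / halfMeanDegree p n) ^ 2 * b + 1 / (n : ℝ) ^ 2) =O[atTop]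
      fun n : ℕ => (log n ^ 4 / (n : ℝ)) ^ 2 := by
    refine .add ?_ ?_
    · simpa only [mul_comm _ b] using
        ((isBigO_leafCount_sq_div_halfMeanDegree hb hp).pow 2).const_mul_left b
    · refine .of_norm_eventuallyLE ?_
      filter_upwards [tendsto_log_natCast_atTop.eventually_ge_atTop 1] with n hlog
      rw [norm_of_nonneg (by positivity), div_pow]
      gcongr
      exact one_le_pow₀ (one_le_pow₀ hlog)
  have hzero : Tendsto (fun n : ℕ => (n : ℝ) ^ (7 / 4 : ℝ) * (leafCount b n *
      (((leafCount b n : ℝ) ^ 2 / halfMeanDegree p n) ^ 2 * b + 1 / (n : ℝ) ^ 2))) atTop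
      (nhds 0) := by
    refine ((isBigO_refl _ _).mul ((isBigO_leafCount hb).mul hterm)).trans_tendsto ?_
    refine (tendsto_log_pow_div_rpow 9 (s := 1 / 4) (by norm_num)).congr' ?_
    filter_upwards [eventually_gt_atTop 0] with n hn
    have hn0 : (0 : ℝ) < n := mod_cast hn
    rw [rpow_seven_div_four hn0]
    field_simp
  filter_upwards [eventually_overlapSum_le hb hp, hzero.eventually_le_const one_pos]
    with n hn hle
  exact (mul_le_mul_of_nonneg_left hn (by positivity)).trans hle

theorem tendsto_four_pow_mul_exp :
    Tendsto (fun n : ℕ => 2 * 4 ^ n * exp (-2 * ((n : ℝ) ^ (7 / 4 : ℝ)) ^ 2 / n.choose 2)) atTop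
      (nhds 0) := by
  have hgeom : Tendsto (fun n : ℕ => 2 * (4 * exp (-2)) ^ n) atTop (nhds 0) := by
    have hlt : 4 * exp (-2) < 1 := by
      rw [exp_neg, ← div_eq_mul_inv, div_lt_one (exp_pos 2)]
      have : exp 2 = exp 1 ^ 2 := by rw [← exp_nat_mul]; norm_num
      nlinarith [exp_one_gt_d9]
    simpa using (tendsto_pow_atTop_nhds_zero_of_lt_one (by positivity) hlt).const_mul 2
  refine tendsto_of_tendsto_of_tendsto_of_le_of_le' tendsto_const_nhds hgeom
    (.of_forall fun n => by positivity) ?_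
  filter_upwards [eventually_ge_atTop 2] with n hn
  have hn1 : (1 : ℝ) ≤ n := mod_cast one_le_two.trans hn
  have hchoose : (0 : ℝ) < n.choose 2 := mod_cast Nat.choose_pos hn
  have hexponent : (n : ℝ) ≤ ((n : ℝ) ^ (7 / 4 : ℝ)) ^ 2 / n.choose 2 := by
    rw [le_div_iff₀ hchoose]
    calc (n : ℝ) * n.choose 2 ≤ n * n ^ 2 := by
          gcongr
          exact mod_cast Nat.choose_le_pow n 2
      _ = (n : ℝ) ^ (3 : ℝ) := by norm_cast; ring
      _ ≤ (n : ℝ) ^ (7 / 4 * 2 : ℝ) := rpow_le_rpow_of_exponent_le hn1 (by norm_num)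
      _ = ((n : ℝ) ^ (7 / 4 : ℝ)) ^ 2 := by rw [rpow_mul (by positivity), rpow_two]
  rw [mul_pow, ← exp_nat_mul, ← mul_assoc, mul_div_assoc]
  exact mul_le_mul_of_nonneg_left (exp_le_exp.mpr (by linarith)) (by positivity)

end Asymptotics

theorem induced_star_between_sets_general (p : ℝ) (hp0 : 0 < p) (hp1 : p < 1) :
    Tendsto (fun n : ℕ => erMeasure n p {ω | ∀ A B : Finset (Fin n), Disjoint A B →
      A.card = partSize n → B.card = partSize n →
        HasInducedStar (graphOf ω) A B (leafCount (1 / (1 - p)) n)}) atTop (nhds 1) := by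
  have hb : 1 < 1 / (1 - p) := one_lt_one_div (sub_pos.mpr hp1) (sub_lt_self 1 hp0)
  rw [← ENNReal.tendsto_toReal_iff (fun _ => measure_ne_top _ _) ENNReal.one_ne_top]
  have hbound := tendsto_four_pow_mul_exp.const_sub 1
  rw [sub_zero] at hbound
  refine tendsto_of_tendsto_of_tendsto_of_le_of_le' hbound tendsto_const_nhds ?_
    (.of_forall fun n => measureReal_le_one)
  filter_upwards [eventually_two_le_leafCount hb, eventually_leafCount_le_halfMeanDegree hb hp0,
    eventually_partSize_mul_halfMeanDegree_add_le hp0,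
    eventually_rpow_mul_overlapSum_le_one hb hp0] with n hk hkm hdense hoverlap
  exact le_erMeasure_real_forall_hasInducedStar hp0.le hp1 hk hkm (by positivity) hdense hoverlap

/-- For fixed `p ∈ (0,1)` and
`a = ⌊2·log_{1/(1−p)} n − 8·log_{1/(1−p)} ln n⌋`, whp: for all disjoint sets
`A ⊆ N(1)` and `B ⊆ [n]∖{1}` of size `⌊n/ln² n⌋` each, there is an induced copy
of `K_{1,a−1}` with center in `A` and all leaves in `B`.
(Vertex `1` is `⟨0, _⟩ : Fin n`.) -/
theorem induced_star_between_sets (p : ℝ) (hp0 : 0 < p) (hp1 : p < 1) :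
    Tendsto (fun n : ℕ =>
      erMeasure n p {ω | ∀ hn : 0 < n,
        ∀ A B : Finset (Fin n), Disjoint A B →
          (∀ x ∈ A, (graphOf ω).Adj ⟨0, hn⟩ x) →
          (⟨0, hn⟩ : Fin n) ∉ B →
          A.card = ⌊(n : ℝ) / (Real.log n) ^ 2⌋₊ →
          B.card = ⌊(n : ℝ) / (Real.log n) ^ 2⌋₊ →
          ∃ z ∈ A, ∃ L ⊆ B,
            L.card = ⌊2 * Real.logb (1 / (1 - p)) n
                        - 8 * Real.logb (1 / (1 - p)) (Real.log n)⌋₊ - 1 ∧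
            (∀ x ∈ L, (graphOf ω).Adj z x) ∧
            ((L : Set (Fin n)).Pairwise fun x y => ¬ (graphOf ω).Adj x y)})
      atTop (nhds 1) :=
  tendsto_of_tendsto_of_tendsto_of_le_of_le (induced_star_between_sets_general p hp0 hp1)
    tendsto_const_nhds
    (fun _ => measure_mono fun _ hω _ A B hAB _ _ hA hB => hω A B hAB hA hB)
    fun _ => prob_le_one
end

section
/- Let Γ be a graph on the vertex set [n] containing a spanning r-flower A (with associated sets V^1,…,V^{r+1}). Then A is C_4-saturated in Γ, and |E(A)| = |E(A[V^{r+1}])| + (3/2)·(n − |V^{r+1}| − r) + 3·(|V^2| + … + |V^{r+1}|). -/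
open MeasureTheory Filter Real

/-- The edges of `A` with one endpoint in `S` and the other in `T` form a perfect
matching between `S` and `T`. -/
def MatchingBetween {α : Type*} (A : SimpleGraph α) (S T : Set α) : Prop :=
  (∀ x ∈ S, ∃! y, y ∈ T ∧ A.Adj x y) ∧ (∀ y ∈ T, ∃! x, x ∈ S ∧ A.Adj x y)

/-- The edges of `A` inside `S` form a perfect matching on `S`. -/
def MatchingOn {α : Type*} (A : SimpleGraph α) (S : Set α) : Prop :=
  ∀ x ∈ S, ∃! y, y ∈ S ∧ A.Adj x y

/-- The number of edges of `A` with both endpoints in `S`. -/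
noncomputable def edgeCountIn {α : Type*} (A : SimpleGraph α) (S : Set α) : ℕ :=
  {e ∈ A.edgeSet | ∀ x ∈ e, x ∈ S}.ncard

/-- `A[S]` is an inclusion-maximal `C₄`-free graph. -/
def MaxC4FreeOn {α : Type*} (A : SimpleGraph α) (S : Set α) : Prop :=
  ¬ ContainsCopy (cycGraph 4) (A.induce S) ∧
  ∀ x y : S, x ≠ y → ¬ (A.induce S).Adj x y →
    ContainsCopy (cycGraph 4) ((A.induce S) ⊔ SimpleGraph.fromEdgeSet {s(x, y)})

/-- `A` is an `r`-flower with associated sets `V 1 ⊇ … ⊇ V (r+1)`: there are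
vertices `v i j`, triangles `R i = {v i 0, v i 1, v i 2}`, sets
`VP i j = N_{A[Vⁱ]}(v i j) ∖ R i` partitioned as `W i j ⊔ U i j ⊔ Y i j`, so that
each `Vⁱ` (for `i ∈ [r]`) is the disjoint union of `V (i+1)`, `R i` and the
`VP i j`, `V 1 = [n]`, the matching conditions (4.1)–(4.3) hold, `A[V^{r+1}]` is a
maximal `C₄`-free graph, and `A` has no other edges. -/
def IsRFlower {n : ℕ} (A : SimpleGraph (Fin n)) (r : ℕ) (V : ℕ → Set (Fin n)) : Prop :=
  ∃ (v : ℕ → Fin 3 → Fin n) (R : ℕ → Set (Fin n))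
    (VP W U Y : ℕ → Fin 3 → Set (Fin n)),
    -- (1) the decomposition
    V 1 = Set.univ ∧
    (∀ i, 1 ≤ i → i ≤ r →
      V i = V (i + 1) ∪ R i ∪ VP i 0 ∪ VP i 1 ∪ VP i 2 ∧
      (Set.univ : Set (Fin 5)).PairwiseDisjoint
        ![V (i + 1), R i, VP i 0, VP i 1, VP i 2]) ∧
    -- (2) the triangles
    (∀ i, 1 ≤ i → i ≤ r →
      R i = {v i 0, v i 1, v i 2} ∧
      ∀ j k : Fin 3, j ≠ k → A.Adj (v i j) (v i k)) ∧
    -- (3) the petals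
    (∀ i, 1 ≤ i → i ≤ r → ∀ j : Fin 3,
      VP i j = {x ∈ V i | A.Adj (v i j) x} \ R i) ∧
    -- (4) the partitions and matchings
    (∀ i, 1 ≤ i → i ≤ r → ∀ j : Fin 3,
      VP i j = W i j ∪ U i j ∪ Y i j ∧
      Disjoint (W i j) (U i j) ∧ Disjoint (W i j) (Y i j) ∧
      Disjoint (U i j) (Y i j) ∧
      MatchingBetween A (W i j) (V (i + 1)) ∧
      MatchingBetween A (W i j) (U i j) ∧
      MatchingOn A (Y i j)) ∧
    -- (5) the core
    MaxC4FreeOn A (V (r + 1)) ∧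
    -- (6) no other edges
    (∀ x y : Fin n, A.Adj x y →
      (x ∈ V (r + 1) ∧ y ∈ V (r + 1)) ∨
      ∃ i, 1 ≤ i ∧ i ≤ r ∧
        ((x ∈ R i ∧ y ∈ R i) ∨
         ∃ j : Fin 3,
           (x = v i j ∧ y ∈ VP i j) ∨ (y = v i j ∧ x ∈ VP i j) ∨
           (x ∈ W i j ∧ y ∈ V (i + 1)) ∨ (y ∈ W i j ∧ x ∈ V (i + 1)) ∨
           (x ∈ W i j ∧ y ∈ U i j) ∨ (y ∈ W i j ∧ x ∈ U i j) ∨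
           (x ∈ Y i j ∧ y ∈ Y i j)))

/-!
Consider a single layer `P = Vⁱ` with core `S = Vⁱ⁺¹`, and suppose that `A[S]` is maximal
`C₄`-free. Each vertex of a petal has a unique neighbour in its own petal, so any two vertices of
`P` that do not both lie in `S` have at most one common neighbour in `P`. Conversely, two
nonadjacent vertices of `P` that do not both lie in `S` are joined by a walk of length three in
`A[P]` that passes through the triangle, so that adding the edge between them closes a `4`-cycle.
Hence `A[P]` is maximal `C₄`-free too, and a downward induction reaches `V¹ = [n]`.

For the edge count, a core vertex sends one edge to each of the three petals, while a petal vertex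
is adjacent to exactly one vertex of the triangle and to exactly one vertex of the petals. With
`q = |P| - |S| - 3` petal vertices this gives `e(P) = e(S) + 3 + 3|S| + (3/2)q`, and these
identities telescope.
-/

section FourCycles

variable {β : Type*} {H : SimpleGraph β}

lemma containsCopy_cycGraph_iff {m : ℕ} (hm : m ≠ 1) :
    ContainsCopy (cycGraph m) H ↔
      ∃ f : ZMod m → β, Function.Injective f ∧ ∀ i, H.Adj (f i) (f (i + 1)) := by
  have := ZMod.nontrivial_iff.2 hm
  constructor
  · rintro ⟨f, hf, hadj⟩
    exact ⟨f, hf, fun i => hadj (by simp [cycGraph])⟩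
  · rintro ⟨f, hf, hadj⟩
    refine ⟨f, hf, fun i j hij => ?_⟩
    obtain ⟨-, rfl | rfl⟩ := (SimpleGraph.fromRel_adj _ _ _).1 hij
    · exact (hadj j).symm
    · exact hadj i

lemma containsCopy_cycGraph_four_iff :
    ContainsCopy (cycGraph 4) H ↔ ∃ a b, a ≠ b ∧ (H.commonNeighbors a b).Nontrivial := by
  rw [containsCopy_cycGraph_iff (by decide)]
  constructor
  · rintro ⟨f, hf, hadj⟩
    exact ⟨f 0, f 2, hf.ne (by decide), f 1, ⟨hadj 0, (hadj 1).symm⟩,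
      f 3, ⟨(hadj 3).symm, hadj 2⟩, hf.ne (by decide)⟩
  · rintro ⟨a, b, hab, x, ⟨hax, hbx⟩, y, ⟨hay, hby⟩, hxy⟩
    refine ⟨(![a, x, b, y] : Fin 4 → β), ?_, ?_⟩
    · change Function.Injective (![a, x, b, y] : Fin 4 → β)
      simp [← List.nodup_ofFn, hab, hxy, hax.ne, hbx.ne', hay.ne, hby.ne]
    · change ∀ i : Fin 4, H.Adj (![a, x, b, y] i) (![a, x, b, y] (i + 1))
      simpa [Fin.forall_fin_succ] using ⟨hax, hbx.symm, hby, hay.symm⟩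

lemma containsCopy_cycGraph_four_sup_edge_iff {x y : β} (hfree : ¬ ContainsCopy (cycGraph 4) H)
    (hne : x ≠ y) (hxy : ¬ H.Adj x y) :
    ContainsCopy (cycGraph 4) (H ⊔ SimpleGraph.fromEdgeSet {s(x, y)}) ↔
      ∃ a b, H.Adj x a ∧ H.Adj a b ∧ H.Adj b y := by
  constructor
  · rw [containsCopy_cycGraph_iff (by decide)] at hfree ⊢
    rintro ⟨f, hf, hadj⟩
    obtain ⟨i, hi⟩ : ∃ i, ¬ H.Adj (f i) (f (i + 1)) := by
      by_contra! hall
      exact hfree ⟨f, hf, hall⟩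
    have new_of_not_adj (k : ZMod 4) (hk : ¬ H.Adj (f k) (f (k + 1))) :
        s(f k, f (k + 1)) = s(x, y) := ((hadj k).resolve_left hk).1
    have edge_injective : ∀ k l : ZMod 4, s(k, k + 1) = s(l, l + 1) → k = l := by decide
    have old_of_ne (k : ZMod 4) (hk : k ≠ i) : H.Adj (f k) (f (k + 1)) := by
      by_contra hk'
      exact hk <| edge_injective k i <| Sym2.map.injective hf <|
        (new_of_not_adj k hk').trans (new_of_not_adj i hi).symm
    have cyclic : ∀ k : ZMod 4, k + 1 ≠ k ∧ k + 1 + 1 ≠ k ∧ k + 1 + 1 + 1 ≠ k ∧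
        k + 1 + 1 + 1 + 1 = k := by decide
    obtain ⟨hne₁, hne₂, hne₃, hi₄⟩ := cyclic i
    have h₁ := old_of_ne _ hne₁
    have h₂ := old_of_ne _ hne₂
    have h₃ := hi₄ ▸ old_of_ne _ hne₃
    rcases Sym2.eq_iff.1 (new_of_not_adj i hi) with ⟨rfl, rfl⟩ | ⟨rfl, rfl⟩
    · exact ⟨_, _, h₃.symm, h₂.symm, h₁.symm⟩
    · exact ⟨_, _, h₁, h₂, h₃⟩
  · rintro ⟨a, b, hxa, hab, hby⟩
    refine containsCopy_cycGraph_four_iff.2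
      ⟨x, b, ?_, a, ⟨.inl hxa, .inl hab.symm⟩, y, ⟨.inr ⟨rfl, hne⟩, .inl hby⟩, ?_⟩
    · rintro rfl
      exact hxy hby
    · rintro rfl
      exact hxy hxa

end FourCycles

section MaxC4Free

variable {α : Type*} {A : SimpleGraph α} {S : Set α}

/-- The induced subgraph `A[S]` has no `4`-cycle, phrased through common neighbours. -/
def C4FreeOn (A : SimpleGraph α) (S : Set α) : Prop :=
  S.Pairwise fun a b => (A.commonNeighbors a b ∩ S).Subsingleton

/-- The vertices `x` and `y` are joined by a walk of length three in `A` whose inner vertices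
lie in `S`. For distinct nonadjacent `x` and `y` in `S`, this says that adding the edge `xy` to
`A[S]` closes a `4`-cycle. -/
def ThreeWalkOn (A : SimpleGraph α) (S : Set α) (x y : α) : Prop :=
  ∃ a ∈ S, ∃ b ∈ S, A.Adj x a ∧ A.Adj a b ∧ A.Adj b y

lemma ThreeWalkOn.symm {x y : α} : ThreeWalkOn A S x y → ThreeWalkOn A S y x := by
  rintro ⟨a, ha, b, hb, hxa, hab, hby⟩
  exact ⟨b, hb, a, ha, hby.symm, hab.symm, hxa.symm⟩

lemma not_containsCopy_induce_iff_c4FreeOn :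
    ¬ ContainsCopy (cycGraph 4) (A.induce S) ↔ C4FreeOn A S := by
  simp only [containsCopy_cycGraph_four_iff, C4FreeOn, Set.Pairwise, Set.Subsingleton,
    Set.Nontrivial, SimpleGraph.mem_commonNeighbors, Set.mem_inter_iff, SimpleGraph.comap_adj,
    Subtype.exists, ne_eq, Subtype.mk.injEq, Function.Embedding.subtype_apply]
  grind

lemma maxC4FreeOn_iff :
    MaxC4FreeOn A S ↔
      C4FreeOn A S ∧ S.Pairwise fun x y => ¬ A.Adj x y → ThreeWalkOn A S x y := by
  rw [MaxC4FreeOn, ← not_containsCopy_induce_iff_c4FreeOn]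
  refine and_congr_right fun hfree => ⟨fun h x hx y hy hne hxy => ?_, fun h x y hne hxy => ?_⟩
  · have hne' : (⟨x, hx⟩ : S) ≠ ⟨y, hy⟩ := by simpa using hne
    obtain ⟨a, b, hxa, hab, hby⟩ :=
      (containsCopy_cycGraph_four_sup_edge_iff hfree hne' hxy).1 (h _ _ hne' hxy)
    exact ⟨a, a.2, b, b.2, hxa, hab, hby⟩
  · obtain ⟨a, ha, b, hb, hxa, hab, hby⟩ := h x.2 y.2 (Subtype.coe_ne_coe.2 hne) hxy
    exact (containsCopy_cycGraph_four_sup_edge_iff hfree hne hxy).2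
      ⟨⟨a, ha⟩, ⟨b, hb⟩, hxa, hab, hby⟩

lemma MaxC4FreeOn.isSaturatedIn {G : SimpleGraph α} (h : MaxC4FreeOn A Set.univ) (hAG : A ≤ G) :
    IsSaturatedIn G A (cycGraph 4) := by
  obtain ⟨hfree, hwalk⟩ := maxC4FreeOn_iff.1 h
  have hcopy : ¬ ContainsCopy (cycGraph 4) A := by
    simpa [containsCopy_cycGraph_four_iff, C4FreeOn, Set.Pairwise] using hfree
  refine ⟨hAG, hcopy, fun x y hG hxy => ?_⟩
  obtain ⟨a, -, b, -, hpath⟩ := hwalk (Set.mem_univ x) (Set.mem_univ y) hG.ne hxy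
  exact (containsCopy_cycGraph_four_sup_edge_iff hcopy hG.ne hxy).2 ⟨a, b, hpath⟩

end MaxC4Free

section Darts

variable {α : Type*} {A : SimpleGraph α} {S S' T T' : Set α}

/-- The darts of `A` from `S` to `T`, as ordered pairs; a version of `SimpleGraph.interedges` for
sets. An edge with both endpoints in `S ∩ T` is counted in both directions. -/
def dartsBetween (A : SimpleGraph α) (S T : Set α) : Set (α × α) :=
  {p ∈ S ×ˢ T | A.Adj p.1 p.2}

lemma ncard_dartsBetween_comm (A : SimpleGraph α) (S T : Set α) :
    (dartsBetween A S T).ncard = (dartsBetween A T S).ncard := by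
  rw [← Set.ncard_image_of_injective _ Prod.swap_injective, Set.image_swap_eq_preimage_swap]
  congr 1
  ext ⟨x, y⟩
  simp [dartsBetween, A.adj_comm, and_comm]

lemma ncard_dartsBetween_eq_mul [Finite α] {k : ℕ}
    (hk : ∀ x ∈ S, (A.neighborSet x ∩ T).ncard = k) :
    (dartsBetween A S T).ncard = S.ncard * k := by
  have := Fintype.ofFinite S
  let e : dartsBetween A S T ≃ Σ x : S, ↥(A.neighborSet x ∩ T) :=
    { toFun p := ⟨⟨p.1.1, p.2.1.1⟩, ⟨p.1.2, p.2.2, p.2.1.2⟩⟩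
      invFun q := ⟨(q.1, q.2), ⟨q.1.2, q.2.2.2⟩, q.2.2.1⟩ }
  rw [← Nat.card_coe_set_eq, Nat.card_congr e, Nat.card_sigma,
    Finset.sum_congr rfl fun (x : S) _ => (Nat.card_coe_set_eq _).trans (hk x x.2)]
  simp

lemma ncard_dartsBetween_union_left [Finite α] (h : Disjoint S S') :
    (dartsBetween A (S ∪ S') T).ncard =
      (dartsBetween A S T).ncard + (dartsBetween A S' T).ncard := by
  rw [← Set.ncard_union_eq]
  · congr 1
    ext p
    simp only [dartsBetween, Set.mem_prod, Set.mem_union, Set.mem_ofPred_eq]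
    tauto
  · exact Set.disjoint_left.2 fun p hp hp' => Set.disjoint_left.1 h hp.1.1 hp'.1.1

lemma ncard_dartsBetween_union_right [Finite α] (h : Disjoint T T') :
    (dartsBetween A S (T ∪ T')).ncard =
      (dartsBetween A S T).ncard + (dartsBetween A S T').ncard := by
  simp only [ncard_dartsBetween_comm A S, ncard_dartsBetween_union_left h]

lemma ncard_dartsBetween_union_self [Finite α] (h : Disjoint S T) :
    (dartsBetween A (S ∪ T) (S ∪ T)).ncard =
      (dartsBetween A S S).ncard + (dartsBetween A T T).ncard +
        2 * (dartsBetween A S T).ncard := by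
  rw [ncard_dartsBetween_union_left h, ncard_dartsBetween_union_right h,
    ncard_dartsBetween_union_right h, ncard_dartsBetween_comm A T S]
  ring

lemma ncard_dartsBetween_self [Finite α] (A : SimpleGraph α) (S : Set α) :
    (dartsBetween A S S).ncard = 2 * edgeCountIn A S := by
  classical
  have := Fintype.ofFinite α
  let B := (A.induce S).spanningCoe
  have hB : ∀ x y, B.Adj x y ↔ (x ∈ S ∧ y ∈ S) ∧ A.Adj x y := by
    intro x y
    simp [B]
    tauto
  have hedge : {e ∈ A.edgeSet | ∀ x ∈ e, x ∈ S} = B.edgeSet := by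
    ext ⟨x, y⟩
    simp [hB, and_comm]
  let e : B.Dart ≃ dartsBetween A S S :=
    { toFun d := ⟨d.toProd, (hB _ _).1 d.adj⟩
      invFun p := ⟨p.1, (hB _ _).2 p.2⟩ }
  rw [edgeCountIn, hedge, ← SimpleGraph.coe_edgeFinset, Set.ncard_coe_finset,
    ← B.dart_card_eq_twice_card_edges, ← Nat.card_coe_set_eq, ← Nat.card_congr e,
    Nat.card_eq_fintype_card]

end Darts

section Matchings

variable {α : Type*} {A : SimpleGraph α} {S T : Set α} {x y z : α}

lemma MatchingOn.eq_of_adj (h : MatchingOn A S) (hx : x ∈ S) (hy : y ∈ S) (hz : z ∈ S)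
    (hxy : A.Adj x y) (hxz : A.Adj x z) : y = z :=
  (h x hx).unique ⟨hy, hxy⟩ ⟨hz, hxz⟩

lemma MatchingBetween.eq_right_of_adj (h : MatchingBetween A S T) (hx : x ∈ S) (hy : y ∈ T)
    (hz : z ∈ T) (hxy : A.Adj x y) (hxz : A.Adj x z) : y = z :=
  (h.1 x hx).unique ⟨hy, hxy⟩ ⟨hz, hxz⟩

lemma MatchingBetween.eq_left_of_adj (h : MatchingBetween A S T) (hx : x ∈ T) (hy : y ∈ S)
    (hz : z ∈ S) (hyx : A.Adj y x) (hzx : A.Adj z x) : y = z :=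
  (h.2 x hx).unique ⟨hy, hyx⟩ ⟨hz, hzx⟩

lemma MatchingBetween.matchingOn_union (h : MatchingBetween A S T) (hS : A.IsIndepSet S)
    (hT : A.IsIndepSet T) : MatchingOn A (S ∪ T) := by
  rintro x (hx | hx)
  · obtain ⟨y, ⟨hy, hxy⟩, hunique⟩ := h.1 x hx
    refine ⟨y, ⟨.inr hy, hxy⟩, ?_⟩
    rintro z ⟨hz | hz, hxz⟩
    · exact absurd hxz (hS hx hz hxz.ne)
    · exact hunique z ⟨hz, hxz⟩
  · obtain ⟨y, ⟨hy, hyx⟩, hunique⟩ := h.2 x hx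
    refine ⟨y, ⟨.inl hy, hyx.symm⟩, ?_⟩
    rintro z ⟨hz | hz, hxz⟩
    · exact hunique z ⟨hz, hxz.symm⟩
    · exact absurd hxz (hT hx hz hxz.ne)

lemma MatchingOn.union (hS : MatchingOn A S) (hT : MatchingOn A T)
    (hST : ∀ x ∈ S, ∀ y ∈ T, ¬ A.Adj x y) : MatchingOn A (S ∪ T) := by
  rintro x (hx | hx)
  · obtain ⟨y, ⟨hy, hxy⟩, hunique⟩ := hS x hx
    refine ⟨y, ⟨.inl hy, hxy⟩, ?_⟩
    rintro z ⟨hz | hz, hxz⟩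
    · exact hunique z ⟨hz, hxz⟩
    · exact absurd hxz (hST x hx z hz)
  · obtain ⟨y, ⟨hy, hxy⟩, hunique⟩ := hT x hx
    refine ⟨y, ⟨.inr hy, hxy⟩, ?_⟩
    rintro z ⟨hz | hz, hxz⟩
    · exact absurd hxz.symm (hST z hz x hx)
    · exact hunique z ⟨hz, hxz⟩

end Matchings

section Layer

variable {α : Type*} {A : SimpleGraph α} {P S : Set α} {v : Fin 3 → α} {Q W : Fin 3 → Set α}

/-- The set `P` is the disjoint union of a core `S`, the vertices `v j` of a triangle of `A`, and
the petals `Q j`, where `Q j` is the neighbourhood of `v j` in `A[P]` outside the triangle. -/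
structure IsPetalDecomposition (A : SimpleGraph α) (P S : Set α) (v : Fin 3 → α)
    (Q : Fin 3 → Set α) : Prop where
  eq_union : P = S ∪ Set.range v ∪ ⋃ j, Q j
  disjoint_core_centers : Disjoint S (Set.range v)
  disjoint_core_petal : ∀ j, Disjoint S (Q j)
  disjoint_petals : Pairwise fun j k => Disjoint (Q j) (Q k)
  adj_centers : Pairwise fun j k => A.Adj (v j) (v k)
  petal_eq : ∀ j, Q j = {x ∈ P | A.Adj (v j) x} \ Set.range v

/-- One layer of a flower. The set `W j` is the part of the petal `Q j` that is matched to the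
core; the matchings between `W j` and `U j` and inside `Y j` are merged into one perfect matching
on `Q j`, in which no edge joins two vertices of `W j`. -/
structure IsFlowerLayer (A : SimpleGraph α) (P S : Set α) (v : Fin 3 → α)
    (Q W : Fin 3 → Set α) : Prop extends IsPetalDecomposition A P S v Q where
  subset_petal : ∀ j, W j ⊆ Q j
  isIndepSet : ∀ j, A.IsIndepSet (W j)
  matchingBetween : ∀ j, MatchingBetween A (W j) S
  matchingOn : ∀ j, MatchingOn A (Q j)
  adj_petal : ∀ ⦃j x y⦄, x ∈ Q j → y ∈ P → A.Adj x y → y = v j ∨ y ∈ Q j ∨ (x ∈ W j ∧ y ∈ S)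

namespace IsPetalDecomposition

lemma mem_iff (h : IsPetalDecomposition A P S v Q) {x : α} :
    x ∈ P ↔ x ∈ S ∨ (∃ j, v j = x) ∨ ∃ j, x ∈ Q j := by
  simp [h.eq_union, or_assoc]

lemma core_subset (h : IsPetalDecomposition A P S v Q) : S ⊆ P :=
  fun _ hx => h.mem_iff.2 (.inl hx)

lemma center_mem (h : IsPetalDecomposition A P S v Q) (j : Fin 3) : v j ∈ P :=
  h.mem_iff.2 (.inr (.inl ⟨j, rfl⟩))

lemma petal_subset (h : IsPetalDecomposition A P S v Q) (j : Fin 3) : Q j ⊆ P :=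
  fun _ hx => h.mem_iff.2 (.inr (.inr ⟨j, hx⟩))

lemma mem_petal_iff (h : IsPetalDecomposition A P S v Q) {j : Fin 3} {x : α} :
    x ∈ Q j ↔ (x ∈ P ∧ A.Adj (v j) x) ∧ ∀ k, v k ≠ x := by
  conv_lhs => rw [h.petal_eq j]
  simp

lemma adj_center (h : IsPetalDecomposition A P S v Q) {j : Fin 3} {x : α} (hx : x ∈ Q j) :
    A.Adj (v j) x :=
  (h.mem_petal_iff.1 hx).1.2

lemma center_notMem_petal (h : IsPetalDecomposition A P S v Q) (j k : Fin 3) : v j ∉ Q k :=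
  fun hj => (h.mem_petal_iff.1 hj).2 j rfl

lemma center_notMem_core (h : IsPetalDecomposition A P S v Q) (j : Fin 3) : v j ∉ S :=
  fun hj => h.disjoint_core_centers.notMem_of_mem_left hj ⟨j, rfl⟩

lemma petal_notMem_core (h : IsPetalDecomposition A P S v Q) {j : Fin 3} {x : α} (hx : x ∈ Q j) :
    x ∉ S :=
  (h.disjoint_core_petal j).notMem_of_mem_right hx

lemma center_injective (h : IsPetalDecomposition A P S v Q) : Function.Injective v :=
  fun _ _ hjk => by_contra fun hne => (h.adj_centers hne).ne hjk

lemma petal_index_unique (h : IsPetalDecomposition A P S v Q) {j k : Fin 3} {x : α}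
    (hj : x ∈ Q j) (hk : x ∈ Q k) : j = k :=
  h.disjoint_petals.eq fun hd => hd.notMem_of_mem_left hj hk

lemma eq_center_or_mem_petal_of_adj (h : IsPetalDecomposition A P S v Q) {j : Fin 3} {y : α}
    (hy : y ∈ P) (hadj : A.Adj (v j) y) : (∃ k, k ≠ j ∧ v k = y) ∨ y ∈ Q j := by
  refine or_iff_not_imp_right.2 fun hQ => ?_
  by_contra! hne
  refine hQ (h.mem_petal_iff.2 ⟨⟨hy, hadj⟩, fun k hk => ?_⟩)
  exact hne k (fun hkj => hadj.ne (hkj ▸ hk)) hk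

lemma not_adj_core_center (h : IsPetalDecomposition A P S v Q) {s : α} (hs : s ∈ S) (j : Fin 3) :
    ¬ A.Adj s (v j) := by
  intro hadj
  rcases h.eq_center_or_mem_petal_of_adj (h.core_subset hs) hadj.symm with ⟨k, -, rfl⟩ | hQ
  · exact h.center_notMem_core k hs
  · exact h.petal_notMem_core hQ hs

lemma adj_petal_center_iff (h : IsPetalDecomposition A P S v Q) {j k : Fin 3} {x : α}
    (hx : x ∈ Q j) : A.Adj x (v k) ↔ k = j := by
  refine ⟨fun hadj => ?_, fun hk => hk ▸ (h.adj_center hx).symm⟩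
  exact h.petal_index_unique (h.mem_petal_iff.2 ⟨⟨h.petal_subset j hx, hadj.symm⟩,
    (h.mem_petal_iff.1 hx).2⟩) hx

lemma pairwise_of_symm (h : IsPetalDecomposition A P S v Q) {ρ : α → α → Prop} [Std.Symm ρ]
    (core : S.Pairwise ρ) (core_center : ∀ s ∈ S, ∀ j, ρ s (v j))
    (core_petal : ∀ s ∈ S, ∀ j, ∀ x ∈ Q j, ρ s x) (centers : ∀ j k, j ≠ k → ρ (v j) (v k))
    (center_petal : ∀ j k, ∀ x ∈ Q k, ρ (v j) x)
    (petals : ∀ j, ∀ x ∈ Q j, ∀ k, ∀ y ∈ Q k, x ≠ y → ρ x y) : P.Pairwise ρ := by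
  have symm {x y} : ρ x y → ρ y x := Std.Symm.symm x y
  intro x hx y hy hne
  rcases h.mem_iff.1 hx with hxS | ⟨j, rfl⟩ | ⟨j, hxj⟩ <;>
    rcases h.mem_iff.1 hy with hyS | ⟨k, rfl⟩ | ⟨k, hyk⟩
  · exact core hxS hyS hne
  · exact core_center x hxS k
  · exact core_petal x hxS k y hyk
  · exact symm (core_center y hyS j)
  · exact centers j k fun hjk => hne (congrArg v hjk)
  · exact center_petal j k y hyk
  · exact symm (core_petal y hyS j x hxj)
  · exact symm (center_petal k j x hxj)
  · exact petals j x hxj k y hyk hne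

lemma subsingleton_commonNeighbors_centers (h : IsPetalDecomposition A P S v Q) {j k : Fin 3}
    (hjk : j ≠ k) : (A.commonNeighbors (v j) (v k) ∩ P).Subsingleton := by
  have eq_center : ∀ z ∈ A.commonNeighbors (v j) (v k) ∩ P, ∃ l, l ≠ j ∧ l ≠ k ∧ v l = z := by
    rintro z ⟨⟨hjz, hkz⟩, hz⟩
    rcases h.eq_center_or_mem_petal_of_adj hz hjz with ⟨l, hlj, rfl⟩ | hzQ
    · exact ⟨l, hlj, fun hlk => hkz.ne (congrArg v hlk.symm), rfl⟩
    · exact absurd ((h.adj_petal_center_iff hzQ).1 hkz.symm).symm hjk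
  intro z hz z' hz'
  obtain ⟨l, hlj, hlk, rfl⟩ := eq_center z hz
  obtain ⟨l', hlj', hlk', rfl⟩ := eq_center z' hz'
  exact congrArg v (by omega)

lemma threeWalkOn_center_petal (h : IsPetalDecomposition A P S v Q) (j : Fin 3) {k : Fin 3}
    {x : α} (hx : x ∈ Q k) : ThreeWalkOn A P (v j) x := by
  have exists_third : ∀ j k : Fin 3, ∃ l, l ≠ j ∧ l ≠ k := by decide
  obtain ⟨l, hlj, hlk⟩ := exists_third j k
  exact ⟨v l, h.center_mem l, v k, h.center_mem k, h.adj_centers hlj.symm, h.adj_centers hlk,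
    h.adj_center hx⟩

lemma ncard_neighborSet_center_inter_centers (h : IsPetalDecomposition A P S v Q) (j : Fin 3) :
    (A.neighborSet (v j) ∩ Set.range v).ncard = 2 := by
  have : A.neighborSet (v j) ∩ Set.range v = v '' {j}ᶜ := by
    ext x
    constructor
    · rintro ⟨hadj, k, rfl⟩
      exact ⟨k, fun hkj => hadj.ne (congrArg v hkj.symm), rfl⟩
    · rintro ⟨k, hkj, rfl⟩
      exact ⟨h.adj_centers (Ne.symm hkj), k, rfl⟩
  rw [this, Set.ncard_image_of_injective _ h.center_injective, Set.ncard_compl]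
  simp

lemma neighborSet_core_inter_centers (h : IsPetalDecomposition A P S v Q) {s : α} (hs : s ∈ S) :
    A.neighborSet s ∩ Set.range v = ∅ := by
  rw [Set.eq_empty_iff_forall_notMem]
  rintro _ ⟨hadj, j, rfl⟩
  exact h.not_adj_core_center hs j hadj

lemma neighborSet_petal_inter_centers (h : IsPetalDecomposition A P S v Q) {x : α} {j : Fin 3}
    (hx : x ∈ Q j) : A.neighborSet x ∩ Set.range v = {v j} := by
  ext y
  constructor
  · rintro ⟨hadj, k, rfl⟩
    exact congrArg v ((h.adj_petal_center_iff hx).1 hadj)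
  · rintro rfl
    exact ⟨(h.adj_center hx).symm, j, rfl⟩

lemma disjoint_core_petals (h : IsPetalDecomposition A P S v Q) : Disjoint S (⋃ j, Q j) :=
  Set.disjoint_iUnion_right.2 h.disjoint_core_petal

lemma disjoint_centers_petals (h : IsPetalDecomposition A P S v Q) :
    Disjoint (Set.range v) (⋃ j, Q j) := by
  simp [Set.disjoint_left, h.center_notMem_petal]

lemma ncard_centers (h : IsPetalDecomposition A P S v Q) : (Set.range v).ncard = 3 := by
  rw [Set.ncard_range_of_injective h.center_injective, Nat.card_fin]

lemma ncard_eq [Finite α] (h : IsPetalDecomposition A P S v Q) :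
    P.ncard = S.ncard + 3 + (⋃ j, Q j).ncard := by
  rw [h.eq_union,
    Set.ncard_union_eq (h.disjoint_core_petals.union_left h.disjoint_centers_petals),
    Set.ncard_union_eq h.disjoint_core_centers, h.ncard_centers]

lemma ncard_dartsBetween_self_eq [Finite α] (h : IsPetalDecomposition A P S v Q) :
    (dartsBetween A P P).ncard =
      (dartsBetween A S S).ncard + 6 + 2 * (⋃ j, Q j).ncard +
        2 * (dartsBetween A S (⋃ j, Q j)).ncard +
        (dartsBetween A (⋃ j, Q j) (⋃ j, Q j)).ncard := by
  have core_centers : (dartsBetween A S (Set.range v)).ncard = S.ncard * 0 :=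
    ncard_dartsBetween_eq_mul fun s hs => by
      rw [h.neighborSet_core_inter_centers hs, Set.ncard_empty]
  have centers : (dartsBetween A (Set.range v) (Set.range v)).ncard = (Set.range v).ncard * 2 :=
    ncard_dartsBetween_eq_mul <| Set.forall_mem_range.2 h.ncard_neighborSet_center_inter_centers
  have petals_centers :
      (dartsBetween A (⋃ j, Q j) (Set.range v)).ncard = (⋃ j, Q j).ncard * 1 :=
    ncard_dartsBetween_eq_mul fun x hx => by
      obtain ⟨j, hxQ⟩ := Set.mem_iUnion.1 hx
      rw [h.neighborSet_petal_inter_centers hxQ, Set.ncard_singleton]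
  rw [h.eq_union, ncard_dartsBetween_union_self
      (h.disjoint_core_petals.union_left h.disjoint_centers_petals),
    ncard_dartsBetween_union_self h.disjoint_core_centers,
    ncard_dartsBetween_union_left h.disjoint_core_centers,
    ncard_dartsBetween_comm A (Set.range v) (⋃ j, Q j), core_centers, centers, petals_centers,
    h.ncard_centers]
  ring

end IsPetalDecomposition

namespace IsFlowerLayer

lemma mem_W_of_adj_core (h : IsFlowerLayer A P S v Q W) {j : Fin 3} {s x : α} (hs : s ∈ S)
    (hx : x ∈ Q j) (hadj : A.Adj s x) : x ∈ W j := by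
  rcases h.adj_petal hx (h.core_subset hs) hadj.symm with rfl | hsQ | ⟨hxW, -⟩
  · exact absurd hs (h.center_notMem_core j)
  · exact absurd hs (h.petal_notMem_core hsQ)
  · exact hxW

lemma mem_core_or_mem_W_of_adj (h : IsFlowerLayer A P S v Q W) {s y : α} (hs : s ∈ S) (hy : y ∈ P)
    (hadj : A.Adj s y) : y ∈ S ∨ ∃ j, y ∈ W j := by
  rcases h.mem_iff.1 hy with hyS | ⟨j, rfl⟩ | ⟨j, hyQ⟩
  · exact .inl hyS
  · exact absurd hadj (h.not_adj_core_center hs j)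
  · exact .inr ⟨j, h.mem_W_of_adj_core hs hyQ hadj⟩

lemma petal_index_eq_of_adj (h : IsFlowerLayer A P S v Q W) {j k : Fin 3} {x y : α} (hx : x ∈ Q j)
    (hy : y ∈ Q k) (hadj : A.Adj x y) : j = k := by
  rcases h.adj_petal hx (h.petal_subset k hy) hadj with rfl | hyQ | ⟨-, hyS⟩
  · exact absurd hy (h.center_notMem_petal j k)
  · exact h.petal_index_unique hyQ hy
  · exact absurd hyS (h.petal_notMem_core hy)

lemma commonNeighbors_core_subset (h : IsFlowerLayer A P S v Q W) {s t : α} (hs : s ∈ S)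
    (ht : t ∈ S) (hne : s ≠ t) : A.commonNeighbors s t ∩ P ⊆ A.commonNeighbors s t ∩ S := by
  rintro z ⟨⟨hsz, htz⟩, hz⟩
  refine ⟨⟨hsz, htz⟩, (h.mem_core_or_mem_W_of_adj hs hz hsz).resolve_right ?_⟩
  rintro ⟨j, hzW⟩
  exact hne ((h.matchingBetween j).eq_right_of_adj hzW hs ht hsz.symm htz.symm)

lemma subsingleton_commonNeighbors_core_center (h : IsFlowerLayer A P S v Q W) {s : α} (hs : s ∈ S)
    (j : Fin 3) : (A.commonNeighbors s (v j) ∩ P).Subsingleton := by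
  have mem_W : ∀ z ∈ A.commonNeighbors s (v j) ∩ P, z ∈ W j := by
    rintro z ⟨⟨hsz, hjz⟩, hz⟩
    rcases h.eq_center_or_mem_petal_of_adj hz hjz with ⟨k, -, rfl⟩ | hzQ
    · exact absurd hsz (h.not_adj_core_center hs k)
    · exact h.mem_W_of_adj_core hs hzQ hsz
  exact fun z hz z' hz' => (h.matchingBetween j).eq_left_of_adj hs (mem_W z hz) (mem_W z' hz')
    hz.1.1.symm hz'.1.1.symm

lemma subsingleton_commonNeighbors_core_petal (h : IsFlowerLayer A P S v Q W) {s x : α} {j : Fin 3}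
    (hs : s ∈ S) (hx : x ∈ Q j) : (A.commonNeighbors s x ∩ P).Subsingleton := by
  have mem_W_or_mem_core : ∀ z ∈ A.commonNeighbors s x ∩ P, z ∈ W j ∨ (x ∈ W j ∧ z ∈ S) := by
    rintro z ⟨⟨hsz, hxz⟩, hz⟩
    rcases h.adj_petal hx hz hxz with rfl | hzQ | hxz
    · exact absurd hsz (h.not_adj_core_center hs j)
    · exact .inl (h.mem_W_of_adj_core hs hzQ hsz)
    · exact .inr hxz
  have not_both : ∀ z ∈ A.commonNeighbors s x, z ∈ W j → x ∉ W j :=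
    fun z hz hzW hxW => h.isIndepSet j hxW hzW hz.2.ne hz.2
  intro z hz z' hz'
  rcases mem_W_or_mem_core z hz with hW | ⟨hxW, hzS⟩ <;>
    rcases mem_W_or_mem_core z' hz' with hW' | ⟨hxW', hzS'⟩
  · exact (h.matchingBetween j).eq_left_of_adj hs hW hW' hz.1.1.symm hz'.1.1.symm
  · exact absurd hxW' (not_both z hz.1 hW)
  · exact absurd hxW (not_both z' hz'.1 hW')
  · exact (h.matchingBetween j).eq_right_of_adj hxW hzS hzS' hz.1.2 hz'.1.2

lemma subsingleton_commonNeighbors_center_petal (h : IsFlowerLayer A P S v Q W) (j : Fin 3)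
    {k : Fin 3} {x : α} (hx : x ∈ Q k) : (A.commonNeighbors (v j) x ∩ P).Subsingleton := by
  have eq_center_or_mem_petal : ∀ z ∈ A.commonNeighbors (v j) x ∩ P,
      (j ≠ k ∧ v k = z) ∨ (j = k ∧ z ∈ Q k) := by
    rintro z ⟨⟨hjz, hxz⟩, hz⟩
    rcases h.eq_center_or_mem_petal_of_adj hz hjz with ⟨l, hlj, rfl⟩ | hzQ
    · obtain rfl := (h.adj_petal_center_iff hx).1 hxz
      exact .inl ⟨hlj.symm, rfl⟩
    · obtain rfl := h.petal_index_eq_of_adj hx hzQ hxz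
      exact .inr ⟨rfl, hzQ⟩
  intro z hz z' hz'
  rcases eq_center_or_mem_petal z hz with ⟨hjk, rfl⟩ | ⟨hjk, hzQ⟩ <;>
    rcases eq_center_or_mem_petal z' hz' with ⟨hjk', rfl⟩ | ⟨hjk', hzQ'⟩
  · rfl
  · exact absurd hjk' hjk
  · exact absurd hjk hjk'
  · exact (h.matchingOn k).eq_of_adj hx hzQ hzQ' hz.1.2 hz'.1.2

lemma subsingleton_commonNeighbors_petals (h : IsFlowerLayer A P S v Q W) {j k : Fin 3} {x y : α}
    (hx : x ∈ Q j) (hy : y ∈ Q k) (hne : x ≠ y) :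
    (A.commonNeighbors x y ∩ P).Subsingleton := by
  rcases eq_or_ne j k with rfl | hjk
  · refine Set.subsingleton_of_forall_eq (v j) ?_
    rintro z ⟨⟨hxz, hyz⟩, hz⟩
    rcases h.adj_petal hx hz hxz with rfl | hzQ | ⟨hxW, hzS⟩
    · rfl
    · exact absurd ((h.matchingOn j).eq_of_adj hzQ hx hy hxz.symm hyz.symm) hne
    · exact absurd ((h.matchingBetween j).eq_left_of_adj hzS hxW
        (h.mem_W_of_adj_core hzS hy hyz.symm) hxz hyz) hne
  · have mem_W_and_mem_core : ∀ z ∈ A.commonNeighbors x y ∩ P, x ∈ W j ∧ z ∈ S := by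
      rintro z ⟨⟨hxz, hyz⟩, hz⟩
      rcases h.adj_petal hx hz hxz with rfl | hzQ | hxz
      · exact absurd ((h.adj_petal_center_iff hy).1 hyz) hjk
      · exact absurd (h.petal_index_eq_of_adj hzQ hy hyz.symm) hjk
      · exact hxz
    intro z hz z' hz'
    obtain ⟨hxW, hzS⟩ := mem_W_and_mem_core z hz
    exact (h.matchingBetween j).eq_right_of_adj hxW hzS (mem_W_and_mem_core z' hz').2
      hz.1.1 hz'.1.1

lemma c4FreeOn (h : IsFlowerLayer A P S v Q W) (hS : C4FreeOn A S) : C4FreeOn A P := by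
  have : Std.Symm fun x y => (A.commonNeighbors x y ∩ P).Subsingleton :=
    ⟨fun x y => by rw [A.commonNeighbors_symm]; exact id⟩
  exact h.pairwise_of_symm
    (fun s hs t ht hne => (hS hs ht hne).anti (h.commonNeighbors_core_subset hs ht hne))
    (fun s hs => h.subsingleton_commonNeighbors_core_center hs)
    (fun s hs j x hx => h.subsingleton_commonNeighbors_core_petal hs hx)
    (fun j k => h.subsingleton_commonNeighbors_centers)
    (fun j k x hx => h.subsingleton_commonNeighbors_center_petal j hx)
    (fun j x hx k y hy => h.subsingleton_commonNeighbors_petals hx hy)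

lemma threeWalkOn_core_center (h : IsFlowerLayer A P S v Q W) {s : α} (hs : s ∈ S) (j : Fin 3) :
    ThreeWalkOn A P s (v j) := by
  obtain ⟨k, hkj⟩ := exists_ne j
  obtain ⟨w, ⟨hwW, hws⟩, -⟩ := (h.matchingBetween k).2 s hs
  have hwQ := h.subset_petal k hwW
  exact ⟨w, h.petal_subset k hwQ, v k, h.center_mem k, hws.symm, (h.adj_center hwQ).symm,
    h.adj_centers hkj⟩

lemma threeWalkOn_core_petal (h : IsFlowerLayer A P S v Q W) {s x : α} {j : Fin 3}
    (hs : s ∈ S) (hx : x ∈ Q j) : ThreeWalkOn A P s x := by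
  obtain ⟨w, ⟨hwW, hws⟩, -⟩ := (h.matchingBetween j).2 s hs
  have hwQ := h.subset_petal j hwW
  exact ⟨w, h.petal_subset j hwQ, v j, h.center_mem j, hws.symm, (h.adj_center hwQ).symm,
    h.adj_center hx⟩

lemma threeWalkOn_petals (h : IsFlowerLayer A P S v Q W) {j k : Fin 3} {x y : α}
    (hx : x ∈ Q j) (hy : y ∈ Q k) : ThreeWalkOn A P x y := by
  rcases eq_or_ne j k with rfl | hjk
  · obtain ⟨z, ⟨hzQ, hxz⟩, -⟩ := h.matchingOn j x hx
    exact ⟨z, h.petal_subset j hzQ, v j, h.center_mem j, hxz, (h.adj_center hzQ).symm,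
      h.adj_center hy⟩
  · exact ⟨v j, h.center_mem j, v k, h.center_mem k, (h.adj_center hx).symm, h.adj_centers hjk,
      h.adj_center hy⟩

lemma maxC4FreeOn (h : IsFlowerLayer A P S v Q W) (hS : MaxC4FreeOn A S) : MaxC4FreeOn A P := by
  rw [maxC4FreeOn_iff] at hS ⊢
  obtain ⟨hfree, hwalk⟩ := hS
  have : Std.Symm fun x y => ¬ A.Adj x y → ThreeWalkOn A P x y :=
    ⟨fun x y hxy hyx => (hxy fun hadj => hyx hadj.symm).symm⟩
  refine ⟨h.c4FreeOn hfree, h.pairwise_of_symm ?core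
    (fun s hs j _ => h.threeWalkOn_core_center hs j)
    (fun s hs j x hx _ => h.threeWalkOn_core_petal hs hx)
    (fun j k hjk hadj => absurd (h.adj_centers hjk) hadj)
    (fun j k x hx _ => h.threeWalkOn_center_petal j hx)
    (fun j x hx k y hy _ _ => h.threeWalkOn_petals hx hy)⟩
  intro s hs t ht hne hadj
  obtain ⟨a, ha, b, hb, hwalk⟩ := hwalk hs ht hne hadj
  exact ⟨a, h.core_subset ha, b, h.core_subset hb, hwalk⟩

lemma ncard_neighborSet_petal_inter_petals (h : IsFlowerLayer A P S v Q W) {x : α}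
    (hx : x ∈ ⋃ j, Q j) : (A.neighborSet x ∩ ⋃ j, Q j).ncard = 1 := by
  obtain ⟨j, hxQ⟩ := Set.mem_iUnion.1 hx
  obtain ⟨y, ⟨hyQ, hxy⟩, hunique⟩ := h.matchingOn j x hxQ
  refine Set.ncard_eq_one.2 ⟨y, Set.eq_singleton_iff_unique_mem.2
    ⟨⟨hxy, Set.mem_iUnion_of_mem j hyQ⟩, ?_⟩⟩
  rintro z ⟨hxz, hz⟩
  obtain ⟨k, hzQ⟩ := Set.mem_iUnion.1 hz
  obtain rfl := h.petal_index_eq_of_adj hxQ hzQ hxz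
  exact hunique z ⟨hzQ, hxz⟩

lemma ncard_neighborSet_core_inter_petals (h : IsFlowerLayer A P S v Q W) {s : α} (hs : s ∈ S) :
    (A.neighborSet s ∩ ⋃ j, Q j).ncard = 3 := by
  choose w hw hunique using fun j => (h.matchingBetween j).2 s hs
  have : A.neighborSet s ∩ ⋃ j, Q j = Set.range w := by
    ext x
    constructor
    · rintro ⟨hadj, hx⟩
      obtain ⟨j, hxQ⟩ := Set.mem_iUnion.1 hx
      exact ⟨j, (hunique j x ⟨h.mem_W_of_adj_core hs hxQ hadj, hadj.symm⟩).symm⟩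
    · rintro ⟨j, rfl⟩
      exact ⟨(hw j).2.symm, Set.mem_iUnion_of_mem j (h.subset_petal j (hw j).1)⟩
  have hinj : Function.Injective w := fun j k hjk => h.petal_index_unique
    (h.subset_petal j (hw j).1) (hjk ▸ h.subset_petal k (hw k).1)
  rw [this, Set.ncard_range_of_injective hinj, Nat.card_fin]

lemma two_mul_edgeCountIn [Finite α] (h : IsFlowerLayer A P S v Q W) :
    2 * edgeCountIn A P + 3 = 2 * edgeCountIn A S + 3 * P.ncard + 3 * S.ncard := by
  have core_petals : (dartsBetween A S (⋃ j, Q j)).ncard = S.ncard * 3 :=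
    ncard_dartsBetween_eq_mul fun s hs => h.ncard_neighborSet_core_inter_petals hs
  have petals : (dartsBetween A (⋃ j, Q j) (⋃ j, Q j)).ncard = (⋃ j, Q j).ncard * 1 :=
    ncard_dartsBetween_eq_mul fun x hx => h.ncard_neighborSet_petal_inter_petals hx
  rw [← ncard_dartsBetween_self, ← ncard_dartsBetween_self, h.ncard_dartsBetween_self_eq,
    h.ncard_eq, core_petals, petals]
  ring

end IsFlowerLayer

end Layer

section Extraction

variable {α : Type*} {A : SimpleGraph α} {P S : Set α} {v : Fin 3 → α} {Q W U Y : Fin 3 → Set α}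

/-- Conditions (1)–(4) of an `r`-flower for a single layer `P = Vⁱ` with core `S = Vⁱ⁺¹`. -/
structure IsMatchedLayer (A : SimpleGraph α) (P S : Set α) (v : Fin 3 → α)
    (Q W U Y : Fin 3 → Set α) : Prop extends IsPetalDecomposition A P S v Q where
  petal_eq_union : ∀ j, Q j = W j ∪ U j ∪ Y j
  disjoint_W_U : ∀ j, Disjoint (W j) (U j)
  disjoint_W_Y : ∀ j, Disjoint (W j) (Y j)
  disjoint_U_Y : ∀ j, Disjoint (U j) (Y j)
  matchingBetween_W_core : ∀ j, MatchingBetween A (W j) S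
  matchingBetween_W_U : ∀ j, MatchingBetween A (W j) (U j)
  matchingOn_Y : ∀ j, MatchingOn A (Y j)

/-- The pairs `xy` that condition (6) of an `r`-flower permits as edges because of one layer. -/
def LayerEdge (S : Set α) (v : Fin 3 → α) (Q W U Y : Fin 3 → Set α) (x y : α) : Prop :=
  (x ∈ Set.range v ∧ y ∈ Set.range v) ∨
    ∃ j : Fin 3, (x = v j ∧ y ∈ Q j) ∨ (y = v j ∧ x ∈ Q j) ∨
      (x ∈ W j ∧ y ∈ S) ∨ (y ∈ W j ∧ x ∈ S) ∨
      (x ∈ W j ∧ y ∈ U j) ∨ (y ∈ W j ∧ x ∈ U j) ∨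
      (x ∈ Y j ∧ y ∈ Y j)

lemma isPetalDecomposition_of_pairwiseDisjoint
    (hP : P = S ∪ Set.range v ∪ Q 0 ∪ Q 1 ∪ Q 2)
    (hdisj : (Set.univ : Set (Fin 5)).PairwiseDisjoint ![S, Set.range v, Q 0, Q 1, Q 2])
    (hv : Pairwise fun j k => A.Adj (v j) (v k))
    (hQ : ∀ j, Q j = {x ∈ P | A.Adj (v j) x} \ Set.range v) :
    IsPetalDecomposition A P S v Q where
  eq_union := by
    rw [hP]
    ext x
    simp [Fin.exists_fin_succ, or_assoc]
  disjoint_core_centers := hdisj (Set.mem_univ 0) (Set.mem_univ 1) (by decide)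
  disjoint_core_petal j := by
    have := hdisj (Set.mem_univ 0) (Set.mem_univ j.succ.succ) (Fin.succ_ne_zero _).symm
    fin_cases j <;> exact this
  disjoint_petals j k hjk := by
    have := hdisj (Set.mem_univ j.succ.succ) (Set.mem_univ k.succ.succ) (by simpa using hjk)
    fin_cases j <;> fin_cases k <;> exact this
  adj_centers := hv
  petal_eq := hQ

namespace IsMatchedLayer

variable {x y : α}

lemma parts_subset_petal (h : IsMatchedLayer A P S v Q W U Y) (j : Fin 3) :
    W j ⊆ Q j ∧ U j ⊆ Q j ∧ Y j ⊆ Q j := by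
  rw [h.petal_eq_union j]
  grind

lemma mem_and_mem_of_layerEdge (h : IsMatchedLayer A P S v Q W U Y)
    (hxy : LayerEdge S v Q W U Y x y) : x ∈ P ∧ y ∈ P := by
  have := h.parts_subset_petal
  have := h.petal_subset
  have := h.core_subset
  have := h.center_mem
  grind [LayerEdge]

lemma notMem_core_or_notMem_core_of_layerEdge (h : IsMatchedLayer A P S v Q W U Y)
    (hxy : LayerEdge S v Q W U Y x y) : x ∉ S ∨ y ∉ S := by
  have := h.parts_subset_petal
  have := h.center_notMem_core
  have := @h.petal_notMem_core
  grind [LayerEdge]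

lemma petal_cases_of_layerEdge (h : IsMatchedLayer A P S v Q W U Y) {j : Fin 3} (hx : x ∈ Q j)
    (hxy : LayerEdge S v Q W U Y x y) :
    y = v j ∨ (x ∈ W j ∧ y ∈ S) ∨ (x ∈ W j ∧ y ∈ U j) ∨ (x ∈ U j ∧ y ∈ W j) ∨
      (x ∈ Y j ∧ y ∈ Y j) := by
  have := h.parts_subset_petal
  have := h.center_notMem_petal
  have := @h.petal_notMem_core
  have := @h.petal_index_unique
  grind [LayerEdge]

lemma matched_of_layerEdge (h : IsMatchedLayer A P S v Q W U Y) {j : Fin 3} (hx : x ∈ Q j)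
    (hy : y ∈ Q j) (hxy : LayerEdge S v Q W U Y x y) :
    (x ∈ W j ∧ y ∈ U j) ∨ (x ∈ U j ∧ y ∈ W j) ∨ (x ∈ Y j ∧ y ∈ Y j) := by
  rcases h.petal_cases_of_layerEdge hx hxy with rfl | ⟨-, hyS⟩ | hmatched
  · exact absurd hy (h.center_notMem_petal j j)
  · exact absurd hyS (h.petal_notMem_core hy)
  · exact hmatched

lemma not_layerEdge_W (h : IsMatchedLayer A P S v Q W U Y) {j : Fin 3} (hx : x ∈ W j)
    (hy : y ∈ W j) : ¬ LayerEdge S v Q W U Y x y := by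
  have hWQ := (h.parts_subset_petal j).1
  have hWU := Set.disjoint_left.1 (h.disjoint_W_U j)
  have hWY := Set.disjoint_left.1 (h.disjoint_W_Y j)
  intro hxy
  rcases h.matched_of_layerEdge (hWQ hx) (hWQ hy) hxy with ⟨-, hyU⟩ | ⟨hxU, -⟩ | ⟨hxY, -⟩
  exacts [hWU hy hyU, hWU hx hxU, hWY hx hxY]

lemma not_layerEdge_U (h : IsMatchedLayer A P S v Q W U Y) {j : Fin 3} (hx : x ∈ U j)
    (hy : y ∈ U j) : ¬ LayerEdge S v Q W U Y x y := by
  have hUQ := (h.parts_subset_petal j).2.1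
  have hWU := Set.disjoint_left.1 (h.disjoint_W_U j)
  have hUY := Set.disjoint_left.1 (h.disjoint_U_Y j)
  intro hxy
  rcases h.matched_of_layerEdge (hUQ hx) (hUQ hy) hxy with ⟨hxW, -⟩ | ⟨-, hyW⟩ | ⟨hxY, -⟩
  exacts [hWU hxW hx, hWU hyW hy, hUY hx hxY]

lemma not_layerEdge_Y (h : IsMatchedLayer A P S v Q W U Y) {j : Fin 3} (hx : x ∈ W j ∪ U j)
    (hy : y ∈ Y j) : ¬ LayerEdge S v Q W U Y x y := by
  obtain ⟨hWQ, hUQ, hYQ⟩ := h.parts_subset_petal j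
  have hWY := Set.disjoint_left.1 (h.disjoint_W_Y j)
  have hUY := Set.disjoint_left.1 (h.disjoint_U_Y j)
  intro hxy
  rcases h.matched_of_layerEdge (Set.union_subset hWQ hUQ hx) (hYQ hy) hxy with
    ⟨-, hyU⟩ | ⟨-, hyW⟩ | ⟨hxY, -⟩
  exacts [hUY hyU hy, hWY hyW hy, hx.elim (hWY · hxY) (hUY · hxY)]

lemma isFlowerLayer (h : IsMatchedLayer A P S v Q W U Y)
    (hedge : ∀ x ∈ P \ S, ∀ y ∈ P, A.Adj x y → LayerEdge S v Q W U Y x y) :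
    IsFlowerLayer A P S v Q W := by
  obtain ⟨hWQ, hUQ, hYQ⟩ := forall_and.1 h.parts_subset_petal |>.imp_right forall_and.1
  have layerEdge_of_adj {j x y} (hx : x ∈ Q j) (hy : y ∈ P) (hxy : A.Adj x y) :
      LayerEdge S v Q W U Y x y :=
    hedge x ⟨h.petal_subset j hx, h.petal_notMem_core hx⟩ y hy hxy
  have layerEdge_of_adj_petal {j x y} (hx : x ∈ Q j) (hy : y ∈ Q j) (hxy : A.Adj x y) :
      LayerEdge S v Q W U Y x y :=
    layerEdge_of_adj hx (h.petal_subset j hy) hxy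
  have isIndepSet_W (j) : A.IsIndepSet (W j) := fun x hx y hy _ hxy =>
    h.not_layerEdge_W hx hy (layerEdge_of_adj_petal (hWQ j hx) (hWQ j hy) hxy)
  have isIndepSet_U (j) : A.IsIndepSet (U j) := fun x hx y hy _ hxy =>
    h.not_layerEdge_U hx hy (layerEdge_of_adj_petal (hUQ j hx) (hUQ j hy) hxy)
  refine ⟨h.toIsPetalDecomposition, hWQ, isIndepSet_W, h.matchingBetween_W_core, ?matching, ?adj⟩
  case matching =>
    intro j
    rw [h.petal_eq_union j]
    refine ((h.matchingBetween_W_U j).matchingOn_union (isIndepSet_W j) (isIndepSet_U j)).union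
      (h.matchingOn_Y j) fun x hx y hy hxy => ?_
    exact h.not_layerEdge_Y hx hy
      (layerEdge_of_adj_petal (Set.union_subset (hWQ j) (hUQ j) hx) (hYQ j hy) hxy)
  case adj =>
    intro j x y hx hy hxy
    rcases h.petal_cases_of_layerEdge hx (layerEdge_of_adj hx hy hxy) with
      rfl | hcore | ⟨-, hyU⟩ | ⟨-, hyW⟩ | ⟨-, hyY⟩
    exacts [.inl rfl, .inr (.inr hcore), .inr (.inl (hUQ j hyU)), .inr (.inl (hWQ j hyW)),
      .inr (.inl (hYQ j hyY))]

end IsMatchedLayer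

section Layers

variable {r i : ℕ} {V : ℕ → Set α} {v : ℕ → Fin 3 → α} {Q W U Y : ℕ → Fin 3 → Set α}

lemma antitoneOn_of_isMatchedLayer
    (hlayer : ∀ i ∈ Set.Icc 1 r,
      IsMatchedLayer A (V i) (V (i + 1)) (v i) (Q i) (W i) (U i) (Y i)) :
    AntitoneOn V (Set.Icc 1 (r + 1)) :=
  antitoneOn_of_add_one_le Set.ordConnected_Icc fun i _ hi hi' =>
    (hlayer i ⟨hi.1, Nat.le_of_succ_le_succ hi'.2⟩).core_subset

lemma layerEdge_of_adj
    (hlayer : ∀ i ∈ Set.Icc 1 r,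
      IsMatchedLayer A (V i) (V (i + 1)) (v i) (Q i) (W i) (U i) (Y i))
    (hedge : ∀ x y, A.Adj x y → (x ∈ V (r + 1) ∧ y ∈ V (r + 1)) ∨
      ∃ k ∈ Set.Icc 1 r, LayerEdge (V (k + 1)) (v k) (Q k) (W k) (U k) (Y k) x y)
    (hi : i ∈ Set.Icc 1 r) {x y : α} (hx : x ∈ V i \ V (i + 1)) (hy : y ∈ V i)
    (hxy : A.Adj x y) :
    LayerEdge (V (i + 1)) (v i) (Q i) (W i) (U i) (Y i) x y := by
  have subset_of_le {k l : ℕ} (hk : 1 ≤ k) (hkl : k ≤ l) (hl : l ≤ r + 1) : V l ⊆ V k :=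
    antitoneOn_of_isMatchedLayer hlayer ⟨hk, hkl.trans hl⟩ ⟨hk.trans hkl, hl⟩ hkl
  obtain ⟨hi1, hir⟩ := hi
  obtain ⟨hxV, -⟩ | ⟨k, hk, hkxy⟩ := hedge x y hxy
  · exact absurd (subset_of_le (by lia) (by lia) le_rfl hxV) hx.2
  obtain hki | rfl | hik := lt_trichotomy k i
  · have core_subset : V i ⊆ V (k + 1) := subset_of_le (by lia) (by lia) (by lia)
    have := (hlayer k hk).notMem_core_or_notMem_core_of_layerEdge hkxy
    exact absurd (this.resolve_left (not_not_intro (core_subset hx.1)))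
      (not_not_intro (core_subset hy))
  · exact hkxy
  · have hxV : x ∈ V k := ((hlayer k hk).mem_and_mem_of_layerEdge hkxy).1
    exact absurd (subset_of_le i.succ_pos hik (hk.2.trans r.le_succ) hxV) hx.2

end Layers

namespace IsRFlower

variable {n r i : ℕ} {A : SimpleGraph (Fin n)} {V : ℕ → Set (Fin n)}

lemma exists_isMatchedLayer (h : IsRFlower A r V) :
    ∃ (v : ℕ → Fin 3 → Fin n) (Q W U Y : ℕ → Fin 3 → Set (Fin n)),
      (∀ i ∈ Set.Icc 1 r, IsMatchedLayer A (V i) (V (i + 1)) (v i) (Q i) (W i) (U i) (Y i)) ∧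
      ∀ x y, A.Adj x y → (x ∈ V (r + 1) ∧ y ∈ V (r + 1)) ∨ ∃ i ∈ Set.Icc 1 r,
        LayerEdge (V (i + 1)) (v i) (Q i) (W i) (U i) (Y i) x y := by
  obtain ⟨v, R, Q, W, U, Y, -, hV, hR, hQ, hparts, -, hedge⟩ := h
  have hRv : ∀ i ∈ Set.Icc 1 r, R i = Set.range (v i) := by
    rintro i ⟨hi, hir⟩
    ext x
    simp [(hR i hi hir).1, Fin.exists_fin_succ, eq_comm]
  refine ⟨v, Q, W, U, Y, ?layer, ?edge⟩
  case layer =>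
    rintro i ⟨hi, hir⟩
    have hRvi := hRv i ⟨hi, hir⟩
    have hdecomp : IsPetalDecomposition A (V i) (V (i + 1)) (v i) (Q i) :=
      isPetalDecomposition_of_pairwiseDisjoint (hRvi ▸ (hV i hi hir).1) (hRvi ▸ (hV i hi hir).2)
        (hR i hi hir).2 (hRvi ▸ hQ i hi hir)
    choose hunion hWU hWY hUY hWV hWU' hY using hparts i hi hir
    exact ⟨hdecomp, hunion, hWU, hWY, hUY, hWV, hWU', hY⟩
  case edge =>
    intro x y hxy
    refine (hedge x y hxy).imp_right ?_
    rintro ⟨i, hi, hir, hixy⟩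
    rw [hRv i ⟨hi, hir⟩] at hixy
    exact ⟨i, ⟨hi, hir⟩, hixy⟩

lemma exists_isFlowerLayer (h : IsRFlower A r V) (hi : i ∈ Set.Icc 1 r) :
    ∃ v Q W, IsFlowerLayer A (V i) (V (i + 1)) v Q W := by
  obtain ⟨v, Q, W, U, Y, hlayer, hedge⟩ := h.exists_isMatchedLayer
  exact ⟨v i, Q i, W i, (hlayer i hi).isFlowerLayer fun x hx y hy hxy =>
    layerEdge_of_adj hlayer hedge hi hx hy hxy⟩

lemma V_one_eq_univ (h : IsRFlower A r V) : V 1 = Set.univ := by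
  obtain ⟨-, -, -, -, -, -, hV, -⟩ := h
  exact hV

lemma maxC4FreeOn_core (h : IsRFlower A r V) : MaxC4FreeOn A (V (r + 1)) := by
  obtain ⟨-, -, -, -, -, -, -, -, -, -, -, hcore, -⟩ := h
  exact hcore

lemma maxC4FreeOn (h : IsRFlower A r V) (hi : i ∈ Set.Icc 1 (r + 1)) : MaxC4FreeOn A (V i) := by
  refine Nat.decreasingInduction' (fun k hkr hik hk => ?_) hi.2 h.maxC4FreeOn_core
  obtain ⟨v, Q, W, hlayer⟩ := h.exists_isFlowerLayer ⟨hi.1.trans hik, Nat.le_of_lt_succ hkr⟩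
  exact hlayer.maxC4FreeOn hk

lemma edgeCountIn_eq_add (h : IsRFlower A r V) (hi : i ∈ Set.Icc 1 r) :
    (edgeCountIn A (V i) : ℝ) = edgeCountIn A (V (i + 1)) +
      3 / 2 * ((V i).ncard - (V (i + 1)).ncard - 1) + 3 * (V (i + 1)).ncard := by
  obtain ⟨v, Q, W, hlayer⟩ := h.exists_isFlowerLayer hi
  have hcount : (2 * edgeCountIn A (V i) + 3 : ℝ) =
      2 * edgeCountIn A (V (i + 1)) + 3 * (V i).ncard + 3 * (V (i + 1)).ncard := by
    exact_mod_cast hlayer.two_mul_edgeCountIn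
  linarith

end IsRFlower

end Extraction

lemma edgeCountIn_univ {α : Type*} (A : SimpleGraph α) :
    edgeCountIn A Set.univ = A.edgeSet.ncard := by
  simp [edgeCountIn]

lemma eq_add_sum_Icc_of_recurrence {r : ℕ} {e c : ℕ → ℝ}
    (h : ∀ i ∈ Set.Icc 1 r,
      e i = e (i + 1) + 3 / 2 * (c i - c (i + 1) - 1) + 3 * c (i + 1)) :
    e 1 = e (r + 1) + 3 / 2 * (c 1 - c (r + 1) - r) + 3 * ∑ i ∈ Finset.Icc 2 (r + 1), c i := by
  induction r with
  | zero => simp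
  | succ r ih =>
    rw [ih fun i hi => h i ⟨hi.1, hi.2.trans r.le_succ⟩, h (r + 1) ⟨r.succ_pos, le_rfl⟩,
      Finset.sum_Icc_succ_top (by lia : 2 ≤ r + 1 + 1)]
    push_cast
    ring

/-- If a graph `Γ` on `[n]` contains a spanning `r`-flower `A`
with associated sets `V 1, …, V (r+1)`, then `A` is `C₄`-saturated in `Γ` and
`|E(A)| = |E(A[V^{r+1}])| + (3/2)(n − |V^{r+1}| − r) + 3(|V²| + … + |V^{r+1}|)`. -/
theorem rflower_saturated_and_count {n r : ℕ} (hr : 1 ≤ r)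
    (Γ A : SimpleGraph (Fin n)) (V : ℕ → Set (Fin n))
    (hflower : IsRFlower A r V) (hsub : A ≤ Γ) :
    IsSaturatedIn Γ A (cycGraph 4) ∧
    (A.edgeSet.ncard : ℝ)
      = (edgeCountIn A (V (r + 1)) : ℝ)
        + (3 / 2) * ((n : ℝ) - ((V (r + 1)).ncard : ℝ) - (r : ℝ))
        + 3 * ∑ i ∈ Finset.Icc 2 (r + 1), ((V i).ncard : ℝ) := by
  refine ⟨?saturated, ?count⟩
  case saturated =>
    have hmax : MaxC4FreeOn A Set.univ :=
      hflower.V_one_eq_univ ▸ hflower.maxC4FreeOn ⟨le_rfl, r.succ_pos⟩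
    exact hmax.isSaturatedIn hsub
  case count =>
    have hcount := eq_add_sum_Icc_of_recurrence (e := fun i => (edgeCountIn A (V i) : ℝ))
      (c := fun i => ((V i).ncard : ℝ)) fun i hi => hflower.edgeCountIn_eq_add hi
    simpa only [hflower.V_one_eq_univ, edgeCountIn_univ, Set.ncard_univ, Nat.card_fin]
      using hcount
end

section
/- Let p ∈ (0,1) be fixed and C a fixed positive integer. There exist constants c₀ > 0 and n₀ (depending only on p and C) such that the following holds for all n ≥ n₀: for every set ℰ ⊆ [n]×[n] with the property that every i ∈ [n] occurs as the first coordinate of at most C pairs of ℰ and as the second coordinate of at most C pairs of ℰ, the probability that the bipartite random graph G(n,n,p) contains a perfect matching none of whose edges corresponds to a pair in ℰ is at least 1 − e^{−c₀·n}. -/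
open MeasureTheory Filter Real

/-- The product Bernoulli measure on edge indicators of the complete bipartite
graph `K_{n,n}`: the bipartite binomial random graph `G(n,n,p)`. -/
noncomputable def bipMeasure (n : ℕ) (p : ℝ) : Measure (Fin n × Fin n → Bool) :=
  Measure.pi fun _ => (PMF.bernoulli (min (Real.toNNReal p) 1) (min_le_right _ _)).toMeasure

/-!
By Hall's theorem a relation between two sets of size `n` without a perfect matching has an empty
rectangle `S × T` with `#S + #T = n + 1`. If every row and column of `E` has at most `δ * n`
elements with `δ < 1 / 2`, then the longer side of the rectangle exceeds `δ * n` by at least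
`(1 / 2 - δ) * n`, so `S × T` has at least `m * (1 / 2 - δ) * n` pairs outside `E`, where
`m = min #S #T`. All of these are missing from `G(n,n,p)` with probability at most `x ^ m`, where
`x = exp (-p * (1 / 2 - δ) * n)`. There are at most `n ^ (2 * m)` rectangles of given side lengths,
so each pair of side lengths costs at most `(n ^ 2 * x) ^ m ≤ n ^ 2 * x`, provided
`n ^ 2 * x ≤ 1`, and there are only linearly many such pairs.
-/

open scoped Finset ENNReal

section Hall

variable {α β : Type*} [Fintype α] [Fintype β]

theorem exists_card_add_card_of_not_exists_equiv (hcard : Fintype.card α = Fintype.card β)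
    (r : α → β → Prop) (hr : ¬∃ σ : α ≃ β, ∀ a, r a (σ a)) :
    ∃ (S : Finset α) (T : Finset β),
      #S + #T = Fintype.card α + 1 ∧ ∀ a ∈ S, ∀ b ∈ T, ¬r a b := by
  classical
  have hall_fails : ¬∀ S : Finset α, #S ≤ #{b | ∃ a ∈ S, r a b} := by
    rw [Fintype.all_card_le_filter_rel_iff_exists_injective]
    rintro ⟨f, hf, hrf⟩
    exact hr ⟨.ofBijective f ((Fintype.bijective_iff_injective_and_card f).2 ⟨hf, hcard⟩), hrf⟩
  push Not at hall_fails
  obtain ⟨S, hS⟩ := hall_fails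
  have hS_le : #S ≤ Fintype.card α := S.card_le_univ
  have hT_le : Fintype.card α + 1 - #S ≤ #({b | ∃ a ∈ S, r a b} : Finset β)ᶜ := by
    rw [Finset.card_compl]
    lia
  obtain ⟨T, hT, hT_card⟩ := Finset.exists_subset_card_eq hT_le
  refine ⟨S, T, by lia, fun a ha b hb hab => ?_⟩
  have hb' := hT hb
  simp only [Finset.mem_compl, Finset.mem_filter_univ] at hb'
  exact hb' ⟨a, ha, hab⟩

end Hall

section Counting

theorem card_sub_ncard_le_card_filter_not {α : Type*} [Finite α] (T : Finset α) (P : α → Prop)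
    [DecidablePred P] : (#T : ℝ) - {a | P a}.ncard ≤ #{a ∈ T | ¬P a} := by
  have hP : #{a ∈ T | P a} ≤ {a | P a}.ncard := by
    rw [← Set.ncard_coe_finset]
    exact Set.ncard_le_ncard (fun a ha => (Finset.mem_filter.1 ha).2) (Set.toFinite _)
  have hT : #{a ∈ T | P a} + #{a ∈ T | ¬P a} = #T := Finset.card_filter_add_card_filter_not P
  rw [sub_le_iff_le_add']
  exact_mod_cast hT.symm.le.trans (Nat.add_le_add_right hP _)

variable {α β : Type*} (E : Set (α × β)) [DecidablePred (· ∈ E)] (S : Finset α) (T : Finset β)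
  {d : ℝ}

theorem card_mul_card_sub_le_card_filter_notMem [Finite β]
    (hE : ∀ a, ({b | (a, b) ∈ E}.ncard : ℝ) ≤ d) :
    #S * (#T - d) ≤ #{e ∈ S ×ˢ T | e ∉ E} := by
  rw [Finset.card_filter, Finset.sum_product, Nat.cast_sum, ← nsmul_eq_mul]
  refine Finset.card_nsmul_le_sum _ _ _ fun a _ => ?_
  rw [← Finset.card_filter]
  exact (sub_le_sub_left (hE a) _).trans (card_sub_ncard_le_card_filter_not T fun b => (a, b) ∈ E)

theorem card_mul_card_sub_le_card_filter_notMem_right [Finite α]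
    (hE : ∀ b, ({a | (a, b) ∈ E}.ncard : ℝ) ≤ d) :
    #T * (#S - d) ≤ #{e ∈ S ×ˢ T | e ∉ E} := by
  rw [Finset.card_filter, Finset.sum_product_right, Nat.cast_sum, ← nsmul_eq_mul]
  refine Finset.card_nsmul_le_sum _ _ _ fun b _ => ?_
  rw [← Finset.card_filter]
  exact (sub_le_sub_left (hE b) _).trans (card_sub_ncard_le_card_filter_not S fun a => (a, b) ∈ E)

theorem min_card_mul_le_card_filter_notMem [Finite α] [Finite β]
    (hrow : ∀ a, ({b | (a, b) ∈ E}.ncard : ℝ) ≤ d)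
    (hcol : ∀ b, ({a | (a, b) ∈ E}.ncard : ℝ) ≤ d) :
    min #S #T * ((#S + #T) / 2 - d) ≤ #{e ∈ S ×ˢ T | e ∉ E} := by
  rcases le_total #S #T with h | h
  · refine le_trans ?_ (card_mul_card_sub_le_card_filter_notMem E S T hrow)
    rw [min_eq_left h]
    have : (#S : ℝ) ≤ #T := mod_cast h
    gcongr
    linarith
  · refine le_trans ?_ (card_mul_card_sub_le_card_filter_notMem_right E S T hcol)
    rw [min_eq_right h]
    have : (#T : ℝ) ≤ #S := mod_cast h
    gcongr
    linarith

theorem choose_le_pow_min {n a b : ℕ} (h : a + b = n + 1) : n.choose a ≤ n ^ min a b := by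
  rcases le_or_gt a b with hab | hab
  · rw [min_eq_left hab]
    exact n.choose_le_pow a
  · rw [min_eq_right hab.le]
    rcases b.eq_zero_or_pos with rfl | hb
    · rw [Nat.choose_eq_zero_of_lt (by lia)]
      exact zero_le
    · rw [← Nat.choose_symm_of_eq_add (show n = (b - 1) + a by lia)]
      exact (n.choose_le_pow _).trans (Nat.pow_le_pow_right (by lia) (by lia))

theorem choose_mul_choose_mul_pow_min_le {R : Type*} [CommSemiring R] [PartialOrder R]
    [IsOrderedRing R] {n a b : ℕ} (h : a + b = n + 1) {x : R} (hx₀ : 0 ≤ x)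
    (hx₁ : n ^ 2 * x ≤ 1) : n.choose a * n.choose b * x ^ min a b ≤ n ^ 2 * x := by
  have hnx : 0 ≤ n ^ 2 * x := mul_nonneg (pow_nonneg n.cast_nonneg _) hx₀
  rcases (min a b).eq_zero_or_pos with hmin | hmin
  · have hzero : n.choose a * n.choose b = 0 := by
      rw [mul_eq_zero, Nat.choose_eq_zero_iff, Nat.choose_eq_zero_iff]
      lia
    rwa [← Nat.cast_mul, hzero, Nat.cast_zero, zero_mul]
  · have ha : (n.choose a : R) ≤ n ^ min a b :=
      mod_cast Nat.mono_cast (α := R) (choose_le_pow_min h)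
    have hb : (n.choose b : R) ≤ n ^ min a b := by
      rw [min_comm]
      exact mod_cast Nat.mono_cast (α := R) (choose_le_pow_min ((add_comm b a).trans h))
    calc (n.choose a * n.choose b * x ^ min a b : R)
        ≤ n ^ min a b * n ^ min a b * x ^ min a b := by gcongr
      _ = (n ^ 2 * x) ^ min a b := by ring
      _ ≤ n ^ 2 * x := pow_le_of_le_one hnx hx₁ hmin.ne'

end Counting

section UnionBound

open Finset (powersetCard)
open Finset.HasAntidiagonal (antidiagonal mem_antidiagonal)

/-- The event that the random bipartite graph with edge indicators `ω` has no edge between `S` and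
`T` outside `E`. -/
def emptyRectangle {α β : Type*} (E : Set (α × β)) (S : Finset α) (T : Finset β) :
    Set (α × β → Bool) :=
  {ω | ∀ a ∈ S, ∀ b ∈ T, (a, b) ∉ E → ω (a, b) = false}

theorem measure_iUnion_emptyRectangle_le {α β : Type*} [Fintype α] [Fintype β] (E : Set (α × β))
    (μ : Measure (α × β → Bool)) {a b : ℕ} {y : ℝ≥0∞}
    (hμ : ∀ (S : Finset α) (T : Finset β), #S = a → #T = b → μ (emptyRectangle E S T) ≤ y) :
    μ (⋃ R ∈ powersetCard a (.univ : Finset α) ×ˢ powersetCard b (.univ : Finset β),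
      emptyRectangle E R.1 R.2) ≤
        (Fintype.card α).choose a * (Fintype.card β).choose b * y := by
  refine (measure_biUnion_finset_le _ _).trans
    ((Finset.sum_le_card_nsmul _ _ y fun R hR => ?_).trans_eq ?_)
  · simp only [Finset.mem_product, Finset.mem_powersetCard_univ] at hR
    exact hμ R.1 R.2 hR.1 hR.2
  · simp only [Finset.card_product, Finset.card_powersetCard, Finset.card_univ, nsmul_eq_mul,
      Nat.cast_mul]

variable {V : Type*} [Fintype V] (E : Set (V × V))

theorem compl_matching_subset_iUnion_emptyRectangle :
    {ω | ∃ σ : Equiv.Perm V, ∀ i, ω (i, σ i) = true ∧ (i, σ i) ∉ E}ᶜ ⊆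
      ⋃ k ∈ antidiagonal (Fintype.card V + 1),
        ⋃ R ∈ powersetCard k.1 (.univ : Finset V) ×ˢ powersetCard k.2 .univ,
          emptyRectangle E R.1 R.2 := by
  intro ω hω
  obtain ⟨S, T, hcard, hST⟩ := exists_card_add_card_of_not_exists_equiv rfl
    (fun i j => ω (i, j) = true ∧ (i, j) ∉ E) hω
  simp only [Set.mem_iUnion]
  refine ⟨(#S, #T), mem_antidiagonal.2 hcard, (S, T), by simp, fun i hi j hj hij => ?_⟩
  exact Bool.eq_false_of_not_eq_true fun h => hST i hi j hj ⟨h, hij⟩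

theorem prob_compl_matching_le (μ : Measure (V × V → Bool)) [IsProbabilityMeasure μ] {x : ℝ≥0∞}
    (hμ : ∀ S T : Finset V, #S + #T = Fintype.card V + 1 →
      μ (emptyRectangle E S T) ≤ x ^ min #S #T) :
    μ {ω | ∃ σ : Equiv.Perm V, ∀ i, ω (i, σ i) = true ∧ (i, σ i) ∉ E}ᶜ ≤
      (Fintype.card V + 2) * (Fintype.card V ^ 2 * x) := by
  set n := Fintype.card V
  rcases le_total 1 (n ^ 2 * x) with hx | hx
  · refine prob_le_one.trans (hx.trans (le_mul_of_one_le_left' ?_))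
    exact one_le_two.trans le_add_self
  have sides_le : ∀ k ∈ antidiagonal (n + 1),
      μ (⋃ R ∈ powersetCard k.1 (.univ : Finset V) ×ˢ powersetCard k.2 .univ,
        emptyRectangle E R.1 R.2) ≤ n ^ 2 * x := by
    rintro ⟨a, b⟩ hk
    have hab : a + b = n + 1 := mem_antidiagonal.1 hk
    refine (measure_iUnion_emptyRectangle_le E μ fun S T hS hT => ?_).trans
      (choose_mul_choose_mul_pow_min_le hab zero_le hx)
    exact (hμ S T (by rw [hS, hT, hab])).trans_eq (by rw [hS, hT])
  calc _ ≤ _ := measure_mono (compl_matching_subset_iUnion_emptyRectangle E)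
    _ ≤ _ := measure_biUnion_finset_le _ _
    _ ≤ #(antidiagonal (n + 1)) • (n ^ 2 * x) := Finset.sum_le_card_nsmul _ _ _ sides_le
    _ = (n + 2) * (n ^ 2 * x) := by
      rw [Finset.Nat.card_antidiagonal, nsmul_eq_mul]
      push_cast
      ring

end UnionBound

section BipMeasure

instance isProbabilityMeasure_bipMeasure (n : ℕ) (p : ℝ) :
    IsProbabilityMeasure (bipMeasure n p) := by
  unfold bipMeasure
  infer_instance

variable {n : ℕ} {p : ℝ}

theorem bipMeasure_forall_eq_false (hp₀ : 0 ≤ p) (hp₁ : p ≤ 1) (F : Finset (Fin n × Fin n)) :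
    bipMeasure n p {ω | ∀ e ∈ F, ω e = false} = ENNReal.ofReal (1 - p) ^ #F := by
  have edge_absent : ((1 - min p.toNNReal 1 : NNReal) : ℝ≥0∞) = ENNReal.ofReal (1 - p) := by
    rw [min_eq_left (Real.toNNReal_le_one.2 hp₁), ENNReal.ofReal_sub _ hp₀, ENNReal.ofReal_one]
    rfl
  have event_eq_pi : {ω : Fin n × Fin n → Bool | ∀ e ∈ F, ω e = false} =
      Set.pi F fun _ => {false} := rfl
  rw [event_eq_pi, bipMeasure, ← Measure.infinitePi_eq_pi,
    Measure.infinitePi_pi _ fun _ _ => .singleton _, Finset.prod_const,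
    PMF.toMeasure_apply_singleton _ _ (.singleton _)]
  exact congrArg (· ^ #F) edge_absent

theorem bipMeasure_emptyRectangle_le (hp₀ : 0 ≤ p) (hp₁ : p ≤ 1) {E : Set (Fin n × Fin n)} {d : ℝ}
    (hrow : ∀ i, ({j | (i, j) ∈ E}.ncard : ℝ) ≤ d) (hcol : ∀ j, ({i | (i, j) ∈ E}.ncard : ℝ) ≤ d)
    (S T : Finset (Fin n)) :
    bipMeasure n p (emptyRectangle E S T) ≤
      ENNReal.ofReal (exp (-p * ((#S + #T) / 2 - d))) ^ min #S #T := by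
  classical
  set F : Finset (Fin n × Fin n) := {e ∈ S ×ˢ T | e ∉ E} with hF
  have hF_card : min #S #T * ((#S + #T) / 2 - d) ≤ #F :=
    mod_cast min_card_mul_le_card_filter_notMem E S T hrow hcol
  have event_eq : emptyRectangle E S T = {ω | ∀ e ∈ F, ω e = false} := by
    ext ω
    simp only [emptyRectangle, hF, Set.mem_ofPred_eq, Finset.mem_filter, Finset.mem_product,
      Prod.forall]
    grind
  rw [event_eq, bipMeasure_forall_eq_false hp₀ hp₁]
  calc ENNReal.ofReal (1 - p) ^ #F
      ≤ ENNReal.ofReal (exp (-p)) ^ #F := by gcongr; exact one_sub_le_exp_neg p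
    _ = ENNReal.ofReal (exp (#F * -p)) := by
      rw [← ENNReal.ofReal_pow (exp_nonneg _), exp_nat_mul]
    _ ≤ ENNReal.ofReal (exp (min #S #T * (-p * ((#S + #T) / 2 - d)))) := by
      refine ENNReal.ofReal_le_ofReal (exp_le_exp.2 ?_)
      linarith [mul_le_mul_of_nonneg_left hF_card hp₀]
    _ = ENNReal.ofReal (exp (-p * ((#S + #T) / 2 - d))) ^ min #S #T := by
      rw [← ENNReal.ofReal_pow (exp_nonneg _), ← exp_nat_mul, Nat.cast_min]

end BipMeasure

theorem eventually_add_two_mul_sq_le_exp {c : ℝ} (hc : 0 < c) :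
    ∀ᶠ n : ℕ in atTop, ((n : ℝ) + 2) * n ^ 2 ≤ exp (c * n) := by
  have cube_le : ∀ᶠ n : ℕ in atTop, (n : ℝ) ^ 3 ≤ 1 / 3 * exp (c * n) := by
    have h := ((isLittleO_pow_exp_pos_mul_atTop (k := 3) hc).comp_tendsto
      tendsto_natCast_atTop_atTop).bound (show (0 : ℝ) < 1 / 3 by norm_num)
    simpa using h
  filter_upwards [cube_le, eventually_ge_atTop 1] with n hn hn₁
  have : (1 : ℝ) ≤ n := mod_cast hn₁
  calc ((n : ℝ) + 2) * n ^ 2 ≤ ((n : ℝ) + 2 * n) * n ^ 2 := by gcongr; linarith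
    _ = 3 * (n : ℝ) ^ 3 := by ring
    _ ≤ exp (c * n) := by linarith

theorem bipartite_matching_avoiding_general {p : ℝ} (hp₀ : 0 < p) (hp₁ : p ≤ 1) {δ : ℝ}
    (hδ : δ < 1 / 2) :
    ∃ c₀ > (0 : ℝ), ∃ n₀ : ℕ, ∀ n ≥ n₀, ∀ E : Set (Fin n × Fin n),
      (∀ i, ({j | (i, j) ∈ E}.ncard : ℝ) ≤ δ * n ∧ ({j | (j, i) ∈ E}.ncard : ℝ) ≤ δ * n) →
      1 - ENNReal.ofReal (exp (-c₀ * n)) ≤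
        bipMeasure n p {ω | ∃ σ : Equiv.Perm (Fin n),
          ∀ i, ω (i, σ i) = true ∧ (i, σ i) ∉ E} := by
  set c := p * (1 / 2 - δ) / 2 with hc_def
  have hc : 0 < c := by have := sub_pos.2 hδ; positivity
  obtain ⟨n₀, hn₀⟩ := eventually_atTop.1 (eventually_add_two_mul_sq_le_exp hc)
  refine ⟨c, hc, n₀, fun n hn E hE => ?_⟩
  have rectangle_le (S T : Finset (Fin n)) (hST : #S + #T = Fintype.card (Fin n) + 1) :
      bipMeasure n p (emptyRectangle E S T) ≤ ENNReal.ofReal (exp (-(2 * c) * n)) ^ min #S #T := by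
    refine (bipMeasure_emptyRectangle_le hp₀.le hp₁ (fun i => (hE i).1) (fun i => (hE i).2)
      S T).trans ?_
    have hST' : (#S + #T : ℝ) = n + 1 := by rw [Fintype.card_fin] at hST; exact_mod_cast hST
    rw [hST', hc_def]
    refine pow_le_pow_left' (ENNReal.ofReal_le_ofReal (exp_le_exp.2 ?_)) _
    linarith
  rw [← compl_compl {ω | _}, prob_compl_eq_one_sub (Set.toFinite _).measurableSet]
  refine tsub_le_tsub_left ((prob_compl_matching_le E _ rectangle_le).trans ?_) 1
  calc _ = ENNReal.ofReal (((n : ℝ) + 2) * n ^ 2 * exp (-(2 * c) * n)) := by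
        rw [ENNReal.ofReal_mul (by positivity), ENNReal.ofReal_mul (by positivity),
          ENNReal.ofReal_add (by positivity) zero_le_two, ENNReal.ofReal_pow (by positivity),
          ENNReal.ofReal_natCast, ENNReal.ofReal_ofNat, Fintype.card_fin, mul_assoc]
    _ ≤ ENNReal.ofReal (exp (c * n) * exp (-(2 * c) * n)) := by gcongr; exact hn₀ n hn
    _ = ENNReal.ofReal (exp (-c * n)) := by rw [← exp_add]; ring_nf

/-- For fixed `p ∈ (0,1)` and a fixed positive integer `C`,
there are `c₀ > 0` and `n₀` such that for all `n ≥ n₀` and every set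
`ℰ ⊆ [n]×[n]` in which every index occurs at most `C` times as a first
coordinate and at most `C` times as a second coordinate, with probability at
least `1 − e^{−c₀n}` the graph `G(n,n,p)` has a perfect matching avoiding `ℰ`. -/
theorem bipartite_matching_avoiding (p : ℝ) (hp0 : 0 < p) (hp1 : p < 1)
    (C : ℕ) (hC : 0 < C) :
    ∃ c₀ > (0 : ℝ), ∃ n₀ : ℕ, ∀ n ≥ n₀, ∀ E : Set (Fin n × Fin n),
      (∀ i : Fin n, {j : Fin n | (i, j) ∈ E}.ncard ≤ C ∧
                    {j : Fin n | (j, i) ∈ E}.ncard ≤ C) →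
      1 - ENNReal.ofReal (Real.exp (-c₀ * n)) ≤
        bipMeasure n p {ω | ∃ σ : Equiv.Perm (Fin n),
          ∀ i : Fin n, ω (i, σ i) = true ∧ (i, σ i) ∉ E} := by
  obtain ⟨c₀, hc₀, n₀, hn₀⟩ :=
    bipartite_matching_avoiding_general hp0 hp1.le (show (1 / 4 : ℝ) < 1 / 2 by norm_num)
  refine ⟨c₀, hc₀, max n₀ (4 * C), fun n hn E hE => hn₀ n (le_of_max_le_left hn) E fun i => ?_⟩
  have hCn : (C : ℝ) ≤ 1 / 4 * n := by
    have : (4 * C : ℝ) ≤ n := mod_cast le_of_max_le_right hn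
    linarith
  exact ⟨(Nat.cast_le.2 (hE i).1).trans hCn, (Nat.cast_le.2 (hE i).2).trans hCn⟩
end

section
/- Let p ∈ (0,1) be fixed. With high probability, for every set V ⊆ [n] with |V| ≥ (3/p)·ln n, the number of vertices of G(n,p) outside V having at most (1/2)·ln n neighbors in V is less than ln³ n. -/
open MeasureTheory Filter Real

/-!
By monotonicity in `V` it suffices to exclude sets `V` of size exactly `m = ⌈(3/p) ln n⌉`, together
with sets `W` of `k = ⌈ln³ n⌉` vertices outside `V`, each having at most `(1/2) ln n` neighbours
in `V`. For given `V` and `W` the `mk` potential edges between them are independent, and at most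
`(k/2) ln n` of them are present, although at least `3k ln n` are expected. A Chernoff bound makes
this an event of probability at most `exp (-(3/2) k ln n)`. There are at most
`n ^ (m + k) = exp ((m + k) ln n)` pairs `(V, W)`, and `m` is negligible compared to `k`, so a union
bound finishes the proof.
-/

section Probability

open ProbabilityTheory

theorem tendsto_measure_one_of_tendsto_measureReal_compl {ι : Type*} {l : Filter ι}
    {Ω : ι → Type*} [∀ i, MeasurableSpace (Ω i)] {μ : ∀ i, Measure (Ω i)}
    [∀ i, IsProbabilityMeasure (μ i)] {s : ∀ i, Set (Ω i)}
    (h : Tendsto (fun i => (μ i).real (s i)ᶜ) l (nhds 0)) :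
    Tendsto (fun i => μ i (s i)) l (nhds 1) := by
  have lower : Tendsto (fun i => ENNReal.ofReal (1 - (μ i).real (s i)ᶜ)) l (nhds 1) := by
    simpa using ENNReal.tendsto_ofReal (h.const_sub 1)
  refine tendsto_of_tendsto_of_tendsto_of_le_of_le lower tendsto_const_nhds (fun i => ?_)
    fun i => prob_le_one
  have one_le : 1 ≤ (μ i).real (s i) + (μ i).real (s i)ᶜ := by
    simpa using measureReal_union_le (μ := μ i) (s i) (s i)ᶜ
  rw [← ofReal_measureReal]
  exact ENNReal.ofReal_le_ofReal (by linarith)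

variable {Ω ι : Type*} {mΩ : MeasurableSpace Ω} {μ : Measure Ω}

theorem iIndepSet_preimage_of_iIndepFun {β : ι → Type*} {_ : ∀ i, MeasurableSpace (β i)}
    {f : ∀ i, Ω → β i} (hf : iIndepFun f μ) (hfm : ∀ i, Measurable (f i)) {s : ∀ i, Set (β i)}
    (hs : ∀ i, MeasurableSet (s i)) : iIndepSet (fun i => f i ⁻¹' s i) μ :=
  (iIndepSet_iff_meas_biInter fun i => hfm i (hs i)).2 fun S =>
    hf.measure_inter_preimage_eq_mul S fun i _ => hs i

theorem mgf_indicator_one [IsProbabilityMeasure μ] {A : Set Ω} (hA : MeasurableSet A) (t : ℝ) :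
    mgf (A.indicator fun _ => (1 : ℝ)) μ t = 1 + (exp t - 1) * μ.real A := by
  have exp_indicator : (fun ω => exp (t * A.indicator (fun _ => (1 : ℝ)) ω)) =
      fun ω => 1 + A.indicator (fun _ => exp t - 1) ω := by
    funext ω
    by_cases hω : ω ∈ A <;> simp [hω]
  rw [mgf, exp_indicator, integral_add (integrable_const 1) ((integrable_const _).indicator hA),
    integral_indicator_const _ hA]
  simp [mul_comm]

theorem measureReal_ncard_le_le_exp [Fintype ι] {A : ι → Set Ω} (hA : iIndepSet A μ)
    (hAm : ∀ i, MeasurableSet (A i)) {p t : ℝ} (hp : ∀ i, p ≤ μ.real (A i)) (ht : t ≤ 0) (a : ℝ) :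
    μ.real {ω | ({i | ω ∈ A i}.ncard : ℝ) ≤ a} ≤
      exp (-t * a - (1 - exp t) * p * Fintype.card ι) := by
  have := hA.isProbabilityMeasure
  set X : ι → Ω → ℝ := fun i => (A i).indicator fun _ => 1
  have X_meas (i : ι) : Measurable (X i) := measurable_const.indicator (hAm i)
  have X_nonneg (i : ι) (ω : Ω) : 0 ≤ X i ω := Set.indicator_nonneg (fun _ _ => zero_le_one) ω
  have mgf_le (i : ι) : mgf (X i) μ t ≤ exp (-((1 - exp t) * p)) := by
    have exp_le_one : exp t ≤ 1 := exp_le_one_iff.2 ht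
    calc mgf (X i) μ t = 1 + (exp t - 1) * μ.real (A i) := mgf_indicator_one (hAm i) t
      _ ≤ -((1 - exp t) * p) + 1 := by nlinarith [hp i]
      _ ≤ exp (-((1 - exp t) * p)) := add_one_le_exp _
  have exp_integrable : Integrable (fun ω => exp (t * (∑ i, X i) ω)) μ := by
    refine .of_bound (by fun_prop) 1 (.of_forall fun ω => ?_)
    rw [norm_of_nonneg (exp_pos _).le, exp_le_one_iff, Finset.sum_apply]
    exact mul_nonpos_of_nonpos_of_nonneg ht (Finset.sum_nonneg fun i _ => X_nonneg i ω)
  have ncard_eq_sum (ω : Ω) : ({i | ω ∈ A i}.ncard : ℝ) = (∑ i, X i) ω := by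
    classical
    simp [X, Set.indicator_apply, Set.ncard_eq_toFinset_card']
  calc μ.real {ω | ({i | ω ∈ A i}.ncard : ℝ) ≤ a} = μ.real {ω | (∑ i, X i) ω ≤ a} := by
        simp only [ncard_eq_sum]
    _ ≤ exp (-t * a) * mgf (∑ i, X i) μ t := measure_le_le_exp_mul_mgf a ht exp_integrable
    _ = exp (-t * a) * ∏ i, mgf (X i) μ t := by
        rw [hA.iIndepFun_indicator.mgf_sum X_meas]
    _ ≤ exp (-t * a) * ∏ _i : ι, exp (-((1 - exp t) * p)) := by
        gcongr with i
        · exact fun i _ => mgf_nonneg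
        · exact mgf_le i
    _ = exp (-t * a - (1 - exp t) * p * Fintype.card ι) := by
        rw [Finset.prod_const, Finset.card_univ, ← exp_nat_mul, ← exp_add]
        ring_nf

end Probability

section LowDegree

variable {α : Type*}

/-- The number of neighbours of `v` in `V`; junk value `0` if there are infinitely many. -/
noncomputable def degreeInto (G : SimpleGraph α) (V : Set α) (v : α) : ℕ :=
  {u ∈ V | G.Adj v u}.ncard

/-- The vertices outside `V` having at most `b` neighbours in `V`. The bound `b` is real because
it is a multiple of a logarithm in the application. -/
def lowDegreeSet (G : SimpleGraph α) (V : Set α) (b : ℝ) : Set α :=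
  {v | v ∉ V ∧ (degreeInto G V v : ℝ) ≤ b}

theorem lowDegreeSet_antitone [Finite α] (G : SimpleGraph α) (b : ℝ) :
    Antitone fun V => lowDegreeSet G V b := by
  intro V' V hV v hv
  have degree_le : degreeInto G V' v ≤ degreeInto G V v :=
    Set.ncard_le_ncard (fun u hu => ⟨hV hu.1, hu.2⟩) (Set.toFinite _)
  exact ⟨fun hv' => hv.1 (hV hv'), (Nat.cast_le.2 degree_le).trans hv.2⟩

theorem exists_finset_subset_lowDegreeSet [Finite α] {G : SimpleGraph α} {V : Set α} {b : ℝ}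
    {m k : ℕ} (hm : m ≤ V.ncard) (hk : k ≤ (lowDegreeSet G V b).ncard) :
    ∃ V' W : Finset α, V'.card = m ∧ W.card = k ∧ ↑W ⊆ lowDegreeSet G V' b := by
  obtain ⟨V', hV', hV'm⟩ := Set.exists_subset_card_eq hm
  obtain ⟨W, hW, hWk⟩ := Set.exists_subset_card_eq hk
  refine ⟨V'.toFinite.toFinset, W.toFinite.toFinset, ?_, ?_, ?_⟩
  · rw [← Set.ncard_eq_toFinset_card, hV'm]
  · rw [← Set.ncard_eq_toFinset_card, hWk]
  · simpa using hW.trans (lowDegreeSet_antitone G b hV')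

theorem ncard_adj_prod_eq_sum_degreeInto (G : SimpleGraph α) (V W : Finset α) :
    {q : W × V | G.Adj q.1 q.2}.ncard = ∑ v ∈ W, degreeInto G V v := by
  classical
  have degree_eq (v : α) : degreeInto G V v = ∑ u ∈ V, if G.Adj v u then 1 else 0 := by
    rw [degreeInto, show {u ∈ (V : Set α) | G.Adj v u} = ↑{u ∈ V | G.Adj v u} by simp,
      Set.ncard_coe_finset, Finset.card_filter]
  calc {q : W × V | G.Adj q.1 q.2}.ncard
      = ∑ v : W, ∑ u : V, if G.Adj v u then 1 else 0 := by
        rw [← Fintype.sum_prod_type', ← Finset.card_filter, Set.ncard_eq_toFinset_card']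
        simp
    _ = ∑ v ∈ W, ∑ u ∈ V, if G.Adj v u then 1 else 0 := by
        rw [← Finset.sum_coe_sort W]
        refine Finset.sum_congr rfl fun v _ => ?_
        exact Finset.sum_coe_sort V fun u => if G.Adj v u then 1 else 0
    _ = ∑ v ∈ W, degreeInto G V v := by simp only [degree_eq]

theorem ncard_adj_prod_le {G : SimpleGraph α} {V W : Finset α} {b : ℝ}
    (hW : ↑W ⊆ lowDegreeSet G V b) :
    ({q : W × V | G.Adj q.1 q.2}.ncard : ℝ) ≤ W.card * b := by
  rw [ncard_adj_prod_eq_sum_degreeInto, Nat.cast_sum, ← nsmul_eq_mul]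
  exact Finset.sum_le_card_nsmul _ _ _ fun v hv => (hW hv).2

end LowDegree

section RandomGraph

open ProbabilityTheory

variable {n : ℕ} {p : ℝ}

instance instIsProbabilityMeasureErMeasure : IsProbabilityMeasure (erMeasure n p) := by
  unfold erMeasure
  infer_instance

theorem graphOf_adj_iff {ω : EdgeType n → Bool} {v u : Fin n} (h : v ≠ u) :
    (graphOf ω).Adj v u ↔ ω ⟨s(v, u), h⟩ = true := by
  simp [graphOf, h]

theorem le_measureReal_edge (hp : p ≤ 1) (e : EdgeType n) :
    p ≤ (erMeasure n p).real {ω | ω e = true} := by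
  have edge_law : erMeasure n p {ω | ω e = true} = (min p.toNNReal 1 : NNReal) :=
    calc erMeasure n p (Function.eval e ⁻¹' {true})
        = _ := (measurePreserving_eval _ e).measure_preimage (by measurability)
      _ = _ := PMF.toMeasure_apply_singleton _ _ (measurableSet_singleton true)
  rw [measureReal_def, edge_law, min_eq_left (toNNReal_le_one.2 hp)]
  exact le_coe_toNNReal p

theorem iIndepSet_edge : iIndepSet (fun e => {ω | ω e = true}) (erMeasure n p) :=
  iIndepSet_preimage_of_iIndepFun (iIndepFun_pi fun _ => aemeasurable_id) measurable_pi_apply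
    fun _ => measurableSet_singleton true

theorem iIndepSet_adj_of_disjoint {V W : Finset (Fin n)} (h : Disjoint W V) :
    iIndepSet (fun q : W × V => {ω | (graphOf ω).Adj q.1 q.2}) (erMeasure n p) := by
  have hne (q : W × V) : (q.1 : Fin n) ≠ q.2 := Finset.disjoint_iff_ne.1 h _ q.1.2 _ q.2.2
  let edge (q : W × V) : EdgeType n := ⟨s(q.1, q.2), hne q⟩
  have edge_injective : edge.Injective := by
    rintro ⟨v, u⟩ ⟨v', u'⟩ heq
    rcases Sym2.eq_iff.1 (congrArg Subtype.val heq) with ⟨hv, hu⟩ | ⟨hv, -⟩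
    · exact Prod.ext (Subtype.ext hv) (Subtype.ext hu)
    · exact absurd hv (hne (v, u'))
  simpa only [Function.comp_def, edge, ← graphOf_adj_iff] using
    iIndepSet_edge.precomp edge_injective

theorem measureReal_subset_lowDegreeSet_le (hp : p ≤ 1) {t : ℝ} (ht : t ≤ 0)
    (V W : Finset (Fin n)) (b : ℝ) :
    (erMeasure n p).real {ω | ↑W ⊆ lowDegreeSet (graphOf ω) V b} ≤
      exp (W.card * (-t * b - (1 - exp t) * p * V.card)) := by
  by_cases hd : Disjoint W V
  · have p_le (q : W × V) : p ≤ (erMeasure n p).real {ω | (graphOf ω).Adj q.1 q.2} := by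
      simpa only [graphOf_adj_iff (Finset.disjoint_iff_ne.1 hd _ q.1.2 _ q.2.2)] using
        le_measureReal_edge hp _
    calc (erMeasure n p).real {ω | ↑W ⊆ lowDegreeSet (graphOf ω) V b}
        ≤ (erMeasure n p).real
            {ω | ({q : W × V | (graphOf ω).Adj q.1 q.2}.ncard : ℝ) ≤ W.card * b} :=
          measureReal_mono fun ω hω => ncard_adj_prod_le hω
      _ ≤ exp (-t * (W.card * b) - (1 - exp t) * p * Fintype.card (W × V)) :=
          measureReal_ncard_le_le_exp (iIndepSet_adj_of_disjoint hd)
            (fun _ => (Set.toFinite _).measurableSet) p_le ht _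
      _ = exp (W.card * (-t * b - (1 - exp t) * p * V.card)) := by
          rw [Fintype.card_prod, Fintype.card_coe, Fintype.card_coe]
          push_cast
          ring_nf
  · obtain ⟨v, hvW, hvV⟩ := Finset.not_disjoint_iff.1 hd
    have impossible : {ω | ↑W ⊆ lowDegreeSet (graphOf (n := n) ω) V b} = ∅ :=
      Set.eq_empty_of_forall_notMem fun ω hω => (hω hvW).1 hvV
    rw [impossible, measureReal_empty]
    exact (exp_pos _).le

theorem measureReal_exists_lowDegreeSet_ncard_ge_le (hp : p ≤ 1) {t : ℝ} (ht : t ≤ 0) (m k : ℕ)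
    (b : ℝ) :
    (erMeasure n p).real
        {ω | ∃ V : Set (Fin n), m ≤ V.ncard ∧ k ≤ (lowDegreeSet (graphOf ω) V b).ncard} ≤
      n.choose m * n.choose k * exp (k * (-t * b - (1 - exp t) * p * m)) := by
  set pairs := Finset.powersetCard m (Finset.univ : Finset (Fin n)) ×ˢ
    Finset.powersetCard k (Finset.univ : Finset (Fin n))
  have cover : {ω | ∃ V : Set (Fin n), m ≤ V.ncard ∧ k ≤ (lowDegreeSet (graphOf ω) V b).ncard} ⊆
      ⋃ q ∈ pairs, {ω | ↑q.2 ⊆ lowDegreeSet (graphOf ω) ↑q.1 b} := by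
    rintro ω ⟨V, hV, hbad⟩
    obtain ⟨V', W, hV', hW, hsub⟩ := exists_finset_subset_lowDegreeSet hV hbad
    exact Set.mem_biUnion (x := (V', W)) (by simp [pairs, hV', hW]) hsub
  calc _ ≤ (erMeasure n p).real (⋃ q ∈ pairs, {ω | ↑q.2 ⊆ lowDegreeSet (graphOf ω) ↑q.1 b}) :=
        measureReal_mono cover (measure_ne_top _ _)
    _ ≤ ∑ q ∈ pairs, (erMeasure n p).real {ω | ↑q.2 ⊆ lowDegreeSet (graphOf ω) ↑q.1 b} :=
        measureReal_biUnion_finset_le _ _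
    _ ≤ ∑ _q ∈ pairs, exp (k * (-t * b - (1 - exp t) * p * m)) := by
        refine Finset.sum_le_sum fun q hq => ?_
        obtain ⟨hV, hW⟩ := Finset.mem_product.1 hq
        rw [← (Finset.mem_powersetCard.1 hV).2, ← (Finset.mem_powersetCard.1 hW).2]
        exact measureReal_subset_lowDegreeSet_le hp ht q.1 q.2 b
    _ = n.choose m * n.choose k * exp (k * (-t * b - (1 - exp t) * p * m)) := by
        simp [pairs]

end RandomGraph

section Estimates

theorem choose_le_exp_mul_log {n : ℕ} (hn : 0 < n) (m : ℕ) :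
    (n.choose m : ℝ) ≤ exp (m * log n) :=
  calc (n.choose m : ℝ) ≤ (n : ℝ) ^ m := mod_cast Nat.choose_le_pow n m
    _ = exp (m * log n) := by rw [exp_nat_mul, exp_log (Nat.cast_pos.2 hn)]

-- The Chernoff parameter `-log 4` is a convenient `t ≤ 0` with `t / 2 + 3 * (1 - exp t) > 1`, which
-- is what it takes to beat the `n ^ k` choices of `W`.
theorem choose_mul_choose_mul_exp_le {n m : ℕ} {p : ℝ} (hn : 0 < n) (hm : 3 * log n ≤ p * m)
    (k : ℕ) :
    n.choose m * n.choose k *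
        exp (k * (-(-log 4) * (1 / 2 * log n) - (1 - exp (-log 4)) * p * m)) ≤
      exp (log n * (m - k / 2)) := by
  have exp_neg_log_four : exp (-log 4) = 1 / 4 := by rw [exp_neg, exp_log (by norm_num)]; norm_num
  have log_four_lt : log 4 < 3 / 2 := by
    rw [show (4 : ℝ) = 2 ^ 2 by norm_num, log_pow]
    norm_num
    linarith [log_two_lt_d9]
  have exponent_le : -(-log 4) * (1 / 2 * log n) - (1 - exp (-log 4)) * p * m ≤
      -(3 / 2) * log n := by
    rw [exp_neg_log_four]
    nlinarith [log_natCast_nonneg n]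
  calc _ ≤ exp (m * log n) * exp (k * log n) * exp (k * (-(3 / 2) * log n)) := by
        gcongr
        · exact choose_le_exp_mul_log hn m
        · exact choose_le_exp_mul_log hn k
    _ = exp (log n * (m - k / 2)) := by
        rw [← exp_add, ← exp_add]
        ring_nf

theorem eventually_mul_ceil_sub_ceil_pow_three_le {c : ℝ} (hc : 0 ≤ c) :
    ∀ᶠ L : ℝ in atTop, L * ((⌈c * L⌉₊ : ℝ) - (⌈L ^ 3⌉₊ : ℝ) / 2) ≤ -L := by
  filter_upwards [eventually_ge_atTop (c + 4)] with L hL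
  have ceil_lt : (⌈c * L⌉₊ : ℝ) < c * L + 1 := Nat.ceil_lt_add_one (by nlinarith)
  have le_ceil : L ^ 3 ≤ (⌈L ^ 3⌉₊ : ℝ) := Nat.le_ceil _
  have linear_le : c * L ≤ (L - 4) * L := by nlinarith
  have square_le : 4 * L ^ 2 ≤ L ^ 3 := by nlinarith [sq_nonneg L]
  have difference_le : (⌈c * L⌉₊ : ℝ) - (⌈L ^ 3⌉₊ : ℝ) / 2 ≤ -1 := by nlinarith
  calc _ ≤ L * -1 := mul_le_mul_of_nonneg_left difference_le (by linarith)
    _ = -L := by ring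

theorem tendsto_choose_mul_choose_mul_exp {p : ℝ} (hp : 0 < p) :
    Tendsto (fun n : ℕ =>
      n.choose ⌈3 / p * log n⌉₊ * n.choose ⌈log n ^ 3⌉₊ *
        exp (⌈log n ^ 3⌉₊ *
          (-(-log 4) * (1 / 2 * log n) - (1 - exp (-log 4)) * p * ⌈3 / p * log n⌉₊)))
      atTop (nhds 0) := by
  have log_tendsto : Tendsto (fun n : ℕ => log (n : ℝ)) atTop atTop :=
    tendsto_log_atTop.comp tendsto_natCast_atTop_atTop
  have exponent_le :=
    log_tendsto.eventually (eventually_mul_ceil_sub_ceil_pow_three_le (c := 3 / p) (by positivity))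
  refine squeeze_zero' (.of_forall fun n => by positivity) ?_
    (tendsto_exp_neg_atTop_nhds_zero.comp log_tendsto)
  filter_upwards [exponent_le, eventually_gt_atTop 0] with n hexponent hn
  have hm : 3 * log n ≤ p * ⌈3 / p * log n⌉₊ := by
    rw [← div_le_iff₀' hp, ← div_mul_eq_mul_div]
    exact Nat.le_ceil _
  exact (choose_mul_choose_mul_exp_le hn hm _).trans (exp_le_exp.2 hexponent)

end Estimates

/-- For fixed `p ∈ (0,1)`, whp: for every `V ⊆ [n]` with
`|V| ≥ (3/p)·ln n`, fewer than `ln³ n` vertices outside `V` have at most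
`(1/2)·ln n` neighbors in `V`. -/
theorem few_low_degree_into_set (p : ℝ) (hp0 : 0 < p) (hp1 : p < 1) :
    Tendsto (fun n : ℕ =>
      erMeasure n p {ω |
        ∀ V : Set (Fin n), (3 / p) * Real.log n ≤ (V.ncard : ℝ) →
          ({v : Fin n | v ∉ V ∧
              (({u ∈ V | (graphOf ω).Adj v u}).ncard : ℝ)
                ≤ (1 / 2) * Real.log n}.ncard : ℝ)
            < (Real.log n) ^ 3})
      atTop (nhds 1) := by
  have log_four_nonneg : 0 ≤ log 4 := log_nonneg (by norm_num)
  refine tendsto_measure_one_of_tendsto_measureReal_compl <|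
    squeeze_zero (fun n => measureReal_nonneg) (fun n => ?_) (tendsto_choose_mul_choose_mul_exp hp0)
  refine le_trans (measureReal_mono fun ω hω => ?_)
    (measureReal_exists_lowDegreeSet_ncard_ge_le hp1.le (neg_nonpos.2 log_four_nonneg) _ _ _)
  simp only [Set.mem_compl_iff, Set.mem_ofPred_eq, not_forall, not_lt] at hω
  obtain ⟨V, hV, hbad⟩ := hω
  exact ⟨V, Nat.ceil_le.2 hV, Nat.ceil_le.2 hbad⟩
end
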